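/- arXiv:1610.04535 — 4 statements merged into one kernel-verified Lean document; each statement's English description precedes it below -/
import Mathlib

section
/- If neither p nor q is a root of unity, then the localization (A_p(λ, μ, K_q[s,t]))_S of A_p(λ, μ, K_q[s,t]) at the Ore set S = {z^i s^j t^k : i, j, k ∈ Z_{≥0}} is a simple ring. -/
/-!
Let `B` be the localization. The relations give `xz = p·zx`, `zy = p·yz`, `z` commutes with `s` and
`t`, and `yx`, `xy` are polynomials in `z`. Hence the image of the algebra in `B` is the sum of the
subspaces `k[z] s^a t^b X_n`, where `X_n` is `x^n` for `n ≥ 0` and `y^(-n)` for `n < 0`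
(`WeylSystem.mem_iSup_comp_of_mem_adjoin`). Conjugation by the units `z`, `s`, `t` acts on these
subspaces by scalars, and since `p` and `q` are not roots of unity, distinct `(n, a, b)` have
distinct weights.

A nonzero two-sided ideal `I` contains a nonzero numerator, so it contains a nonzero weight
component of it, and therefore some `f(z) X_n` with `f ≠ 0`
(`WeylSystem.exists_aeval_mul_X_mem`). If `n < 0`, multiplying by a power of `x` reduces to `n = 0`.
Among all nonzero `f` with `f(z) x^n ∈ I` for some `n ≥ 0`, one of minimal degree is constant: after
cancelling powers of the unit `z` one has `f(0) ≠ 0`, and with `d = deg f > 0` the element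
`x f(z) x^n - p^d f(z) x^(n+1) = (f(pz) - p^d f(z)) x^(n+1)` would have smaller degree
(`WeylSystem.exists_x_pow_mem`). So `x^n ∈ I`, and
`(p - 1)(x^(n+1) y - p^(n+1) y x^(n+1)) = (p^(n+1) - 1) x^n` brings the exponent down to `0`.
No linear independence of monomials is used in this part.

That `B ≠ 0` amounts to `0 ∉ S`, which follows from a representation by weighted shifts on functions
`ℤ × ℤ → k` in which `z`, `s`, `t` act injectively (`rep`).
-/


noncomputable section

open FreeAlgebra

/-- Relations of the extended quantized Weyl algebra `A_p(lam, mu, K_q[s,t])`: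
`xy - p·yx = 1`, `st = q·ts`, `sx = lam·xs`, `sy = lam⁻¹·ys`, `tx = mu·xt`, `ty = mu⁻¹·yt`,
where the generators `x, y, s, t` are `ι K 0, ι K 1, ι K 2, ι K 3`. -/
inductive ExtWeylRel (K : Type*) [Field K] (p q lam mu : K) :
    FreeAlgebra K (Fin 4) → FreeAlgebra K (Fin 4) → Prop
  | weyl : ExtWeylRel K p q lam mu (ι K (0 : Fin 4) * ι K 1 - p • (ι K 1 * ι K 0)) 1
  | st : ExtWeylRel K p q lam mu (ι K (2 : Fin 4) * ι K 3) (q • (ι K 3 * ι K 2))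
  | sx : ExtWeylRel K p q lam mu (ι K (2 : Fin 4) * ι K 0) (lam • (ι K 0 * ι K 2))
  | sy : ExtWeylRel K p q lam mu (ι K (2 : Fin 4) * ι K 1) (lam⁻¹ • (ι K 1 * ι K 2))
  | tx : ExtWeylRel K p q lam mu (ι K (3 : Fin 4) * ι K 0) (mu • (ι K 0 * ι K 3))
  | ty : ExtWeylRel K p q lam mu (ι K (3 : Fin 4) * ι K 1) (mu⁻¹ • (ι K 1 * ι K 3))

/-- The extended quantized Weyl algebra `A_p(lam, mu, K_q[s,t])`. -/
abbrev ExtWeyl (K : Type*) [Field K] (p q lam mu : K) : Type _ :=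
  RingQuot (ExtWeylRel K p q lam mu)

variable (K : Type*) [Field K] (p q lam mu : K)

/-- The generator `x`. -/
def wx : ExtWeyl K p q lam mu := RingQuot.mkAlgHom K _ (ι K 0)
/-- The generator `y`. -/
def wy : ExtWeyl K p q lam mu := RingQuot.mkAlgHom K _ (ι K 1)
/-- The generator `s`. -/
def ws : ExtWeyl K p q lam mu := RingQuot.mkAlgHom K _ (ι K 2)
/-- The generator `t`. -/
def wt : ExtWeyl K p q lam mu := RingQuot.mkAlgHom K _ (ι K 3)
/-- The element `z = xy - yx`. -/
def wz : ExtWeyl K p q lam mu :=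
  wx K p q lam mu * wy K p q lam mu - wy K p q lam mu * wx K p q lam mu

/-- The multiplicative set `S` generated by `z, s, t` (it consists of the elements
`z^i s^j t^k` up to nonzero scalars). -/
def oreSetS : Submonoid (ExtWeyl K p q lam mu) :=
  Submonoid.closure {wz K p q lam mu, ws K p q lam mu, wt K p q lam mu}


/-! ### Scalar commutation and weight components of ideals -/

section General

variable {k B : Type*} [Field k] [Ring B] [Algebra k B]

/-- `a` and `b` commute up to the scalar `c`, that is `ab = c·ba`. -/
def QCommute (c : k) (a b : B) : Prop := a * b = c • (b * a)

theorem QCommute.mul_right {c d : k} {a b b' : B} (h : QCommute c a b) (h' : QCommute d a b') :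
    QCommute (c * d) a (b * b') := by
  unfold QCommute at *
  rw [← mul_assoc, h, smul_mul_assoc, mul_assoc, h', mul_smul_comm, smul_smul, mul_assoc]

theorem QCommute.one_right (a : B) : QCommute (1 : k) a 1 := by simp [QCommute]

theorem QCommute.refl (a : B) : QCommute (1 : k) a a := by simp [QCommute]

theorem QCommute.pow_right {c : k} {a b : B} (h : QCommute c a b) (n : ℕ) :
    QCommute (c ^ n) a (b ^ n) := by
  induction n with
  | zero => simpa using QCommute.one_right a
  | succ n ih => rw [pow_succ, pow_succ]; exact ih.mul_right h

theorem QCommute.symm {c : k} {a b : B} (hc : c ≠ 0) (h : QCommute c a b) :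
    QCommute c⁻¹ b a := by
  unfold QCommute at *
  rw [h, smul_smul, inv_mul_cancel₀ hc, one_smul]

/-- If `ab = c·ba`, then `a f(b) = f(cb) a` for every polynomial `f`. -/
theorem QCommute.aeval {c : k} {a b : B} (h : QCommute c a b) (f : Polynomial k) :
    a * Polynomial.aeval b f =
      Polynomial.aeval b (f.comp (Polynomial.C c * Polynomial.X)) * a := by
  induction f using Polynomial.induction_on' with
  | add f g hf hg => simp only [map_add, Polynomial.add_comp, mul_add, add_mul, hf, hg]
  | monomial n r =>
    have := h.pow_right n
    unfold QCommute at this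
    rw [← Polynomial.C_mul_X_pow_eq_monomial]
    rw [Polynomial.mul_comp, Polynomial.C_comp, Polynomial.X_pow_comp, mul_pow, ← Polynomial.C_pow]
    simp only [map_mul, Polynomial.aeval_C, Polynomial.aeval_X_pow, ← Algebra.smul_def,
      mul_smul_comm, smul_mul_assoc, this]
    rw [smul_comm]

theorem TwoSidedIdeal.smul_mem_of_mem (I : TwoSidedIdeal B) (c : k) {b : B} (hb : b ∈ I) :
    c • b ∈ I := by
  rw [Algebra.smul_def]; exact I.mul_mem_left _ _ hb

theorem TwoSidedIdeal.mem_of_smul_mem (I : TwoSidedIdeal B) {c : k} (hc : c ≠ 0) {b : B}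
    (hb : c • b ∈ I) : b ∈ I := by
  simpa [smul_smul, inv_mul_cancel₀ hc] using I.smul_mem_of_mem c⁻¹ hb

/-- Conjugation by units preserves a two-sided ideal, so an ideal containing a sum of joint
eigenvectors with pairwise distinct weights contains each of them. For a fixed index `j`, applying
`T - (weight of a)` for a suitable conjugation `T` removes the summand at `a` and rescales the one
at `j` by a nonzero scalar. -/
theorem TwoSidedIdeal.mem_of_sum_weight_mem (I : TwoSidedIdeal B) {ι J : Type*}
    (u ui : ι → B) (hu : ∀ i, u i * ui i = 1) (χ : ι → J → k)
    (hχ : ∀ j j' : J, j ≠ j' → ∃ i, χ i j ≠ χ i j') (F : Finset J) (j : J) (hj : j ∉ F) :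
    ∀ v : J → B, (∀ i j, QCommute (χ i j) (u i) (v j)) → v j + ∑ a ∈ F, v a ∈ I → v j ∈ I := by
  classical
  induction F using Finset.induction_on with
  | empty => intro v _ h; simpa using h
  | insert a F ha ih =>
    intro v hv h
    obtain ⟨i, hi⟩ := hχ j a (by rintro rfl; simp at hj)
    have conj : ∀ b, u i * v b * ui i = χ i b • v b := fun b => by
      have := hv i b
      unfold QCommute at this
      rw [this, smul_mul_assoc, mul_assoc, hu, mul_one]
    have key := ih (fun h => hj (Finset.mem_insert_of_mem h))
      (fun b => (χ i b - χ i a) • v b)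
      (fun i' b => by
        have := hv i' b
        unfold QCommute at *
        rw [mul_smul_comm, this, smul_mul_assoc, smul_comm])
      (by
        have h1 := I.sub_mem (I.mul_mem_right _ (ui i) (I.mul_mem_left (u i) _ h))
          (I.smul_mem_of_mem (χ i a) h)
        rw [Finset.sum_insert ha] at h1
        convert h1 using 1
        simp only [mul_add, add_mul, Finset.mul_sum, Finset.sum_mul, conj, smul_add,
          Finset.smul_sum, sub_smul, Finset.sum_sub_distrib]
        abel)
    exact I.mem_of_smul_mem (sub_ne_zero.mpr hi) key

/-! ### Algebras with generators satisfying the relations -/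

/-- Elements of a `k`-algebra satisfying the defining relations of `A_p(l, m, K_q[s,t])`, together
with two-sided inverses `zi, si, ti` of `z = xy - yx`, `s`, `t`. -/
structure WeylSystem (p q l m : k) (B : Type*) [Ring B] [Algebra k B] where
  (x y z s t zi si ti : B)
  hz : z = x * y - y * x
  weyl : x * y - p • (y * x) = 1
  st : s * t = q • (t * s)
  sx : s * x = l • (x * s)
  sy : s * y = l⁻¹ • (y * s)
  tx : t * x = m • (x * t)
  ty : t * y = m⁻¹ • (y * t)
  zzi : z * zi = 1
  ziz : zi * z = 1
  ssi : s * si = 1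
  sis : si * s = 1
  tti : t * ti = 1
  tit : ti * t = 1

namespace WeylSystem

variable {p q l m : k} (W : WeylSystem p q l m B)

theorem z_eq : W.z = 1 + (p - 1) • (W.y * W.x) := by
  rw [W.hz, ← W.weyl]; module

theorem xy_eq : W.x * W.y = 1 + p • (W.y * W.x) := by
  rw [← W.weyl]; module

theorem xz : QCommute p W.x W.z := by
  unfold QCommute
  rw [z_eq, mul_add, add_mul, mul_smul_comm, smul_mul_assoc, ← mul_assoc, xy_eq, add_mul,
    smul_mul_assoc]
  simp only [mul_one, one_mul]
  module

theorem zy : QCommute p W.z W.y := by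
  unfold QCommute
  rw [z_eq, mul_add, add_mul, mul_smul_comm, smul_mul_assoc, mul_assoc, xy_eq, mul_add,
    mul_smul_comm]
  simp only [mul_one, one_mul]
  module

theorem yx_poly (hp1 : p ≠ 1) : W.y * W.x =
    Polynomial.aeval W.z (Polynomial.C (p - 1)⁻¹ * (Polynomial.X - 1)) := by
  have : p - 1 ≠ 0 := sub_ne_zero.mpr hp1
  simp only [map_mul, map_sub, Polynomial.aeval_C, Polynomial.aeval_X, map_one,
    ← Algebra.smul_def]
  rw [z_eq, add_sub_cancel_left, smul_smul, inv_mul_cancel₀ this, one_smul]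

theorem xy_poly (hp1 : p ≠ 1) : W.x * W.y =
    Polynomial.aeval W.z (Polynomial.C (p - 1)⁻¹ * (Polynomial.C p * Polynomial.X - 1)) := by
  have : p - 1 ≠ 0 := sub_ne_zero.mpr hp1
  simp only [map_mul, map_sub, Polynomial.aeval_C, Polynomial.aeval_X, map_one,
    ← Algebra.smul_def]
  rw [z_eq, xy_eq]
  match_scalars <;> field_simp

theorem s_comm_z (hl : l ≠ 0) : QCommute (1 : k) W.s W.z := by
  have h1 := QCommute.mul_right (c := l) (d := l⁻¹) W.sx W.sy
  have h2 := QCommute.mul_right (c := l⁻¹) (d := l) W.sy W.sx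
  rw [mul_inv_cancel₀ hl] at h1
  rw [inv_mul_cancel₀ hl] at h2
  unfold QCommute at *
  rw [W.hz, mul_sub, h1, h2, sub_mul, smul_sub]

theorem t_comm_z (hm : m ≠ 0) : QCommute (1 : k) W.t W.z := by
  have h1 := QCommute.mul_right (c := m) (d := m⁻¹) W.tx W.ty
  have h2 := QCommute.mul_right (c := m⁻¹) (d := m) W.ty W.tx
  rw [mul_inv_cancel₀ hm] at h1
  rw [inv_mul_cancel₀ hm] at h2
  unfold QCommute at *
  rw [W.hz, mul_sub, h1, h2, sub_mul, smul_sub]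

/-- `x ^ n` for `n ≥ 0` and `y ^ (-n)` for `n < 0`. -/
def X (n : ℤ) : B := if 0 ≤ n then W.x ^ n.toNat else W.y ^ (-n).toNat

theorem X_nat (n : ℕ) : W.X n = W.x ^ n := by simp [X]

theorem X_neg_nat (n : ℕ) : W.X (-n) = W.y ^ n := by
  rcases n with _ | n
  · simp [X]
  · rw [X, if_neg (by omega)]; simp

theorem int_cases (n : ℤ) : (∃ a : ℕ, n = a) ∨ ∃ a : ℕ, n = -((a + 1 : ℕ) : ℤ) := by
  rcases n with a | a
  · exact Or.inl ⟨a, rfl⟩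
  · exact Or.inr ⟨a, rfl⟩

theorem QCommute_X {c : k} {a : B} (hx : QCommute c a W.x)
    (hy : QCommute c⁻¹ a W.y) (n : ℤ) : QCommute (c ^ n) a (W.X n) := by
  rcases int_cases n with ⟨b, rfl⟩ | ⟨b, rfl⟩
  · rw [X_nat, zpow_natCast]; exact hx.pow_right b
  · rw [X_neg_nat, zpow_neg, zpow_natCast, ← inv_pow]; exact hy.pow_right _

theorem x_mul_X (hp1 : p ≠ 1) (n : ℤ) :
    ∃ g : Polynomial k, W.x * W.X n = Polynomial.aeval W.z g * W.X (n + 1) := by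
  rcases int_cases n with ⟨b, rfl⟩ | ⟨b, rfl⟩
  · refine ⟨1, ?_⟩
    rw [map_one, one_mul, X_nat, ← pow_succ', ← X_nat]; push_cast; rfl
  · refine ⟨Polynomial.C (p - 1)⁻¹ * (Polynomial.C p * Polynomial.X - 1), ?_⟩
    rw [show -((b + 1 : ℕ) : ℤ) + 1 = -(b : ℤ) by push_cast; ring, X_neg_nat, X_neg_nat,
      pow_succ', ← mul_assoc, W.xy_poly hp1]

theorem y_mul_X (hp1 : p ≠ 1) (n : ℤ) :
    ∃ g : Polynomial k, W.y * W.X n = Polynomial.aeval W.z g * W.X (n - 1) := by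
  rcases int_cases (-n) with ⟨b, hb⟩ | ⟨b, hb⟩
  · obtain rfl : n = -(b : ℤ) := by omega
    refine ⟨1, ?_⟩
    rw [show -(b : ℤ) - 1 = -((b + 1 : ℕ) : ℤ) by push_cast; ring, map_one, one_mul, X_neg_nat,
      X_neg_nat, pow_succ']
  · obtain rfl : n = ((b + 1 : ℕ) : ℤ) := by omega
    refine ⟨Polynomial.C (p - 1)⁻¹ * (Polynomial.X - 1), ?_⟩
    rw [show ((b + 1 : ℕ) : ℤ) - 1 = (b : ℤ) by push_cast; ring, X_nat, X_nat,
      pow_succ', ← mul_assoc, W.yx_poly hp1]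

/-- The submodule `k[z] s^a t^b X_n`, indexed by `(n, a, b)`. -/
def comp (j : ℤ × ℕ × ℕ) : Submodule k B :=
  LinearMap.range ((LinearMap.mulRight k (W.s ^ j.2.1 * W.t ^ j.2.2 * W.X j.1)).comp
    (Polynomial.aeval W.z).toLinearMap)

theorem mem_comp (j : ℤ × ℕ × ℕ) (b : B) : b ∈ W.comp j ↔ ∃ f : Polynomial k,
    b = Polynomial.aeval W.z f * (W.s ^ j.2.1 * W.t ^ j.2.2 * W.X j.1) := by
  simp [comp, eq_comm, mul_assoc]

theorem st_comm_aeval (hl : l ≠ 0) (hm : m ≠ 0) (a b : ℕ) (g : Polynomial k) :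
    W.s ^ a * W.t ^ b * Polynomial.aeval W.z g = Polynomial.aeval W.z g * (W.s ^ a * W.t ^ b) := by
  have hs : Commute W.s W.z := by
    simpa [QCommute, commute_iff_eq] using W.s_comm_z hl
  have ht : Commute W.t W.z := by
    simpa [QCommute, commute_iff_eq] using W.t_comm_z hm
  have h : Commute (W.s ^ a * W.t ^ b) W.z := (hs.pow_left a).mul_left (ht.pow_left b)
  have hc : QCommute (1 : k) (W.s ^ a * W.t ^ b) W.z := by simpa [QCommute] using h.eq
  simpa using hc.aeval g

/-- If `u` commutes up to scalars with `z`, `s`, `t`, and each `u X_n` lies in some `k[z] X_r`, then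
left multiplication by `u` maps every component into the sum of the components. -/
theorem mul_mem_of_shift (hl : l ≠ 0) (hm : m ≠ 0) {u : B} {c d e : k} (hz : QCommute c u W.z)
    (hs : QCommute d u W.s) (ht : QCommute e u W.t)
    (hX : ∀ n, ∃ n', ∃ g : Polynomial k, u * W.X n = Polynomial.aeval W.z g * W.X n')
    (j : ℤ × ℕ × ℕ) {b : B} (hb : b ∈ W.comp j) : u * b ∈ ⨆ j, W.comp j := by
  obtain ⟨f, rfl⟩ := (W.mem_comp j b).1 hb
  obtain ⟨n', g, hg⟩ := hX j.1
  refine Submodule.mem_iSup_of_mem (n', j.2.1, j.2.2) ((W.mem_comp _ _).2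
    ⟨Polynomial.C (d ^ j.2.1 * e ^ j.2.2) * (f.comp (Polynomial.C c * Polynomial.X) * g), ?_⟩)
  have h := (hs.pow_right j.2.1).mul_right (ht.pow_right j.2.2)
  unfold QCommute at h
  rw [← mul_assoc, hz.aeval, mul_assoc, ← mul_assoc u, h, smul_mul_assoc, mul_assoc _ u, hg,
    ← mul_assoc _ _ (W.X n'), W.st_comm_aeval hl hm]
  rw [map_mul, Polynomial.aeval_C, ← Algebra.smul_def]
  simp only [map_mul, mul_smul_comm, smul_mul_assoc, mul_assoc]

/-- The components `k[z] s^a t^b X_n` span the subalgebra generated by `x, y, s, t`: their sum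
contains `1` and is stable under left multiplication by the generators. -/
theorem mem_iSup_comp_of_mem_adjoin (hp : p ≠ 0) (hq : q ≠ 0) (hl : l ≠ 0) (hm : m ≠ 0) (hp1 : p ≠ 1) {w : B}
    (hw : w ∈ Algebra.adjoin k ({W.x, W.y, W.s, W.t} : Set B)) : w ∈ ⨆ j, W.comp j := by
  have one_mem : (1 : B) ∈ ⨆ j, W.comp j :=
    Submodule.mem_iSup_of_mem (0, 0, 0) ((W.mem_comp _ _).2 ⟨1, by simp [X]⟩)
  have step : ∀ u ∈ ({W.x, W.y, W.s, W.t} : Set B), ∀ j, ∀ b ∈ W.comp j,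
      u * b ∈ ⨆ j, W.comp j := by
    intro u hu j b hb
    have hsx : QCommute l W.s W.x := W.sx
    have hsy : QCommute l⁻¹ W.s W.y := W.sy
    have htx : QCommute m W.t W.x := W.tx
    have hty : QCommute m⁻¹ W.t W.y := W.ty
    have hst : QCommute q W.s W.t := W.st
    rcases hu with rfl | rfl | rfl | rfl
    · exact W.mul_mem_of_shift hl hm W.xz (hsx.symm hl) (htx.symm hm)
        (fun n => ⟨_, W.x_mul_X hp1 n⟩) j hb
    · exact W.mul_mem_of_shift hl hm (W.zy.symm hp) (hsy.symm (inv_ne_zero hl))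
        (hty.symm (inv_ne_zero hm)) (fun n => ⟨_, W.y_mul_X hp1 n⟩) j hb
    · obtain ⟨f, rfl⟩ := (W.mem_comp j b).1 hb
      refine Submodule.mem_iSup_of_mem (j.1, j.2.1 + 1, j.2.2) ((W.mem_comp _ _).2 ⟨f, ?_⟩)
      have := (W.s_comm_z hl).aeval f
      simp only [map_one, one_mul, Polynomial.comp_X] at this
      rw [← mul_assoc, this, pow_succ']
      simp only [mul_assoc]
    · obtain ⟨f, rfl⟩ := (W.mem_comp j b).1 hb
      refine Submodule.mem_iSup_of_mem (j.1, j.2.1, j.2.2 + 1) ((W.mem_comp _ _).2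
        ⟨Polynomial.C (q⁻¹ ^ j.2.1) * f, ?_⟩)
      have h1 := (W.t_comm_z hm).aeval f
      have h2 := (hst.symm hq).pow_right j.2.1
      unfold QCommute at h2
      simp only [map_one, one_mul, Polynomial.comp_X] at h1
      rw [← mul_assoc, h1, mul_assoc, ← mul_assoc W.t, ← mul_assoc W.t, h2, pow_succ']
      simp only [map_mul, Polynomial.aeval_C, ← Algebra.smul_def, mul_smul_comm, smul_mul_assoc,
        mul_assoc]
  have step' : ∀ u ∈ Algebra.adjoin k ({W.x, W.y, W.s, W.t} : Set B), ∀ b ∈ ⨆ j, W.comp j,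
      u * b ∈ ⨆ j, W.comp j := by
    intro u hu
    induction hu using Algebra.adjoin_induction with
    | mem u hu =>
      intro b hb
      induction hb using Submodule.iSup_induction' with
      | mem j b hb => exact step u hu j b hb
      | zero => simp
      | add a b _ _ ha hb => rw [mul_add]; exact add_mem ha hb
    | algebraMap r => intro b hb; rw [← Algebra.smul_def]; exact Submodule.smul_mem _ _ hb
    | add u v _ _ hu hv => intro b hb; rw [add_mul]; exact add_mem (hu b hb) (hv b hb)
    | mul u v _ _ hu hv => intro b hb; rw [mul_assoc]; exact hu _ (hv b hb)
  simpa using step' w hw 1 one_mem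

theorem zpow_inj {c : k} (hc : c ≠ 0) (h : ∀ n : ℕ, 0 < n → c ^ n ≠ 1) {a b : ℤ}
    (hab : c ^ a = c ^ b) : a = b := by
  wlog hle : a ≤ b generalizing a b
  · exact (this hab.symm (by omega)).symm
  by_contra hne
  apply h (b - a).toNat (by omega)
  rw [← zpow_natCast, Int.toNat_of_nonneg (by omega), zpow_sub₀ hc, hab,
    div_self (zpow_ne_zero _ hc)]

/-! ### Ideals of such algebras -/

/-- The weights of `k[z] s^a t^b X_n` under conjugation by `z`, `s`, `t`. -/
def weight (p q l m : k) (i : Fin 3) (j : ℤ × ℕ × ℕ) : k :=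
  ![p⁻¹ ^ j.1, q ^ j.2.2 * l ^ j.1, q⁻¹ ^ j.2.1 * m ^ j.1] i

theorem weight_sep (hp : p ≠ 0) (hq : q ≠ 0) (hl : l ≠ 0) (hm : m ≠ 0)
    (hpru : ∀ n : ℕ, 0 < n → p ^ n ≠ 1) (hqru : ∀ n : ℕ, 0 < n → q ^ n ≠ 1)
    (j j' : ℤ × ℕ × ℕ) (hj : j ≠ j') : ∃ i, weight p q l m i j ≠ weight p q l m i j' := by
  by_contra! h
  have h0 := h 0
  have h1 := h 1
  have h2 := h 2
  simp only [weight, Matrix.cons_val_zero, Matrix.cons_val_one, Matrix.cons_val] at h0 h1 h2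
  simp only [inv_zpow, inv_inj] at h0
  have e0 := zpow_inj hp hpru h0
  rw [e0] at h1 h2
  have h1' := mul_right_cancel₀ (zpow_ne_zero _ hl) h1
  have h2' := mul_right_cancel₀ (zpow_ne_zero _ hm) h2
  simp only [inv_pow, inv_inj] at h2'
  rw [← zpow_natCast, ← zpow_natCast] at h1' h2'
  have e1 := zpow_inj hq hqru h1'
  have e2 := zpow_inj hq hqru h2'
  apply hj
  ext
  · exact e0
  · exact_mod_cast e2
  · exact_mod_cast e1

theorem weight_spec (hp : p ≠ 0) (hq : q ≠ 0) (hl : l ≠ 0) (hm : m ≠ 0) (i : Fin 3)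
    (j : ℤ × ℕ × ℕ) {b : B} (hb : b ∈ W.comp j) :
    QCommute (weight p q l m i j) (![W.z, W.s, W.t] i) b := by
  obtain ⟨f, rfl⟩ := (W.mem_comp j b).1 hb
  have poly : ∀ u : B, QCommute (1 : k) u W.z →
      QCommute (1 : k) u (Polynomial.aeval W.z f) := fun u hu => by
    have := hu.aeval f
    simp only [map_one, one_mul, Polynomial.comp_X] at this
    simpa [QCommute] using this
  have hst : QCommute q W.s W.t := W.st
  fin_cases i
  · have h1 := (W.s_comm_z hl).symm one_ne_zero
    have h2 := (W.t_comm_z hm).symm one_ne_zero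
    have h3 := W.QCommute_X (W.xz.symm hp) (by rw [inv_inv]; exact W.zy) j.1
    simpa [weight] using (poly _ (QCommute.refl _)).mul_right
      (((h1.pow_right j.2.1).mul_right (h2.pow_right j.2.2)).mul_right h3)
  · have h3 := W.QCommute_X W.sx W.sy j.1
    simpa [weight] using (poly _ (W.s_comm_z hl)).mul_right
      ((((QCommute.refl W.s).pow_right j.2.1).mul_right (hst.pow_right j.2.2)).mul_right h3)
  · have h3 := W.QCommute_X W.tx W.ty j.1
    simpa [weight] using (poly _ (W.t_comm_z hm)).mul_right
      ((((hst.symm hq).pow_right j.2.1).mul_right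
        ((QCommute.refl W.t).pow_right j.2.2)).mul_right h3)

/-- A nonzero element of an ideal that is a polynomial in the generators produces `f(z) X_n` in the
ideal with `f ≠ 0`: take a nonzero weight component and strip off the units `s^a t^b`. -/
theorem exists_aeval_mul_X_mem (hp : p ≠ 0) (hq : q ≠ 0) (hl : l ≠ 0) (hm : m ≠ 0)
    (hpru : ∀ n : ℕ, 0 < n → p ^ n ≠ 1) (hqru : ∀ n : ℕ, 0 < n → q ^ n ≠ 1)
    (I : TwoSidedIdeal B) {w : B} (hw : w ∈ ⨆ j, W.comp j) (hI : w ∈ I) (h0 : w ≠ 0) :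
    ∃ f : Polynomial k, f ≠ 0 ∧ ∃ n, Polynomial.aeval W.z f * W.X n ∈ I := by
  classical
  obtain ⟨v, hv, rfl⟩ := (Submodule.mem_iSup_iff_exists_finsupp _ _).1 hw
  obtain ⟨j, hj, hj0⟩ := Finset.exists_ne_zero_of_sum_ne_zero h0
  have hjI : v j ∈ I := by
    refine I.mem_of_sum_weight_mem ![W.z, W.s, W.t] ![W.zi, W.si, W.ti] ?_ (weight p q l m)
      (weight_sep hp hq hl hm hpru hqru) (v.support.erase j) j (Finset.notMem_erase _ _) v
      (fun i b => W.weight_spec hp hq hl hm i b (hv b)) ?_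
    · intro i
      fin_cases i
      · exact W.zzi
      · exact W.ssi
      · exact W.tti
    · rw [Finset.add_sum_erase _ _ hj]; exact hI
  obtain ⟨f, hf⟩ := (W.mem_comp j _).1 (hv j)
  refine ⟨f, ?_, j.1, ?_⟩
  · rintro rfl
    simp at hf
    exact hj0 hf
  · rw [hf, ← mul_assoc, ← W.st_comm_aeval hl hm, mul_assoc] at hjI
    have := I.mul_mem_left (W.ti ^ j.2.2 * W.si ^ j.2.1) _ hjI
    have hs : W.si ^ j.2.1 * W.s ^ j.2.1 = 1 := by
      have : Commute W.si W.s := by rw [commute_iff_eq, W.sis, W.ssi]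
      rw [← this.mul_pow, W.sis, one_pow]
    have ht : W.ti ^ j.2.2 * W.t ^ j.2.2 = 1 := by
      have : Commute W.ti W.t := by rw [commute_iff_eq, W.tit, W.tti]
      rw [← this.mul_pow, W.tit, one_pow]
    rwa [← mul_assoc, mul_assoc (W.ti ^ j.2.2), ← mul_assoc (W.si ^ j.2.1), hs, one_mul, ht,
      one_mul] at this

/-- Right multiplication by `x ^ n` turns `f(z) y^n` into a nonzero polynomial in `z`. -/
theorem exists_aeval_mem_of_y (hp : p ≠ 0) (hp1 : p ≠ 1) (I : TwoSidedIdeal B) (n : ℕ) :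
    ∀ f : Polynomial k, f ≠ 0 → Polynomial.aeval W.z f * W.y ^ n ∈ I →
      ∃ g : Polynomial k, g ≠ 0 ∧ Polynomial.aeval W.z g ∈ I := by
  induction n with
  | zero => intro f hf h; exact ⟨f, hf, by simpa using h⟩
  | succ n ih =>
    intro f hf h
    have hy' := (W.zy.pow_right n).symm (pow_ne_zero _ hp)
    have h1 := I.mul_mem_right _ W.x h
    rw [pow_succ, mul_assoc, mul_assoc, W.yx_poly hp1, hy'.aeval, ← mul_assoc, ← map_mul] at h1
    refine ih _ (mul_ne_zero hf ?_) h1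
    intro h0
    have := congrArg (Polynomial.eval 0) h0
    simp [sub_eq_zero, hp1] at this

/-- The least degree of a nonzero `f` with `f(z) x^n ∈ I` for some `n` is zero. Powers of `z` can
be cancelled, and when `f(0) ≠ 0` and `d = deg f > 0`, the coefficient of
`x f(z) x^n - p^d f(z) x^{n+1}` is nonzero of smaller degree. -/
theorem exists_x_pow_mem (hpru : ∀ n : ℕ, 0 < n → p ^ n ≠ 1) (I : TwoSidedIdeal B) (d : ℕ) :
    ∀ f : Polynomial k, f ≠ 0 → f.natDegree = d → ∀ n, Polynomial.aeval W.z f * W.x ^ n ∈ I →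
      ∃ n, W.x ^ n ∈ I := by
  induction d using Nat.strong_induction_on with
  | _ d ih =>
  intro f hf hd n h
  by_cases hd0 : d = 0
  · obtain ⟨c, rfl⟩ := Polynomial.natDegree_eq_zero.1 (hd.trans hd0)
    refine ⟨n, I.mem_of_smul_mem (c := c) (by rintro rfl; simp at hf) ?_⟩
    simpa [Algebra.smul_def] using h
  by_cases h0 : f.coeff 0 = 0
  · obtain ⟨g, rfl⟩ := Polynomial.X_dvd_iff.2 h0
    have hg : g ≠ 0 := by rintro rfl; simp at hf
    rw [Polynomial.natDegree_X_mul hg] at hd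
    refine ih g.natDegree (by omega) g hg rfl n ?_
    have := I.mul_mem_left W.zi _ h
    rwa [map_mul, Polynomial.aeval_X, mul_assoc, ← mul_assoc, W.ziz, one_mul] at this
  · have hcoeff : ∀ i, (f.comp (Polynomial.C p * Polynomial.X) - Polynomial.C (p ^ d) * f).coeff i
        = (p ^ i - p ^ d) * f.coeff i := fun i => by
      rw [Polynomial.coeff_sub, Polynomial.comp_C_mul_X_coeff, Polynomial.coeff_C_mul]; ring
    refine ih _ ?_ (f.comp (Polynomial.C p * Polynomial.X) - Polynomial.C (p ^ d) * f) ?_ rfl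
      (n + 1) ?_
    · have : (f.comp (Polynomial.C p * Polynomial.X) - Polynomial.C (p ^ d) * f).natDegree
          ≤ d - 1 := by
        rw [Polynomial.natDegree_le_iff_coeff_eq_zero]
        intro i hi
        rw [hcoeff]
        rcases eq_or_ne i d with rfl | hne
        · simp
        · rw [Polynomial.coeff_eq_zero_of_natDegree_lt (by omega), mul_zero]
      omega
    · intro hzero
      have := hcoeff 0
      rw [hzero, Polynomial.coeff_zero] at this
      rcases mul_eq_zero.1 this.symm with h1 | h1
      · exact hpru d (by omega) (by rw [pow_zero] at h1; exact (sub_eq_zero.1 h1).symm)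
      · exact h0 h1
    · have h1 := I.mul_mem_left W.x _ h
      have h2 := I.smul_mem_of_mem (p ^ d) (I.mul_mem_right _ W.x h)
      rw [← mul_assoc, W.xz.aeval, mul_assoc, ← pow_succ'] at h1
      rw [mul_assoc, ← pow_succ] at h2
      rw [map_sub, sub_mul, map_mul, Polynomial.aeval_C, ← Algebra.smul_def, smul_mul_assoc]
      exact I.sub_mem h1 h2

/-- `x^{n+1} y - p^{n+1} y x^{n+1}` is a nonzero multiple of `x^n`. -/
theorem one_mem_of_x_pow (hpru : ∀ n : ℕ, 0 < n → p ^ n ≠ 1)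
    (I : TwoSidedIdeal B) (n : ℕ) (h : W.x ^ n ∈ I) : (1 : B) ∈ I := by
  induction n with
  | zero => simpa using h
  | succ n ih =>
    apply ih
    have key : ∀ n : ℕ, (p - 1) • (W.x ^ (n + 1) * W.y - p ^ (n + 1) • (W.y * W.x ^ (n + 1)))
        = (p ^ (n + 1) - 1) • W.x ^ n := by
      intro n
      induction n with
      | zero => simp [W.weyl]
      | succ n ihn =>
        have e : W.x ^ (n + 2) * W.y = W.x * (W.x ^ (n + 1) * W.y) := by
          rw [pow_succ', mul_assoc]
        have e2 : W.x * (W.y * W.x ^ (n + 1)) = W.x ^ (n + 1) + p • (W.y * W.x ^ (n + 2)) := by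
          rw [← mul_assoc, xy_eq, add_mul, one_mul, smul_mul_assoc, mul_assoc, ← pow_succ']
        have e3 := congrArg (W.x * ·) ihn
        simp only [mul_smul_comm, mul_sub, e2, ← e, ← pow_succ'] at e3
        rw [smul_sub, sub_eq_iff_eq_add] at e3
        rw [show n + 1 + 1 = n + 2 from rfl, smul_sub, e3]
        module
    refine I.mem_of_smul_mem (c := p ^ (n + 1) - 1) (sub_ne_zero.2 (hpru _ n.succ_pos)) ?_
    rw [← key]
    exact I.smul_mem_of_mem _ (I.sub_mem (I.mul_mem_right _ _ h)
      (I.smul_mem_of_mem _ (I.mul_mem_left _ _ h)))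

theorem one_mem (hp : p ≠ 0) (hq : q ≠ 0) (hl : l ≠ 0) (hm : m ≠ 0)
    (hpru : ∀ n : ℕ, 0 < n → p ^ n ≠ 1) (hqru : ∀ n : ℕ, 0 < n → q ^ n ≠ 1)
    (I : TwoSidedIdeal B) {w : B} (hw : w ∈ Algebra.adjoin k ({W.x, W.y, W.s, W.t} : Set B))
    (hI : w ∈ I) (h0 : w ≠ 0) : (1 : B) ∈ I := by
  have hp1 : p ≠ 1 := by simpa using hpru 1 one_pos
  obtain ⟨f, hf, n, h⟩ := W.exists_aeval_mul_X_mem hp hq hl hm hpru hqru I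
    (W.mem_iSup_comp_of_mem_adjoin hp hq hl hm hp1 hw) hI h0
  suffices ∃ n, W.x ^ n ∈ I from this.elim fun n hn => W.one_mem_of_x_pow hpru I n hn
  rcases int_cases n with ⟨b, rfl⟩ | ⟨b, rfl⟩
  · rw [X_nat] at h
    exact W.exists_x_pow_mem hpru I _ f hf rfl b h
  · rw [X_neg_nat] at h
    obtain ⟨g, hg, hgI⟩ := W.exists_aeval_mem_of_y hp hp1 I _ f hf h
    exact W.exists_x_pow_mem hpru I _ g hg rfl 0 (by simpa using hgI)

end WeylSystem

end General

/-! ### A representation showing that the localization is nonzero -/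

section Representation

variable {k : Type*} [Field k]

/-- The operator sending `f` to `(n, r) ↦ c(n, r) f(n + a, r + b)` on functions `ℤ × ℤ → k`. -/
def wshift (c : ℤ × ℤ → k) (a b : ℤ) : Module.End k (ℤ × ℤ → k) where
  toFun f n := c n * f (n.1 + a, n.2 + b)
  map_add' f g := by ext n; simp [mul_add]
  map_smul' r f := by ext n; simp [mul_left_comm]

theorem wshift_injective {c : ℤ × ℤ → k} (hc : ∀ n, c n ≠ 0) (a b : ℤ) :
    Function.Injective (wshift c a b) := by
  rw [injective_iff_map_eq_zero]
  intro f hf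
  ext n
  have := congrFun hf (n.1 - a, n.2 - b)
  simpa [wshift, hc] using this

/-- The action of the generators `x, y, s, t` on functions `ℤ × ℤ → k`. Here `x` and `t` shift the
two variables, and `z` acts as multiplication by `p ^ n`. -/
def repGen (p q l m : k) : Fin 4 → Module.End k (ℤ × ℤ → k) :=
  ![wshift (fun _ => 1) 1 0,
    wshift (fun n => (p ^ n.1 - 1) / (p - 1)) (-1) 0,
    wshift (fun n => l ^ (-n.1) * q ^ (-n.2)) 0 0,
    wshift (fun n => m ^ (-n.1)) 0 1]

/-- The representation of the extended quantized Weyl algebra given by `repGen`. -/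
def rep {p q l m : k} (hp : p ≠ 0) (hp1 : p ≠ 1) (hq : q ≠ 0) (hl : l ≠ 0) (hm : m ≠ 0) :
    ExtWeyl k p q l m →ₐ[k] Module.End k (ℤ × ℤ → k) :=
  RingQuot.liftAlgHom k ⟨FreeAlgebra.lift k (repGen p q l m), by
    have h1 : p - 1 ≠ 0 := sub_ne_zero.mpr hp1
    intro a b h
    cases h <;> refine LinearMap.ext fun f => funext fun n => ?_ <;>
      simp [repGen, wshift, zpow_add₀, zpow_neg, hp, hq, hl, hm] <;> field_simp <;>
      ring_nf⟩

/-- Every element of `S` acts injectively under `rep`. -/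
theorem zero_notMem_oreSetS {p q l m : k} (hp : p ≠ 0) (hp1 : p ≠ 1) (hq : q ≠ 0) (hl : l ≠ 0)
    (hm : m ≠ 0) : (0 : ExtWeyl k p q l m) ∉ oreSetS k p q l m := by
  have key : ∀ a ∈ oreSetS k p q l m, Function.Injective (rep hp hp1 hq hl hm a) := by
    intro a ha
    induction ha using Submonoid.closure_induction with
    | one => rw [map_one]; exact Function.injective_id
    | mul a b _ _ ha hb => rw [map_mul]; exact ha.comp hb
    | mem a ha =>
      rcases ha with rfl | rfl | rfl
      · have : rep hp hp1 hq hl hm (wz k p q l m) = wshift (fun n => p ^ n.1) 0 0 := by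
          have h1 : p - 1 ≠ 0 := sub_ne_zero.mpr hp1
          refine LinearMap.ext fun f => funext fun n => ?_
          simp [rep, wz, wx, wy, repGen, wshift, zpow_add₀, hp]
          field_simp
          ring_nf
        rw [this]
        exact wshift_injective (fun n => zpow_ne_zero _ hp) _ _
      · have : rep hp hp1 hq hl hm (ws k p q l m) = repGen p q l m 2 := by
          simp [rep, ws]
        rw [this]
        exact wshift_injective
          (fun n => mul_ne_zero (zpow_ne_zero _ hl) (zpow_ne_zero _ hq)) _ _
      · have : rep hp hp1 hq hl hm (wt k p q l m) = repGen p q l m 3 := by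
          simp [rep, wt]
        rw [this]
        exact wshift_injective (fun n => zpow_ne_zero _ hm) _ _
  intro h0
  have := key 0 h0
  rw [map_zero] at this
  exact zero_ne_one (α := ℤ × ℤ → k) (this (by simp))

end Representation

/-! ### The localization -/

section Localization

variable {k : Type*} [Field k] {p q l m : k}

theorem adjoin_generators :
    Algebra.adjoin k ({wx k p q l m, wy k p q l m, ws k p q l m, wt k p q l m} :
      Set (ExtWeyl k p q l m)) = ⊤ := by
  have h := FreeAlgebra.adjoin_range_ι k (Fin 4)
  have h2 := congrArg (Subalgebra.map (RingQuot.mkAlgHom k (ExtWeylRel k p q l m))) h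
  rw [AlgHom.map_adjoin, Algebra.map_top,
    (AlgHom.range_eq_top _).2 (RingQuot.mkAlgHom_surjective k _)] at h2
  rw [← h2, ← Set.range_comp]
  congr 1
  ext a
  simp only [Set.mem_insert_iff, Set.mem_singleton_iff, Set.mem_range, Fin.exists_fin_succ,
    Function.comp]
  simp [wx, wy, ws, wt, eq_comm]

variable [OreLocalization.OreSet (oreSetS k p q l m)]

/-- The localization map as an algebra homomorphism. -/
def locHom : ExtWeyl k p q l m →ₐ[k] OreLocalization (oreSetS k p q l m) (ExtWeyl k p q l m) where
  __ := OreLocalization.numeratorRingHom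
  commutes' _ := rfl

theorem isUnit_locHom {a : ExtWeyl k p q l m} (ha : a ∈ oreSetS k p q l m) :
    IsUnit (locHom a) :=
  OreLocalization.numerator_isUnit (⟨a, ha⟩ : oreSetS k p q l m)

/-- The images of the generators in the localization. -/
theorem exists_weylSystem : ∃ W : WeylSystem p q l m
    (OreLocalization (oreSetS k p q l m) (ExtWeyl k p q l m)),
    W.x = locHom (wx k p q l m) ∧ W.y = locHom (wy k p q l m) ∧ W.s = locHom (ws k p q l m) ∧
      W.t = locHom (wt k p q l m) := by
  have hz := isUnit_locHom (k := k) (p := p) (q := q) (l := l) (m := m)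
    (Submonoid.subset_closure (Or.inl rfl))
  have hs := isUnit_locHom (k := k) (p := p) (q := q) (l := l) (m := m)
    (Submonoid.subset_closure (Or.inr (Or.inl rfl)))
  have ht := isUnit_locHom (k := k) (p := p) (q := q) (l := l) (m := m)
    (Submonoid.subset_closure (Or.inr (Or.inr rfl)))
  have rel : ∀ {a b}, ExtWeylRel k p q l m a b →
      locHom (RingQuot.mkAlgHom k (ExtWeylRel k p q l m) a) =
        locHom (RingQuot.mkAlgHom k (ExtWeylRel k p q l m) b) :=
    fun h => congrArg _ (RingQuot.mkAlgHom_rel k h)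
  refine ⟨{ x := locHom (wx k p q l m), y := locHom (wy k p q l m),
            z := locHom (wz k p q l m), s := locHom (ws k p q l m),
            t := locHom (wt k p q l m), zi := ↑hz.unit⁻¹, si := ↑hs.unit⁻¹, ti := ↑ht.unit⁻¹
            hz := ?_, weyl := ?_, st := ?_, sx := ?_, sy := ?_, tx := ?_, ty := ?_
            zzi := hz.mul_val_inv, ziz := hz.val_inv_mul, ssi := hs.mul_val_inv
            sis := hs.val_inv_mul, tti := ht.mul_val_inv, tit := ht.val_inv_mul },
    rfl, rfl, rfl, rfl⟩
  · rw [wz, map_sub, map_mul, map_mul]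
  · simpa only [wx, wy, map_sub, map_smul, map_mul, map_one] using rel .weyl
  · simpa only [wx, wy, ws, wt, map_smul, map_mul] using rel .st
  · simpa only [wx, wy, ws, wt, map_smul, map_mul] using rel .sx
  · simpa only [wx, wy, ws, wt, map_smul, map_mul] using rel .sy
  · simpa only [wx, wy, ws, wt, map_smul, map_mul] using rel .tx
  · simpa only [wx, wy, ws, wt, map_smul, map_mul] using rel .ty

end Localization

/-- If neither `p` nor `q` is a root of unity, then the localization
`(A_p(λ, μ, K_q[s,t]))_S` at the Ore set `S = {z^i s^j t^k}` is a simple ring. -/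
theorem extWeyl_localization_simple
    (hp : p ≠ 0) (hq : q ≠ 0) (hlam : lam ≠ 0) (hmu : mu ≠ 0)
    (hpru : ∀ n : ℕ, 0 < n → p ^ n ≠ 1) (hqru : ∀ n : ℕ, 0 < n → q ^ n ≠ 1)
    [OreLocalization.OreSet (oreSetS K p q lam mu)] :
    IsSimpleRing (OreLocalization (oreSetS K p q lam mu) (ExtWeyl K p q lam mu)) := by
  have hp1 : p ≠ 1 := by simpa using hpru 1 one_pos
  have : Nontrivial (OreLocalization (oreSetS K p q lam mu) (ExtWeyl K p q lam mu)) :=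
    OreLocalization.nontrivial_iff.2 (zero_notMem_oreSetS hp hp1 hq hlam hmu)
  refine IsSimpleRing.of_eq_bot_or_eq_top fun I => or_iff_not_imp_left.2 fun hI => ?_
  obtain ⟨w, hwI, hw0⟩ : ∃ w ∈ I, w ≠ 0 := by
    by_contra! h
    exact hI (le_bot_iff.1 fun a ha => by simp [h a ha])
  obtain ⟨W, hx, hy, hs, ht⟩ := exists_weylSystem (k := K) (p := p) (q := q) (l := lam) (m := mu)
  -- Clearing the denominator of `w` gives a nonzero element of `I` coming from the algebra itself.
  obtain ⟨a, haI, ha0⟩ : ∃ a : ExtWeyl K p q lam mu, locHom a ∈ I ∧ locHom a ≠ 0 := by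
    induction w using OreLocalization.ind with | _ a d
    have hd : locHom (d : ExtWeyl K p q lam mu) * (OreLocalization.oreDiv a d) = locHom a :=
      OreLocalization.mul_cancel
    refine ⟨a, hd ▸ I.mul_mem_left _ _ hwI, fun h => hw0 ?_⟩
    rw [h] at hd
    exact (isUnit_locHom d.2).mul_right_eq_zero.1 hd
  have hadj : locHom a ∈ Algebra.adjoin K ({W.x, W.y, W.s, W.t} : Set _) := by
    have h := (Subalgebra.mem_map (f := locHom)).2 ⟨a, (adjoin_generators (k := K) (p := p) (q := q) (l := lam)
      (m := mu)).symm ▸ Algebra.mem_top, rfl⟩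
    rw [AlgHom.map_adjoin] at h
    simpa only [Set.image_insert_eq, Set.image_singleton, hx, hy, hs, ht] using h
  exact (TwoSidedIdeal.one_mem_iff I).1 (W.one_mem hp hq hlam hmu hpru hqru I hadj haI ha0)
end
end

section
/- If neither p nor q is a root of unity, then the height-one prime ideals of A_p(λ, μ, K_q[s,t]) are exactly the three two-sided ideals (z), (s) and (t) generated by z, s and t respectively, and each of these is a completely prime ideal. -/
/-!
Write `A` for the extended quantized Weyl algebra. The elements `z`, `s`, `t` are normal, and `A`
is spanned by the monomials `x ^ n z ^ i s ^ j t ^ k` and `y ^ n z ^ i s ^ j t ^ k`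
(`WeylSystem.span_mono`), each of which commutes with `z`, `s` and `t` up to a scalar, and also
with `x`, respectively `y`, up to a scalar.

A nonzero prime `P` contains `z`, `s` or `t` (`WeylSystem.mem_of_ne_bot`). Otherwise take a
nonzero combination of monomials in `P`. As `p` is not a root of unity, the factors picked up when
moving `z` past a monomial separate the exponents of `x` and `y`; as `q` is not one, those for `s`
and `t` separate the exponents of `t` and `s`; finally those for `x` or `y` separate the exponents
of `z`. Hence `P` contains a single monomial, and cancelling the normal factors leaves a power of
`x` or of `y`. Commuting it repeatedly with the other variable gives `1 ∈ P`.

For scalars `α`, `β`, `γ` there is a homomorphism `toTorus` from `A` to the quantum torus on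
`X, z, s, t` with `x ↦ X`, `z ↦ α z`, `s ↦ β s`, `t ↦ γ t`. The torus is a domain
(`torus_domain`), so all kernels are completely prime. For `α = β = γ = 1` the kernel contains
none of `z`, `s`, `t`, so it is `0` by the previous paragraph; in particular `0` is prime. For one
scalar equal to `0` and the others to `1` the kernel is the ideal generated by the corresponding
normal element (`ker_toTorus_z`, `ker_toTorus_s`, `ker_toTorus_t`). So `(z)`, `(s)`, `(t)` are
nonzero completely prime ideals, none contains the generator of another, and every nonzero prime
contains one of them; these are therefore the primes of height one.
-/

noncomputable section

open FreeAlgebra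

variable (K : Type*) [Field K] (p q lam mu : K)

/-- A two-sided ideal `P` of a (possibly noncommutative) ring is prime if it is proper and
`a A b ⊆ P` implies `a ∈ P` or `b ∈ P`. -/
def TwoSidedIdeal.IsPrimeIdeal {A : Type*} [Ring A] (P : TwoSidedIdeal A) : Prop :=
  P ≠ ⊤ ∧ ∀ a b : A, (∀ r : A, a * r * b ∈ P) → a ∈ P ∨ b ∈ P

/-- A two-sided ideal `P` is completely prime if it is proper and `ab ∈ P` implies
`a ∈ P` or `b ∈ P` (equivalently, the quotient ring is a domain). -/
def TwoSidedIdeal.IsCompletelyPrime {A : Type*} [Ring A] (P : TwoSidedIdeal A) : Prop :=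
  P ≠ ⊤ ∧ ∀ a b : A, a * b ∈ P → a ∈ P ∨ b ∈ P

/-- A prime two-sided ideal `P` has height one if there is a chain `P₀ ⊊ P₁ = P` of primes
and no chain `P₀ ⊊ P₁ ⊊ P₂ = P` of primes. -/
def TwoSidedIdeal.HasHeightOne {A : Type*} [Ring A] (P : TwoSidedIdeal A) : Prop :=
  P.IsPrimeIdeal ∧ (∃ P₀ : TwoSidedIdeal A, P₀.IsPrimeIdeal ∧ P₀ < P) ∧
    ¬∃ P₀ P₁ : TwoSidedIdeal A, P₀.IsPrimeIdeal ∧ P₁.IsPrimeIdeal ∧ P₀ < P₁ ∧ P₁ < P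

/-! ### Quasi-commuting elements and prime ideals -/

section Abstract
variable {K} {A : Type*} [Ring A] [Algebra K A]

/-- `u` quasi-commutes with `a`, with factor `χ`: `u a = χ a u`. -/
def QC (χ : K) (u a : A) : Prop := u * a = χ • (a * u)

theorem QC.mul {χ ψ : K} {u a b : A} (ha : QC χ u a) (hb : QC ψ u b) : QC (χ * ψ) u (a * b) := by
  unfold QC at *
  rw [← mul_assoc, ha, smul_mul_assoc, mul_assoc, hb, mul_smul_comm, smul_smul, mul_assoc]

theorem QC.one (u : A) : QC (1 : K) u 1 := by simp [QC]

theorem QC.self (u : A) : QC (1 : K) u u := by simp [QC]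

theorem QC.pow {χ : K} {u a : A} (ha : QC χ u a) (n : ℕ) : QC (χ ^ n) u (a ^ n) := by
  induction n with
  | zero => simpa using QC.one u
  | succ n ih => rw [pow_succ, pow_succ]; exact ih.mul ha

theorem QC.smul {χ : K} {u a : A} (ha : QC χ u a) (c : K) : QC χ u (c • a) := by
  unfold QC at *
  rw [mul_smul_comm, ha, smul_mul_assoc, smul_comm]

theorem QC.sum {ι : Type*} {χ : K} {u : A} (S : Finset ι) (a : ι → A)
    (h : ∀ i ∈ S, QC χ u (a i)) : QC χ u (∑ i ∈ S, a i) := by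
  unfold QC at *
  rw [Finset.mul_sum, Finset.sum_mul, Finset.smul_sum]
  exact Finset.sum_congr rfl h

theorem QC.symm {χ : K} (hχ : χ ≠ 0) {u a : A} (ha : QC χ u a) : QC χ⁻¹ a u := by
  unfold QC at *
  rw [ha, smul_smul, inv_mul_cancel₀ hχ, one_smul]

theorem QC.congr {χ ψ : K} {u a : A} (ha : QC χ u a) (h : χ = ψ) : QC ψ u a := h ▸ ha

/-- Quasi-commutation in the first argument: `u ^ m a = χ ^ m a u ^ m`. -/
theorem QC.pow_left {χ : K} {u a : A} (ha : QC χ u a) (m : ℕ) : QC (χ ^ m) (u ^ m) a := by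
  induction m with
  | zero => simp [QC]
  | succ m ih =>
    unfold QC at *
    rw [pow_succ, mul_assoc, ha, mul_smul_comm, ← mul_assoc, ih, smul_mul_assoc, smul_smul,
      mul_assoc, pow_succ' χ]

theorem TwoSidedIdeal.smul_mem' (I : TwoSidedIdeal A) (c : K) {a : A} (h : a ∈ I) : c • a ∈ I := by
  rw [Algebra.smul_def]; exact I.mul_mem_left _ _ h

theorem TwoSidedIdeal.mem_of_smul_mem_s3 (I : TwoSidedIdeal A) {c : K} (hc : c ≠ 0) {a : A}
    (h : c • a ∈ I) : a ∈ I := by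
  simpa [smul_smul, hc] using I.smul_mem' c⁻¹ h

/-- Separation of eigenvectors: if a sum of elements quasi-commuting with `u` with pairwise
distinct factors lies in a two-sided ideal, so does a summand times a power of `u`. Each factor
`χ j` is eliminated by passing from `a` to `u a - χ j • a u`. -/
theorem separate {ι : Type*} (I : TwoSidedIdeal A) (u : A) (χ : ι → K) (S : Finset ι)
    (hS : S.Nonempty) : ∀ (a : ι → A), Set.InjOn χ S → (∀ i ∈ S, QC (χ i) u (a i)) →
    ∑ i ∈ S, a i ∈ I → ∃ i ∈ S, ∃ m : ℕ, a i * u ^ m ∈ I := by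
  classical
  induction hS using Finset.Nonempty.cons_induction with
  | singleton i => exact fun a _ _ h => ⟨i, by simp, 0, by simpa using h⟩
  | cons j S hj hS ih =>
    intro a hinj h hs
    have key : ∑ i ∈ S, (χ i - χ j) • (a i * u) ∈ I := by
      have h1 := I.sub_mem (I.mul_mem_left u _ hs) (I.smul_mem' (χ j) (I.mul_mem_right _ u hs))
      rw [Finset.sum_cons, mul_add, add_mul, smul_add, h j (by simp), add_sub_add_left_eq_sub,
        Finset.mul_sum, Finset.sum_mul, Finset.smul_sum, ← Finset.sum_sub_distrib] at h1
      convert h1 using 1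
      refine Finset.sum_congr rfl fun i hi => ?_
      rw [h i (by simp [hi]), sub_smul]
    obtain ⟨i, hi, m, hm⟩ := ih (fun i => (χ i - χ j) • (a i * u))
      (hinj.mono (by simp))
      (fun i hi => (((h i (by simp [hi])).mul (QC.self u)).congr (mul_one _)).smul _) key
    have hne : χ i - χ j ≠ 0 := by
      rw [sub_ne_zero]
      intro he
      have := hinj (by simp [hi]) (by simp) he
      exact hj (this ▸ hi)
    refine ⟨i, by simp [hi], m + 1, ?_⟩
    rw [smul_mul_assoc] at hm
    rw [pow_succ', ← mul_assoc]
    exact I.mem_of_smul_mem_s3 hne hm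

/-- The version of `separate` where the factors may repeat: summands are grouped by factor. -/
theorem separate_fiber {ι : Type*} [DecidableEq K] (I : TwoSidedIdeal A) (u : A) (χ : ι → K)
    (S : Finset ι) (hS : S.Nonempty) (a : ι → A) (h : ∀ i ∈ S, QC (χ i) u (a i))
    (hs : ∑ i ∈ S, a i ∈ I) :
    ∃ S' ⊆ S, S'.Nonempty ∧ (∀ i ∈ S', ∀ j ∈ S', χ i = χ j) ∧
      ∃ m : ℕ, (∑ i ∈ S', a i) * u ^ m ∈ I := by
  obtain ⟨c, hc, m, hm⟩ := separate I u (id : K → K) (S.image χ) (hS.image χ)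
    (fun c => ∑ i ∈ S with χ i = c, a i) (fun _ _ _ _ h => h)
    (fun c _ => QC.sum _ _ fun i hi =>
      (h i (Finset.mem_filter.1 hi).1).congr (Finset.mem_filter.1 hi).2)
    (by rwa [Finset.sum_fiberwise_of_maps_to fun i hi => Finset.mem_image_of_mem χ hi])
  obtain ⟨i, hi, rfl⟩ := Finset.mem_image.1 hc
  refine ⟨_, Finset.filter_subset _ S, ⟨i, by simp [hi]⟩, ?_, m, hm⟩
  intro j hj k hk
  rw [(Finset.mem_filter.1 hj).2, (Finset.mem_filter.1 hk).2]

/-- `A u ⊆ u A`, which is the half of normality that is needed here. -/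
def IsRightNormal (u : A) : Prop := ∀ r : A, ∃ r' : A, r * u = u * r'

theorem TwoSidedIdeal.IsPrimeIdeal.mem_or_of_mul {P : TwoSidedIdeal A} (hP : P.IsPrimeIdeal)
    {a u : A} (hu : IsRightNormal u) (h : a * u ∈ P) : a ∈ P ∨ u ∈ P := by
  refine hP.2 a u fun r => ?_
  obtain ⟨r', hr⟩ := hu r
  rw [mul_assoc, hr, ← mul_assoc]
  exact P.mul_mem_right _ _ h

theorem TwoSidedIdeal.IsPrimeIdeal.mem_of_mul_pow {P : TwoSidedIdeal A} (hP : P.IsPrimeIdeal)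
    {a u : A} (hu : IsRightNormal u) (huP : u ∉ P) {m : ℕ} (h : a * u ^ m ∈ P) : a ∈ P := by
  induction m with
  | zero => simpa using h
  | succ m ih =>
    rw [pow_succ, ← mul_assoc] at h
    exact ih ((hP.mem_or_of_mul hu h).resolve_right huP)

theorem TwoSidedIdeal.IsCompletelyPrime.isPrimeIdeal {P : TwoSidedIdeal A}
    (hP : P.IsCompletelyPrime) : P.IsPrimeIdeal :=
  ⟨hP.1, fun a b h => hP.2 a b (by simpa using h 1)⟩

/-! ### Primes containing none of `z`, `s`, `t` -/

/-- The elements `x, y, s, t` generate `A` and satisfy the defining relations of the extended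
quantized Weyl algebra, and `z = xy - yx`. -/
structure WeylSystem_s3 (p q lam mu : K) (x y s t z : A) : Prop where
  weyl : x * y - p • (y * x) = 1
  st : s * t = q • (t * s)
  sx : s * x = lam • (x * s)
  sy : s * y = lam⁻¹ • (y * s)
  tx : t * x = mu • (x * t)
  ty : t * y = mu⁻¹ • (y * t)
  hz : z = x * y - y * x
  gen : Algebra.adjoin K {x, y, s, t} = ⊤

/-- The homogeneous element `x ^ n` for `n ≥ 0`, `y ^ (-n)` for `n < 0`. -/
def Xpow (x y : A) : ℤ → A
  | Int.ofNat n => x ^ n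
  | Int.negSucc n => y ^ (n + 1)

/-- The normal monomial `x ^ n z ^ i s ^ j t ^ k` (with `y ^ (-n)` for `x ^ n` if `n < 0`). -/
def mono (x y s t z : A) (m : ℤ × ℕ × ℕ × ℕ) : A :=
  Xpow x y m.1 * z ^ m.2.1 * s ^ m.2.2.1 * t ^ m.2.2.2

namespace WeylSystem_s3
variable {p q lam mu} {x y s t z : A}

theorem qc_zx (W : WeylSystem_s3 p q lam mu x y s t z) (hp : p ≠ 0) : QC p⁻¹ z x := by
  have h : x * y = p • (y * x) + 1 := by rw [← W.weyl]; abel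
  refine (QC.symm (χ := p) hp ?_)
  unfold QC
  rw [W.hz]
  simp only [mul_sub, sub_mul, smul_sub]
  rw [← mul_assoc x y x, h]
  rw [mul_add, mul_smul_comm, ← mul_assoc x y x, h]
  simp only [add_mul, smul_add, smul_mul_assoc, one_mul, mul_one, smul_smul]
  abel

theorem qc_zy (W : WeylSystem_s3 p q lam mu x y s t z) : QC p z y := by
  have h : x * y = p • (y * x) + 1 := by rw [← W.weyl]; abel
  unfold QC
  rw [W.hz]
  simp only [mul_sub, sub_mul, smul_sub]
  rw [mul_assoc y x y, h]
  simp only [add_mul, mul_add, smul_mul_assoc, mul_smul_comm, one_mul, mul_one, mul_assoc, h,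
    smul_add]
  abel

theorem qc_sz (W : WeylSystem_s3 p q lam mu x y s t z) (hlam : lam ≠ 0) : QC (1 : K) s z := by
  have hx : QC lam s x := W.sx
  have hy : QC lam⁻¹ s y := W.sy
  have h1 := hx.mul hy
  have h2 := hy.mul hx
  rw [mul_inv_cancel₀ hlam] at h1
  rw [inv_mul_cancel₀ hlam] at h2
  unfold QC at *
  simp only [one_smul] at *
  rw [W.hz, mul_sub, h1, h2, sub_mul]

theorem qc_tz (W : WeylSystem_s3 p q lam mu x y s t z) (hmu : mu ≠ 0) : QC (1 : K) t z := by
  have hx : QC mu t x := W.tx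
  have hy : QC mu⁻¹ t y := W.ty
  have h1 := hx.mul hy
  have h2 := hy.mul hx
  rw [mul_inv_cancel₀ hmu] at h1
  rw [inv_mul_cancel₀ hmu] at h2
  unfold QC at *
  simp only [one_smul] at *
  rw [W.hz, mul_sub, h1, h2, sub_mul]

theorem yx_eq (W : WeylSystem_s3 p q lam mu x y s t z) (hp1 : p ≠ 1) :
    y * x = (p - 1)⁻¹ • (z - 1) := by
  have h : x * y = p • (y * x) + 1 := by rw [← W.weyl]; abel
  rw [W.hz, h, eq_inv_smul_iff₀ (sub_ne_zero.2 hp1), sub_smul, one_smul]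
  abel

theorem xy_eq_s3 (W : WeylSystem_s3 p q lam mu x y s t z) (hp1 : p ≠ 1) :
    x * y = (p - 1)⁻¹ • (p • z - 1) := by
  have h : x * y = z + y * x := by rw [W.hz]; abel
  rw [h, W.yx_eq hp1, eq_inv_smul_iff₀ (sub_ne_zero.2 hp1), smul_add,
    smul_inv_smul₀ (sub_ne_zero.2 hp1), sub_smul, one_smul]
  abel

/-- To check that a subalgebra is everything it suffices to look at the generators. -/
theorem mem_of_gens (W : WeylSystem_s3 p q lam mu x y s t z) (B : Subalgebra K A) (hx : x ∈ B)
    (hy : y ∈ B) (hs : s ∈ B) (ht : t ∈ B) (a : A) : a ∈ B := by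
  have : Algebra.adjoin K {x, y, s, t} ≤ B := by
    rw [Algebra.adjoin_le_iff]
    rintro _ (rfl | rfl | rfl | rfl) <;> assumption
  rw [W.gen] at this
  exact this Algebra.mem_top

theorem isRightNormal_of_qc (W : WeylSystem_s3 p q lam mu x y s t z) {u : A} {a b c d : K}
    (hx : QC a x u) (hy : QC b y u) (hs : QC c s u) (ht : QC d t u) : IsRightNormal u := by
  let B : Subalgebra K A :=
    { carrier := {r | ∃ r', r * u = u * r'}
      mul_mem' := by
        rintro r₁ r₂ ⟨a, ha⟩ ⟨b, hb⟩
        exact ⟨a * b, by rw [mul_assoc, hb, ← mul_assoc, ha, mul_assoc]⟩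
      add_mem' := by
        rintro r₁ r₂ ⟨a, ha⟩ ⟨b, hb⟩
        exact ⟨a + b, by rw [add_mul, mul_add, ha, hb]⟩
      algebraMap_mem' := fun c => ⟨algebraMap K A c, Algebra.commutes c u⟩ }
  have gen : ∀ {χ : K} {v : A}, QC χ v u → v ∈ B := fun {χ v} h =>
    ⟨χ • v, by rw [mul_smul_comm]; exact h⟩
  exact W.mem_of_gens B (gen hx) (gen hy) (gen hs) (gen ht)

theorem qc_X {u : A} {χ : K} (hx : QC χ u x) (hy : QC χ⁻¹ u y) (n : ℤ) :
    QC (χ ^ n) u (Xpow x y n) := by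
  cases n with
  | ofNat n => exact (hx.pow n).congr (by simp)
  | negSucc n => exact (hy.pow (n + 1)).congr (by simp [zpow_negSucc])

theorem qc_mono {u : A} {χ₁ χ₂ χ₃ χ₄ : K} {n : ℤ} {i j k : ℕ} (h1 : QC χ₁ u (Xpow x y n))
    (h2 : QC χ₂ u z) (h3 : QC χ₃ u s) (h4 : QC χ₄ u t) :
    QC (χ₁ * χ₂ ^ i * χ₃ ^ j * χ₄ ^ k) u (mono x y s t z (n, i, j, k)) :=
  ((h1.mul (h2.pow i)).mul (h3.pow j)).mul (h4.pow k)

/-- If `u v = c • v u + 1` and the `c`-integers `1 + c + ⋯ + c ^ (n - 1)` do not vanish, then no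
power of `v` lies in a proper two-sided ideal, because `u v ^ n - c ^ n • v ^ n u` is a nonzero
multiple of `v ^ (n - 1)`. -/
theorem one_mem_of_pow_mem (I : TwoSidedIdeal A) {u v : A} {c : K}
    (h : u * v = c • (v * u) + 1) (hc : ∀ n : ℕ, 0 < n → c ^ n ≠ 1) (n : ℕ) (hn : v ^ n ∈ I) :
    (1 : A) ∈ I := by
  have comm : ∀ n : ℕ, u * v ^ (n + 1) =
      c ^ (n + 1) • (v ^ (n + 1) * u) + (∑ i ∈ Finset.range (n + 1), c ^ i) • v ^ n := by
    intro n
    induction n with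
    | zero => simp [h]
    | succ n ih =>
      rw [pow_succ v (n + 1), ← mul_assoc, ih, add_mul, smul_mul_assoc, mul_assoc _ u v, h,
        mul_add, mul_smul_comm, smul_add, smul_smul, ← pow_succ, mul_one, smul_mul_assoc,
        ← pow_succ, Finset.sum_range_succ _ (n + 1), add_smul, mul_assoc]
      abel
  induction n with
  | zero => simpa using hn
  | succ n ih =>
    have h1 : (∑ i ∈ Finset.range (n + 1), c ^ i) • v ^ n ∈ I := by
      have := I.sub_mem (I.mul_mem_left u _ hn) (I.smul_mem' (c ^ (n + 1)) (I.mul_mem_right _ u hn))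
      rwa [comm n, add_sub_cancel_left] at this
    refine ih (I.mem_of_smul_mem_s3 (fun h0 => hc (n + 1) n.succ_pos ?_) h1)
    have := geom_sum_mul c (n + 1)
    rw [h0, zero_mul] at this
    exact (sub_eq_zero.1 this.symm)

theorem zpow_inj_s3 {c : K} (hc0 : c ≠ 0) (hc : ∀ n : ℕ, 0 < n → c ^ n ≠ 1) {m n : ℤ}
    (h : c ^ m = c ^ n) : m = n := by
  by_contra hne
  have h1 : c ^ (m - n) = 1 := by rw [zpow_sub₀ hc0, h, div_self (zpow_ne_zero _ hc0)]
  have h2 : c ^ (m - n).natAbs = 1 := by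
    rw [← zpow_natCast]
    rcases Int.natAbs_eq (m - n) with h | h
    · rwa [← h]
    · rw [h, zpow_neg, inv_eq_one] at h1; exact h1
  exact hc _ (Int.natAbs_pos.2 (sub_ne_zero.2 hne)) h2

theorem pow_inj {c : K} (hc0 : c ≠ 0) (hc : ∀ n : ℕ, 0 < n → c ^ n ≠ 1) {m n : ℕ}
    (h : c ^ m = c ^ n) : m = n := by
  exact_mod_cast zpow_inj_s3 hc0 hc (m := m) (n := n) (by simpa using h)

theorem inv_pow_ne_one {c : K} (hc : ∀ n : ℕ, 0 < n → c ^ n ≠ 1) (n : ℕ) (hn : 0 < n) :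
    c⁻¹ ^ n ≠ 1 := by
  rw [inv_pow, ne_eq, inv_eq_one]; exact hc n hn

theorem span_mono (W : WeylSystem_s3 p q lam mu x y s t z) (hp : p ≠ 0) (hp1 : p ≠ 1) (hq : q ≠ 0)
    (hlam : lam ≠ 0) (hmu : mu ≠ 0) : Submodule.span K (Set.range (mono x y s t z)) = ⊤ := by
  set V := Submodule.span K (Set.range (mono x y s t z)) with hV
  have hmem : ∀ m, mono x y s t z m ∈ V := fun m => Submodule.subset_span ⟨m, rfl⟩
  let B : Subalgebra K A :=
    { carrier := {r | ∀ v ∈ V, v * r ∈ V}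
      mul_mem' := fun {a b} ha hb v hv => by rw [← mul_assoc]; exact hb _ (ha _ hv)
      add_mem' := fun {a b} ha hb v hv => by rw [mul_add]; exact V.add_mem (ha _ hv) (hb _ hv)
      algebraMap_mem' := fun c v hv => by
        rw [← Algebra.commutes, ← Algebra.smul_def]; exact V.smul_mem c hv }
  have hB : ∀ r : A, (∀ m, mono x y s t z m * r ∈ V) → r ∈ B := by
    intro r hr v hv
    induction hv using Submodule.span_induction with
    | mem v h => obtain ⟨m, rfl⟩ := h; exact hr m
    | zero => simp
    | add a b _ _ ha hb => rw [add_mul]; exact V.add_mem ha hb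
    | smul c a _ ha => rw [smul_mul_assoc]; exact V.smul_mem c ha
  -- A generator `u` quasi-commuting with `z`, `s`, `t` can be moved next to the power of `x` or `y`.
  have move : ∀ {u : A} {a b c : K}, a ≠ 0 → b ≠ 0 → c ≠ 0 → QC a u z → QC b u s → QC c u t →
      (∀ n i j k, Xpow x y n * u * z ^ i * s ^ j * t ^ k ∈ V) → u ∈ B := by
    rintro u a b c ha hb hc hz hs ht h
    refine hB u ?_
    rintro ⟨n, i, j, k⟩
    have h0 : a ^ i * b ^ j * c ^ k ≠ 0 := by positivity
    have h1 : QC _ u (z ^ i * s ^ j * t ^ k) := ((hz.pow i).mul (hs.pow j)).mul (ht.pow k)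
    have h2 := h1.symm h0
    have h3 : mono x y s t z (n, i, j, k) * u =
        (a ^ i * b ^ j * c ^ k)⁻¹ • (Xpow x y n * u * z ^ i * s ^ j * t ^ k) := by
      unfold QC at h2
      simp only [mono]
      rw [show Xpow x y n * z ^ i * s ^ j * t ^ k * u = Xpow x y n * (z ^ i * s ^ j * t ^ k * u) by
        simp only [mul_assoc], h2, mul_smul_comm]
      simp only [mul_assoc]
    rw [h3]
    exact V.smul_mem _ (h n i j k)
  have hx : x ∈ B := by
    refine move (inv_ne_zero (inv_ne_zero hp)) (inv_ne_zero hlam) (inv_ne_zero hmu)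
      ((W.qc_zx hp).symm (inv_ne_zero hp)) (QC.symm hlam W.sx) (QC.symm hmu W.tx) ?_
    rintro (n | n) i j k
    · exact (by simpa only [mono, Xpow, pow_succ] using hmem (Int.ofNat (n + 1), i, j, k))
    · have e : Xpow x y (Int.negSucc n) * x =
          (p - 1)⁻¹ • (Xpow x y (-(n : ℤ)) * z - Xpow x y (-(n : ℤ))) := by
        have e1 : Xpow x y (-(n : ℤ)) = y ^ n := by
          cases n with
          | zero => exact (pow_zero x).trans (pow_zero y).symm
          | succ n => rfl
        rw [e1]
        simp only [Xpow]
        rw [pow_succ, mul_assoc, W.yx_eq hp1, mul_smul_comm, mul_sub, mul_one]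
      have h1 := hmem (-(n : ℤ), i + 1, j, k)
      have h2 := hmem (-(n : ℤ), i, j, k)
      simp only [mono, pow_succ' z] at h1 h2
      rw [e]
      simp only [smul_mul_assoc, sub_mul]
      exact V.smul_mem _ (V.sub_mem (by simpa only [mul_assoc] using h1) h2)
  have hy : y ∈ B := by
    refine move (inv_ne_zero hp) (inv_ne_zero (inv_ne_zero hlam)) (inv_ne_zero (inv_ne_zero hmu))
      (W.qc_zy.symm hp) (QC.symm (inv_ne_zero hlam) W.sy) (QC.symm (inv_ne_zero hmu) W.ty) ?_
    rintro (n | n) i j k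
    · cases n with
      | zero => simpa [mono, Xpow] using hmem (Int.negSucc 0, i, j, k)
      | succ n =>
        have h1 := hmem (Int.ofNat n, i + 1, j, k)
        have h2 := hmem (Int.ofNat n, i, j, k)
        simp only [mono, pow_succ' z, Xpow] at h1 h2
        simp only [Xpow]
        rw [pow_succ, mul_assoc (x ^ n), W.xy_eq_s3 hp1]
        simp only [mul_smul_comm, smul_mul_assoc, mul_sub, sub_mul, mul_one]
        exact V.smul_mem _ (V.sub_mem (V.smul_mem _ (by simpa only [mul_assoc] using h1)) h2)
    · exact (by simpa only [mono, Xpow, pow_succ] using hmem (Int.negSucc (n + 1), i, j, k))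
  have hs : s ∈ B := by
    refine hB s ?_
    rintro ⟨n, i, j, k⟩
    have h1 := hmem (n, i, j + 1, k)
    have h2 := (QC.pow (u := s) W.st k).symm (pow_ne_zero k hq)
    unfold QC at h2
    simp only [mono] at *
    rw [mul_assoc, h2, mul_smul_comm]
    exact V.smul_mem _ (by simpa only [pow_succ, mul_assoc] using h1)
  have ht : t ∈ B := by
    refine hB t ?_
    rintro ⟨n, i, j, k⟩
    simpa only [mono, pow_succ, mul_assoc] using hmem (n, i, j, k + 1)
  rw [eq_top_iff]
  intro a _
  have h1 : (1 : A) ∈ V := by simpa [mono, Xpow] using hmem (Int.ofNat 0, 0, 0, 0)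
  simpa using W.mem_of_gens B hx hy hs ht a 1 h1

/-- Every nonzero prime contains one of the normal elements `z`, `s`, `t`. Given a nonzero linear
combination of normal monomials in the prime `P`, quasi-commutation with `z`, `s` and `t`
successively isolates the summands with a given power of `x` or `y`, of `t` and of `s`; then
quasi-commutation with `x` or `y` isolates the power of `z`. -/
theorem mem_of_ne_bot (W : WeylSystem_s3 p q lam mu x y s t z) (hp : p ≠ 0) (hq : q ≠ 0)
    (hlam : lam ≠ 0) (hmu : mu ≠ 0) (hpru : ∀ n : ℕ, 0 < n → p ^ n ≠ 1)
    (hqru : ∀ n : ℕ, 0 < n → q ^ n ≠ 1) {P : TwoSidedIdeal A} (hP : P.IsPrimeIdeal)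
    (hne : P ≠ ⊥) : z ∈ P ∨ s ∈ P ∨ t ∈ P := by
  classical
  have hp1 : p ≠ 1 := by simpa using hpru 1 one_pos
  by_contra! hcon
  obtain ⟨hzP, hsP, htP⟩ := hcon
  have zx := W.qc_zx hp
  have zy := W.qc_zy
  have sz := W.qc_sz hlam
  have tz := W.qc_tz hmu
  have sx : QC lam s x := W.sx
  have sy : QC lam⁻¹ s y := W.sy
  have tx : QC mu t x := W.tx
  have ty : QC mu⁻¹ t y := W.ty
  have st : QC q s t := W.st
  have ts := st.symm hq
  have xz := zx.symm (inv_ne_zero hp)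
  have yz := zy.symm hp
  have zs := sz.symm one_ne_zero
  have zt := tz.symm one_ne_zero
  have xs := sx.symm hlam
  have ys := sy.symm (inv_ne_zero hlam)
  have xt := tx.symm hmu
  have yt := ty.symm (inv_ne_zero hmu)
  have nz : IsRightNormal z := W.isRightNormal_of_qc xz yz sz tz
  have ns : IsRightNormal s := W.isRightNormal_of_qc xs ys (QC.self (K := K) s) ts
  have nt : IsRightNormal t := W.isRightNormal_of_qc xt yt st (QC.self (K := K) t)
  have hone : (1 : A) ∉ P := fun h => hP.1 ((TwoSidedIdeal.one_mem_iff P).1 h)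
  obtain ⟨a, haP, ha0⟩ : ∃ a ∈ P, a ≠ 0 := by
    by_contra! h
    exact hne (eq_bot_iff.2 fun a ha => (TwoSidedIdeal.mem_bot A).2 (h a ha))
  have hspan : a ∈ Submodule.span K (Set.range (mono x y s t z)) := by
    rw [W.span_mono hp hp1 hq hlam hmu]; trivial
  obtain ⟨c, rfl⟩ := Finsupp.mem_span_range_iff_exists_finsupp.1 hspan
  have hS0 : c.support.Nonempty := by
    rw [Finsupp.support_nonempty_iff]
    rintro rfl
    simp at ha0
  -- The powers of `x` and `y` are isolated by `z`.
  obtain ⟨S₁, hS₁, hne₁, hn, m, h₁⟩ := separate_fiber P z (fun m => p⁻¹ ^ m.1) c.support hS0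
    (fun m => c m • mono x y s t z m)
    (fun m _ => ((qc_mono (qc_X zx (zy.congr (inv_inv p).symm) m.1)
      (QC.self z) zs zt).congr (by simp)).smul _) haP
  replace h₁ := hP.mem_of_mul_pow nz hzP h₁
  replace hn : ∀ i ∈ S₁, ∀ j ∈ S₁, i.1 = j.1 := fun i hi j hj =>
    zpow_inj_s3 (inv_ne_zero hp) (inv_pow_ne_one hpru) (hn i hi j hj)
  -- The powers of `t` are isolated by `s`.
  obtain ⟨S₂, hS₂, hne₂, hk, m, h₂⟩ := separate_fiber P s (fun m => lam ^ m.1 * q ^ m.2.2.2)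
    S₁ hne₁ (fun m => c m • mono x y s t z m)
    (fun m _ => ((qc_mono (qc_X sx sy m.1) sz (QC.self s) st).congr (by simp)).smul _) h₁
  replace h₂ := hP.mem_of_mul_pow ns hsP h₂
  replace hk : ∀ i ∈ S₂, ∀ j ∈ S₂, i.2.2.2 = j.2.2.2 := fun i hi j hj => by
    have := hk i hi j hj
    simp only [hn i (hS₂ hi) j (hS₂ hj)] at this
    exact pow_inj hq hqru (mul_left_cancel₀ (zpow_ne_zero _ hlam) this)
  -- The powers of `s` are isolated by `t`.
  obtain ⟨S₃, hS₃, hne₃, hj, m, h₃⟩ := separate_fiber P t (fun m => mu ^ m.1 * q⁻¹ ^ m.2.2.1)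
    S₂ hne₂ (fun m => c m • mono x y s t z m)
    (fun m _ => ((qc_mono (qc_X tx ty m.1) tz ts (QC.self t)).congr (by simp)).smul _) h₂
  replace h₃ := hP.mem_of_mul_pow nt htP h₃
  replace hj : ∀ i ∈ S₃, ∀ j ∈ S₃, i.2.2.1 = j.2.2.1 := fun i hi j hj' => by
    have := hj i hi j hj'
    simp only [hn i (hS₂ (hS₃ hi)) j (hS₂ (hS₃ hj'))] at this
    exact pow_inj (inv_ne_zero hq) (inv_pow_ne_one hqru)
      (mul_left_cancel₀ (zpow_ne_zero _ hmu) this)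
  -- The powers of `z` are isolated by `v`, which is `x` or `y`.
  have final : ∀ {v : A} {α β γ : K}, α ≠ 0 → β ≠ 0 → γ ≠ 0 → (∀ n : ℕ, 0 < n → α ^ n ≠ 1) →
      QC α v z → QC β v s → QC γ v t → (∀ m ∈ S₃, ∃ r : ℕ, Xpow x y m.1 = v ^ r) →
      ∃ r : ℕ, v ^ r ∈ P := by
    intro v α β γ hα hβ hγ hαru vz vs vt hX
    have hqc : ∀ m ∈ S₃, QC (α ^ m.2.1 * β ^ m.2.2.1 * γ ^ m.2.2.2) v
        (c m • mono x y s t z m) := by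
      intro m hm
      obtain ⟨r, hr⟩ := hX m hm
      have h1 : QC (1 : K) v (Xpow x y m.1) := by
        rw [hr]; exact ((QC.self v).pow r).congr (one_pow r)
      exact ((qc_mono h1 vz vs vt).congr (by simp)).smul _
    obtain ⟨S₄, hS₄, ⟨m₀, hm₀⟩, hi, d, h₄⟩ := separate_fiber P v _ S₃ hne₃ _ hqc h₃
    have hS : S₄ = {m₀} := by
      refine Finset.eq_singleton_iff_unique_mem.2 ⟨hm₀, fun m hm => ?_⟩
      have e1 := hn m (hS₂ (hS₃ (hS₄ hm))) m₀ (hS₂ (hS₃ (hS₄ hm₀)))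
      have e2 := hk m (hS₃ (hS₄ hm)) m₀ (hS₃ (hS₄ hm₀))
      have e3 := hj m (hS₄ hm) m₀ (hS₄ hm₀)
      have e4 := hi m hm m₀ hm₀
      simp only [e2, e3] at e4
      have e5 := pow_inj hα hαru (mul_right_cancel₀ (pow_ne_zero _ hβ)
        (mul_right_cancel₀ (pow_ne_zero _ hγ) e4))
      exact Prod.ext e1 (Prod.ext e5 (Prod.ext e3 e2))
    rw [hS, Finset.sum_singleton] at h₄
    have hc : c m₀ ≠ 0 :=
      Finsupp.mem_support_iff.1 (hS₁ (hS₂ (hS₃ (hS₄ hm₀))))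
    have h5 : v ^ d * (c m₀ • mono x y s t z m₀) ∈ P := by
      rw [(hqc m₀ (hS₄ hm₀)).pow_left d]
      exact P.smul_mem' _ h₄
    rw [mul_smul_comm] at h5
    replace h5 := P.mem_of_smul_mem_s3 hc h5
    obtain ⟨r, hr⟩ := hX m₀ (hS₄ hm₀)
    refine ⟨d + r, ?_⟩
    simp only [mono, hr, ← mul_assoc, ← pow_add] at h5
    exact hP.mem_of_mul_pow nz hzP (hP.mem_of_mul_pow ns hsP (hP.mem_of_mul_pow nt htP h5))
  have hweyl : x * y = p • (y * x) + 1 := by rw [← W.weyl]; abel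
  obtain ⟨⟨n, _⟩, hm₃⟩ := hne₃
  rcases n with n | n
  · obtain ⟨r, hr⟩ := final (inv_ne_zero (inv_ne_zero hp)) (inv_ne_zero hlam) (inv_ne_zero hmu)
      (by simpa using hpru) xz xs xt
      (fun m hm => ⟨n, by rw [hn m (hS₂ (hS₃ hm)) _ (hS₂ (hS₃ hm₃))]; rfl⟩)
    -- Read with `y` on the left, the Weyl relation is `y (-p x) = p⁻¹ (-p x) y + 1`.
    refine hone (one_mem_of_pow_mem P (u := y) (v := (-p) • x) (c := p⁻¹) ?_
      (inv_pow_ne_one hpru) r ?_)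
    · rw [mul_smul_comm, smul_mul_assoc, hweyl, smul_smul, smul_add, smul_smul]
      simp [hp]
    · rw [smul_pow]; exact P.smul_mem' _ hr
  · obtain ⟨r, hr⟩ := final (inv_ne_zero hp) (inv_ne_zero (inv_ne_zero hlam))
      (inv_ne_zero (inv_ne_zero hmu)) (inv_pow_ne_one hpru) yz ys yt
      (fun m hm => ⟨n + 1, by rw [hn m (hS₂ (hS₃ hm)) _ (hS₂ (hS₃ hm₃))]; rfl⟩)
    exact hone (one_mem_of_pow_mem P hweyl hpru r hr)

end WeylSystem_s3
end Abstract

/-! ### The quantum torus -/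

section Model

/-- The exponent group of the quantum torus on invertible generators `X, z, s, t`. -/
abbrev Expo : Type := ℤ × ℤ × ℤ × ℤ

/-- The factor in `(X ^ n z ^ i s ^ j t ^ k) (X ^ n' z ^ i' s ^ j' t ^ k') =
coc • X ^ (n + n') z ^ (i + i') s ^ (j + j') t ^ (k + k')`. -/
def coc (g h : Expo) : K :=
  p ^ (-(g.2.1 * h.1)) * lam ^ (g.2.2.1 * h.1) * mu ^ (g.2.2.2 * h.1) * q ^ (-(g.2.2.2 * h.2.2.1))

/-- The monomial of exponent `g` of the quantum torus, realized as the operator of left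
multiplication on the vector space with basis the monomials. -/
def tor (g : Expo) : Module.End K (Expo →₀ K) :=
  Finsupp.lsum K fun h => coc K p q lam mu g h • Finsupp.lsingle (g + h)

theorem tor_single (g h : Expo) (c : K) : tor K p q lam mu g (Finsupp.single h c) =
    Finsupp.single (g + h) (coc K p q lam mu g h * c) := by
  simp [tor]

theorem tor_apply (g : Expo) (f : Expo →₀ K) (k : Expo) : tor K p q lam mu g f k =
    coc K p q lam mu g (k - g) * f (k - g) := by
  induction f using Finsupp.induction_linear with
  | zero => simp
  | add a b ha hb => simp [ha, hb, mul_add]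
  | single h c =>
    rw [tor_single, Finsupp.single_apply, Finsupp.single_apply]
    by_cases hk : g + h = k
    · subst hk; simp
    · rw [if_neg hk, if_neg (fun h' => hk (by rw [h']; abel)), mul_zero]

variable {K p q lam mu}

theorem coc_ne_zero (hp : p ≠ 0) (hq : q ≠ 0) (hlam : lam ≠ 0) (hmu : mu ≠ 0) (g h : Expo) :
    coc K p q lam mu g h ≠ 0 :=
  mul_ne_zero (mul_ne_zero (mul_ne_zero (zpow_ne_zero _ hp) (zpow_ne_zero _ hlam))
    (zpow_ne_zero _ hmu)) (zpow_ne_zero _ hq)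

theorem coc_zero_right (g : Expo) : coc K p q lam mu g 0 = 1 := by simp [coc]

theorem coc_zero_left (g : Expo) : coc K p q lam mu 0 g = 1 := by simp [coc]

theorem tor_zero : tor K p q lam mu 0 = 1 := by
  refine Finsupp.lhom_ext fun h c => ?_
  rw [tor_single, coc_zero_left]
  simp

theorem tor_mul (hp : p ≠ 0) (hq : q ≠ 0) (hlam : lam ≠ 0) (hmu : mu ≠ 0) (g h : Expo) :
    tor K p q lam mu g * tor K p q lam mu h = coc K p q lam mu g h • tor K p q lam mu (g + h) := by
  refine Finsupp.lhom_ext fun k c => ?_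
  rw [Module.End.mul_apply, LinearMap.smul_apply, tor_single, tor_single, tor_single, add_assoc,
    Finsupp.smul_single, smul_eq_mul, ← mul_assoc, ← mul_assoc]
  congr 2
  simp only [coc, Prod.fst_add, Prod.snd_add, mul_add, add_mul, neg_add, zpow_add₀ hp,
    zpow_add₀ hq, zpow_add₀ hlam, zpow_add₀ hmu]
  ring

/-- The quantum torus: the span of the monomials, as an algebra of operators. -/
def torus (hp : p ≠ 0) (hq : q ≠ 0) (hlam : lam ≠ 0) (hmu : mu ≠ 0) :
    Subalgebra K (Module.End K (Expo →₀ K)) :=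
  (LinearMap.range (Finsupp.linearCombination K (tor K p q lam mu))).toSubalgebra
    ⟨Finsupp.single 0 1, by simp [tor_zero]⟩ (by
      rintro _ _ ⟨f, rfl⟩ ⟨g, rfl⟩
      simp only [Finsupp.linearCombination_apply, Finsupp.sum, Finset.sum_mul, Finset.mul_sum]
      refine Submodule.sum_mem _ fun j _ => Submodule.sum_mem _ fun i _ => ?_
      rw [smul_mul_assoc, mul_smul_comm, tor_mul hp hq hlam hmu, smul_smul, smul_smul]
      exact ⟨Finsupp.single (i + j) _, Finsupp.linearCombination_single _ _ _⟩)

theorem tor_mem_torus (hp : p ≠ 0) (hq : q ≠ 0) (hlam : lam ≠ 0) (hmu : mu ≠ 0) (g : Expo) :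
    tor K p q lam mu g ∈ torus hp hq hlam hmu :=
  ⟨Finsupp.single g 1, by simp⟩

theorem linearCombination_tor_apply (f : Expo →₀ K) (h : Expo →₀ K) (k : Expo) :
    Finsupp.linearCombination K (tor K p q lam mu) f h k =
      ∑ g ∈ f.support, f g * (coc K p q lam mu g (k - g) * h (k - g)) := by
  simp [Finsupp.linearCombination_apply, Finsupp.sum, tor_apply]

theorem linearCombination_tor_one (f : Expo →₀ K) :
    Finsupp.linearCombination K (tor K p q lam mu) f (Finsupp.single 0 1) = f := by
  induction f using Finsupp.induction_linear with
  | zero => simp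
  | add a b ha hb => simp [ha, hb]
  | single h c => simp [tor_single, coc_zero_right]

/-- The quantum torus is a domain: `Expo` has the unique sums property, so two nonzero elements
have a pair of monomials whose product cannot cancel. -/
theorem torus_domain (hp : p ≠ 0) (hq : q ≠ 0) (hlam : lam ≠ 0) (hmu : mu ≠ 0)
    {a b : Module.End K (Expo →₀ K)} (ha : a ∈ torus hp hq hlam hmu)
    (hb : b ∈ torus hp hq hlam hmu) (hab : a * b = 0) : a = 0 ∨ b = 0 := by
  obtain ⟨f, rfl⟩ := ha
  obtain ⟨g, rfl⟩ := hb
  by_contra! hne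
  have hf : f.support.Nonempty := by
    rw [Finsupp.support_nonempty_iff]; rintro rfl; exact hne.1 (map_zero _)
  have hg : g.support.Nonempty := by
    rw [Finsupp.support_nonempty_iff]; rintro rfl; exact hne.2 (map_zero _)
  obtain ⟨u, hu, v, hv, huv⟩ := UniqueSums.uniqueAdd_of_nonempty hf hg
  have h := congrArg (fun T : Module.End K (Expo →₀ K) => T (Finsupp.single 0 1) (u + v)) hab
  simp only [Module.End.mul_apply, linearCombination_tor_one, linearCombination_tor_apply] at h
  rw [Finset.sum_eq_single u] at h
  · rw [add_sub_cancel_left] at h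
    exact mul_ne_zero (Finsupp.mem_support_iff.1 hu)
      (mul_ne_zero (coc_ne_zero hp hq hlam hmu _ _) (Finsupp.mem_support_iff.1 hv)) h
  · intro w hw hwu
    have : g (u + v - w) = 0 := by
      by_contra hne
      exact hwu (huv hw (Finsupp.mem_support_iff.2 hne) (by abel)).1
    rw [this, mul_zero, mul_zero]
  · exact fun h' => absurd hu h'

theorem tor_ne_zero (g : Expo) : tor K p q lam mu g ≠ 0 := by
  intro h
  have := congrArg (fun T : Module.End K (Expo →₀ K) => T (Finsupp.single 0 1)) h
  simp [tor_single, coc_zero_right] at this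

/-- `a` is a nonzero multiple of the monomial of exponent `g`. -/
def IsMon (p q lam mu : K) (g : Expo) (a : Module.End K (Expo →₀ K)) : Prop :=
  ∃ c : K, c ≠ 0 ∧ a = c • tor K p q lam mu g

theorem IsMon.mul (hp : p ≠ 0) (hq : q ≠ 0) (hlam : lam ≠ 0) (hmu : mu ≠ 0) {g h : Expo}
    {a b : Module.End K (Expo →₀ K)} (ha : IsMon p q lam mu g a) (hb : IsMon p q lam mu h b) :
    IsMon p q lam mu (g + h) (a * b) := by
  obtain ⟨c, hc, rfl⟩ := ha
  obtain ⟨d, hd, rfl⟩ := hb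
  refine ⟨c * d * coc K p q lam mu g h, mul_ne_zero (mul_ne_zero hc hd)
    (coc_ne_zero hp hq hlam hmu _ _), ?_⟩
  rw [smul_mul_assoc, mul_smul_comm, tor_mul hp hq hlam hmu, smul_smul, smul_smul, mul_assoc]

theorem IsMon.pow (hp : p ≠ 0) (hq : q ≠ 0) (hlam : lam ≠ 0) (hmu : mu ≠ 0) {g : Expo}
    {a : Module.End K (Expo →₀ K)} (ha : IsMon p q lam mu g a) (n : ℕ) :
    IsMon p q lam mu (n • g) (a ^ n) := by
  induction n with
  | zero => exact ⟨1, one_ne_zero, by simp [tor_zero]⟩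
  | succ n ih => rw [pow_succ, succ_nsmul]; exact ih.mul hp hq hlam hmu ha

theorem isMon_tor (g : Expo) : IsMon p q lam mu g (tor K p q lam mu g) :=
  ⟨1, one_ne_zero, (one_smul _ _).symm⟩

end Model

/-! ### Homomorphisms to the quantum torus -/

section Presentation
variable {K p q lam mu}

theorem weylSystem : WeylSystem_s3 p q lam mu (wx K p q lam mu) (wy K p q lam mu)
    (ws K p q lam mu) (wt K p q lam mu) (wz K p q lam mu) where
  weyl := by
    simpa [wx, wy] using
      RingQuot.mkAlgHom_rel K (ExtWeylRel.weyl (p := p) (q := q) (lam := lam) (mu := mu))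
  st := by
    simpa [ws, wt] using
      RingQuot.mkAlgHom_rel K (ExtWeylRel.st (p := p) (q := q) (lam := lam) (mu := mu))
  sx := by
    simpa [ws, wx] using
      RingQuot.mkAlgHom_rel K (ExtWeylRel.sx (p := p) (q := q) (lam := lam) (mu := mu))
  sy := by
    simpa [ws, wy] using
      RingQuot.mkAlgHom_rel K (ExtWeylRel.sy (p := p) (q := q) (lam := lam) (mu := mu))
  tx := by
    simpa [wt, wx] using
      RingQuot.mkAlgHom_rel K (ExtWeylRel.tx (p := p) (q := q) (lam := lam) (mu := mu))
  ty := by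
    simpa [wt, wy] using
      RingQuot.mkAlgHom_rel K (ExtWeylRel.ty (p := p) (q := q) (lam := lam) (mu := mu))
  hz := rfl
  gen := by
    have h : Set.range (RingQuot.mkAlgHom K (ExtWeylRel K p q lam mu) ∘ ι K) ⊆
        {wx K p q lam mu, wy K p q lam mu, ws K p q lam mu, wt K p q lam mu} := by
      rintro _ ⟨i, rfl⟩
      fin_cases i <;> simp [wx, wy, ws, wt]
    rw [eq_top_iff]
    refine le_trans ?_ (Algebra.adjoin_mono h)
    rw [Set.range_comp, ← AlgHom.map_adjoin, FreeAlgebra.adjoin_range_ι, Algebra.map_top,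
      (AlgHom.range_eq_top _).2 (RingQuot.mkAlgHom_surjective K _)]

/-- The image of `y` under `toTorus`: `(p - 1)⁻¹ (α z - 1) X⁻¹`, expanded using
`z X⁻¹ = p X⁻¹ z`. -/
def yImage (p q lam mu α : K) : Module.End K (Expo →₀ K) :=
  ((p - 1)⁻¹ * (p * α)) • tor K p q lam mu (-1, 1, 0, 0) +
    (-(p - 1)⁻¹) • tor K p q lam mu (-1, 0, 0, 0)

/-- The homomorphism from the extended quantized Weyl algebra to the quantum torus with `x ↦ X`,
`z ↦ α z`, `s ↦ β s`, `t ↦ γ t`. Setting one of the scalars to `0` kills the corresponding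
normal element. -/
def toTorus (hp : p ≠ 0) (hq : q ≠ 0) (hlam : lam ≠ 0) (hmu : mu ≠ 0) (hp1 : p ≠ 1)
    (α β γ : K) : ExtWeyl K p q lam mu →ₐ[K] Module.End K (Expo →₀ K) :=
  RingQuot.liftAlgHom K ⟨FreeAlgebra.lift K ![tor K p q lam mu (1, 0, 0, 0),
    yImage p q lam mu α, β • tor K p q lam mu (0, 0, 1, 0),
    γ • tor K p q lam mu (0, 0, 0, 1)], by
    have hp1' : p - 1 ≠ 0 := sub_ne_zero.2 hp1
    have h0 : tor K p q lam mu (0, 0, 0, 0) = 1 := tor_zero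
    intro a b h
    induction h <;>
      simp only [map_mul, map_sub, map_smul, map_one, FreeAlgebra.lift_ι_apply, Matrix.cons_val]
    case weyl =>
      refine sub_eq_iff_eq_add.2 ?_
      simp only [yImage, mul_add, add_mul, tor_mul hp hq hlam hmu, coc, smul_add, smul_smul,
        mul_smul_comm, smul_mul_assoc]
      simp only [Prod.mk_add_mk]
      norm_num [h0]
      match_scalars <;> field_simp
      ring
    all_goals
      simp [yImage, mul_add, add_mul, tor_mul hp hq hlam hmu, coc, smul_add, smul_smul]
    all_goals match_scalars <;> field_simp⟩

variable (hp : p ≠ 0) (hq : q ≠ 0) (hlam : lam ≠ 0) (hmu : mu ≠ 0) (hp1 : p ≠ 1) (α β γ : K)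

theorem toTorus_x : toTorus hp hq hlam hmu hp1 α β γ (wx K p q lam mu) =
    tor K p q lam mu (1, 0, 0, 0) := by simp [toTorus, wx]

theorem toTorus_y : toTorus hp hq hlam hmu hp1 α β γ (wy K p q lam mu) =
    yImage p q lam mu α := by simp [toTorus, wy]

theorem toTorus_s : toTorus hp hq hlam hmu hp1 α β γ (ws K p q lam mu) =
    β • tor K p q lam mu (0, 0, 1, 0) := by simp [toTorus, ws]

theorem toTorus_t : toTorus hp hq hlam hmu hp1 α β γ (wt K p q lam mu) =
    γ • tor K p q lam mu (0, 0, 0, 1) := by simp [toTorus, wt]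

theorem toTorus_z : toTorus hp hq hlam hmu hp1 α β γ (wz K p q lam mu) =
    α • tor K p q lam mu (0, 1, 0, 0) := by
  have hp1' : p - 1 ≠ 0 := sub_ne_zero.2 hp1
  have h0 : tor K p q lam mu (0, 0, 0, 0) = 1 := tor_zero
  have h : wz K p q lam mu = (p - 1) • (wy K p q lam mu * wx K p q lam mu) + 1 := by
    rw [weylSystem.yx_eq hp1, smul_inv_smul₀ hp1', sub_add_cancel]
  rw [h, map_add, map_smul, map_mul, map_one, toTorus_x, toTorus_y]
  simp only [yImage, add_mul, tor_mul hp hq hlam hmu, coc, smul_add, smul_smul, smul_mul_assoc]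
  norm_num [h0]
  match_scalars <;> field_simp
  ring

theorem toTorus_mem (a : ExtWeyl K p q lam mu) :
    toTorus hp hq hlam hmu hp1 α β γ a ∈ torus hp hq hlam hmu := by
  refine weylSystem.mem_of_gens ((torus hp hq hlam hmu).comap (toTorus hp hq hlam hmu hp1 α β γ))
    ?_ ?_ ?_ ?_ a <;> rw [Subalgebra.mem_comap]
  · rw [toTorus_x]; exact tor_mem_torus hp hq hlam hmu _
  · rw [toTorus_y]
    exact Subalgebra.add_mem _ (Subalgebra.smul_mem _ (tor_mem_torus hp hq hlam hmu _) _)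
      (Subalgebra.smul_mem _ (tor_mem_torus hp hq hlam hmu _) _)
  · rw [toTorus_s]; exact Subalgebra.smul_mem _ (tor_mem_torus hp hq hlam hmu _) _
  · rw [toTorus_t]; exact Subalgebra.smul_mem _ (tor_mem_torus hp hq hlam hmu _) _

theorem ker_toTorus_isCompletelyPrime :
    (TwoSidedIdeal.ker (toTorus hp hq hlam hmu hp1 α β γ)).IsCompletelyPrime := by
  refine ⟨fun h => ?_, fun a b hab => ?_⟩
  · have h1 := (TwoSidedIdeal.mem_ker _).1 ((TwoSidedIdeal.one_mem_iff _).2 h)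
    rw [map_one, ← tor_zero (K := K) (p := p) (q := q) (lam := lam) (mu := mu)] at h1
    exact tor_ne_zero 0 h1
  · rw [TwoSidedIdeal.mem_ker, map_mul] at hab
    rw [TwoSidedIdeal.mem_ker, TwoSidedIdeal.mem_ker]
    exact torus_domain hp hq hlam hmu (toTorus_mem hp hq hlam hmu hp1 α β γ a)
      (toTorus_mem hp hq hlam hmu hp1 α β γ b) hab

/-- The embedding into the quantum torus. A nonzero kernel would be a nonzero prime, hence contain
`z`, `s` or `t`, none of which is mapped to `0`. -/
theorem ker_toTorus_one (hpru : ∀ n : ℕ, 0 < n → p ^ n ≠ 1) (hqru : ∀ n : ℕ, 0 < n → q ^ n ≠ 1) :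
    TwoSidedIdeal.ker (toTorus hp hq hlam hmu hp1 1 1 1) = ⊥ := by
  by_contra hne
  have h := weylSystem.mem_of_ne_bot hp hq hlam hmu hpru hqru
    (ker_toTorus_isCompletelyPrime hp hq hlam hmu hp1 1 1 1).isPrimeIdeal hne
  simp only [TwoSidedIdeal.mem_ker, toTorus_z, toTorus_s, toTorus_t, one_smul, tor_ne_zero,
    or_self] at h

/-- If `f` is injective, `f'` kills `u`, and modulo the ideal `(u)` every generator is congruent
to an element on which `f` and `f'` agree, then the kernel of `f'` is `(u)`. -/
theorem ker_eq_span {A : Type*} [Ring A] [Algebra K A] {x y s t z u : A}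
    (W : WeylSystem_s3 p q lam mu x y s t z) (f f' : A →ₐ[K] Module.End K (Expo →₀ K))
    (hf : TwoSidedIdeal.ker f = ⊥) (hu : f' u = 0)
    (hgen : ∀ a ∈ ({x, y, s, t} : Set A), ∃ c, f c = f' c ∧ a - c ∈ TwoSidedIdeal.span {u}) :
    TwoSidedIdeal.ker f' = TwoSidedIdeal.span {u} := by
  have hle : TwoSidedIdeal.span {u} ≤ TwoSidedIdeal.ker f' := by
    rw [TwoSidedIdeal.span_le]
    rintro _ rfl
    exact (TwoSidedIdeal.mem_ker _).2 hu
  refine le_antisymm (fun a ha => ?_) hle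
  let B : Subalgebra K A :=
    { carrier := {a | ∃ c, f c = f' c ∧ a - c ∈ TwoSidedIdeal.span {u}}
      mul_mem' := by
        rintro a b ⟨c, hc, hac⟩ ⟨d, hd, hbd⟩
        refine ⟨c * d, by rw [map_mul, map_mul, hc, hd], ?_⟩
        rw [show a * b - c * d = (a - c) * b + c * (b - d) by noncomm_ring]
        exact TwoSidedIdeal.add_mem _ (TwoSidedIdeal.mul_mem_right _ _ _ hac)
          (TwoSidedIdeal.mul_mem_left _ _ _ hbd)
      add_mem' := by
        rintro a b ⟨c, hc, hac⟩ ⟨d, hd, hbd⟩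
        refine ⟨c + d, by rw [map_add, map_add, hc, hd], ?_⟩
        rw [add_sub_add_comm]
        exact TwoSidedIdeal.add_mem _ hac hbd
      algebraMap_mem' := fun r => ⟨algebraMap K A r, by simp, by
        rw [sub_self]; exact TwoSidedIdeal.zero_mem _⟩ }
  obtain ⟨c, hc, hac⟩ := W.mem_of_gens B (hgen x (by simp)) (hgen y (by simp)) (hgen s (by simp))
    (hgen t (by simp)) a
  have h1 : f c = 0 := by
    have h := (TwoSidedIdeal.ker f').sub_mem ha (hle hac)
    rw [sub_sub_cancel, TwoSidedIdeal.mem_ker] at h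
    rw [hc, h]
  have h2 : c ∈ TwoSidedIdeal.ker f := (TwoSidedIdeal.mem_ker _).2 h1
  rw [hf, TwoSidedIdeal.mem_bot] at h2
  simpa [h2] using hac

theorem ker_toTorus_s (hpru : ∀ n : ℕ, 0 < n → p ^ n ≠ 1) (hqru : ∀ n : ℕ, 0 < n → q ^ n ≠ 1) :
    TwoSidedIdeal.ker (toTorus hp hq hlam hmu hp1 1 0 1) =
      TwoSidedIdeal.span {ws K p q lam mu} := by
  refine ker_eq_span weylSystem (toTorus hp hq hlam hmu hp1 1 1 1)
    (toTorus hp hq hlam hmu hp1 1 0 1)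
    (ker_toTorus_one hp hq hlam hmu hp1 hpru hqru) (by rw [toTorus_s, zero_smul]) ?_
  rintro _ (rfl | rfl | rfl | rfl)
  · exact ⟨_, by rw [toTorus_x, toTorus_x], by rw [sub_self]; exact TwoSidedIdeal.zero_mem _⟩
  · exact ⟨_, by rw [toTorus_y, toTorus_y], by rw [sub_self]; exact TwoSidedIdeal.zero_mem _⟩
  · exact ⟨0, by simp, by rw [sub_zero]; exact TwoSidedIdeal.subset_span rfl⟩
  · exact ⟨_, by rw [toTorus_t, toTorus_t], by rw [sub_self]; exact TwoSidedIdeal.zero_mem _⟩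

theorem ker_toTorus_t (hpru : ∀ n : ℕ, 0 < n → p ^ n ≠ 1) (hqru : ∀ n : ℕ, 0 < n → q ^ n ≠ 1) :
    TwoSidedIdeal.ker (toTorus hp hq hlam hmu hp1 1 1 0) =
      TwoSidedIdeal.span {wt K p q lam mu} := by
  refine ker_eq_span weylSystem (toTorus hp hq hlam hmu hp1 1 1 1)
    (toTorus hp hq hlam hmu hp1 1 1 0)
    (ker_toTorus_one hp hq hlam hmu hp1 hpru hqru) (by rw [toTorus_t, zero_smul]) ?_
  rintro _ (rfl | rfl | rfl | rfl)
  · exact ⟨_, by rw [toTorus_x, toTorus_x], by rw [sub_self]; exact TwoSidedIdeal.zero_mem _⟩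
  · exact ⟨_, by rw [toTorus_y, toTorus_y], by rw [sub_self]; exact TwoSidedIdeal.zero_mem _⟩
  · exact ⟨_, by rw [toTorus_s, toTorus_s], by rw [sub_self]; exact TwoSidedIdeal.zero_mem _⟩
  · exact ⟨0, by simp, by rw [sub_zero]; exact TwoSidedIdeal.subset_span rfl⟩

/-- With `z ↦ 0`, normal monomials free of `z` are mapped to nonzero multiples of distinct
monomials of the torus. -/
theorem isMon_toTorus_mono (n : ℤ) (j k : ℕ) : IsMon p q lam mu (n, 0, j, k)
    (toTorus hp hq hlam hmu hp1 0 1 1 (mono (wx K p q lam mu) (wy K p q lam mu) (ws K p q lam mu)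
      (wt K p q lam mu) (wz K p q lam mu) (n, 0, j, k))) := by
  have hs : IsMon p q lam mu (0, 0, 1, 0)
      (toTorus hp hq hlam hmu hp1 0 1 1 (ws K p q lam mu)) := by
    rw [toTorus_s, one_smul]; exact isMon_tor _
  have ht : IsMon p q lam mu (0, 0, 0, 1)
      (toTorus hp hq hlam hmu hp1 0 1 1 (wt K p q lam mu)) := by
    rw [toTorus_t, one_smul]; exact isMon_tor _
  have hX : IsMon p q lam mu (n, 0, 0, 0)
      (toTorus hp hq hlam hmu hp1 0 1 1 (Xpow (wx K p q lam mu) (wy K p q lam mu) n)) := by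
    cases n with
    | ofNat n =>
      have h : IsMon p q lam mu (1, 0, 0, 0)
          (toTorus hp hq hlam hmu hp1 0 1 1 (wx K p q lam mu)) := by
        rw [toTorus_x]; exact isMon_tor _
      simpa [Xpow] using h.pow hp hq hlam hmu n
    | negSucc n =>
      have h : IsMon p q lam mu (-1, 0, 0, 0)
          (toTorus hp hq hlam hmu hp1 0 1 1 (wy K p q lam mu)) := by
        rw [toTorus_y]
        exact ⟨-(p - 1)⁻¹, neg_ne_zero.2 (inv_ne_zero (sub_ne_zero.2 hp1)), by simp [yImage]⟩
      have h1 := h.pow hp hq hlam hmu (n + 1)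
      have e : (n + 1) • ((-1, 0, 0, 0) : Expo) = (Int.negSucc n, 0, 0, 0) := by
        simp [Int.negSucc_eq]
      rw [e] at h1
      simpa [Xpow] using h1
  have h := (hX.mul hp hq hlam hmu (hs.pow hp hq hlam hmu j)).mul hp hq hlam hmu
    (ht.pow hp hq hlam hmu k)
  simpa [mono] using h

theorem ker_toTorus_z : TwoSidedIdeal.ker (toTorus hp hq hlam hmu hp1 0 1 1) =
    TwoSidedIdeal.span {wz K p q lam mu} := by
  refine le_antisymm (fun a ha => ?_) ?_
  swap
  · rw [TwoSidedIdeal.span_le]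
    rintro _ rfl
    refine (TwoSidedIdeal.mem_ker _).2 ?_
    rw [toTorus_z, zero_smul]
  have hspan : a ∈ Submodule.span K (Set.range (mono (wx K p q lam mu) (wy K p q lam mu)
      (ws K p q lam mu) (wt K p q lam mu) (wz K p q lam mu))) := by
    rw [weylSystem.span_mono hp hp1 hq hlam hmu]; trivial
  obtain ⟨c, rfl⟩ := Finsupp.mem_span_range_iff_exists_finsupp.1 hspan
  rw [TwoSidedIdeal.mem_ker, Finsupp.sum, map_sum] at ha
  have hz : ∀ n i j k, toTorus hp hq hlam hmu hp1 0 1 1 (mono (wx K p q lam mu) (wy K p q lam mu)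
      (ws K p q lam mu) (wt K p q lam mu) (wz K p q lam mu) (n, i + 1, j, k)) = 0 := by
    intro n i j k
    simp only [mono, map_mul, map_pow, toTorus_z, zero_smul]
    simp
  -- Monomials free of `z` cannot occur: their images are the only ones with the given exponent.
  have hc : ∀ n j k, c (n, 0, j, k) = 0 := by
    intro n j k
    by_contra hne
    have h := congrArg (fun T : Module.End K (Expo →₀ K) => T (Finsupp.single 0 1) (n, 0, j, k)) ha
    simp only [LinearMap.sum_apply, Finsupp.finsetSum_apply] at h
    rw [Finset.sum_eq_single (n, 0, j, k)] at h
    · obtain ⟨d, hd, e⟩ := isMon_toTorus_mono hp hq hlam hmu hp1 n j k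
      rw [map_smul, e] at h
      simp [tor_single, coc_zero_right, hd, hne] at h
    · rintro ⟨n', i, j', k'⟩ _ hne
      rcases i with _ | i
      · obtain ⟨d, hd, e⟩ := isMon_toTorus_mono hp hq hlam hmu hp1 n' j' k'
        rw [map_smul, e]
        have : ¬((n', 0, (j' : ℤ), (k' : ℤ)) : Expo) = (n, 0, (j : ℤ), (k : ℤ)) := by
          simpa using hne
        simp only [LinearMap.smul_apply, tor_single, coc_zero_right, Finsupp.smul_apply, add_zero]
        rw [Finsupp.single_apply, if_neg this, smul_zero, smul_zero]
      · rw [map_smul, hz]; simp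
    · exact fun h => absurd (Finsupp.mem_support_iff.2 hne) h
  refine sum_mem fun m hm => TwoSidedIdeal.smul_mem' _ _ ?_
  obtain ⟨n, i, j, k⟩ := m
  rcases i with _ | i
  · exact absurd (hc n j k) (Finsupp.mem_support_iff.1 hm)
  · simp only [mono, pow_succ]
    exact TwoSidedIdeal.mul_mem_right _ _ _ (TwoSidedIdeal.mul_mem_right _ _ _
      (TwoSidedIdeal.mul_mem_left _ _ _ (TwoSidedIdeal.mul_mem_left _ _ _
        (TwoSidedIdeal.subset_span rfl))))

end Presentation


/-- If neither `p` nor `q` is a root of unity, then the height-one prime ideals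
of `A_p(λ, μ, K_q[s,t])` are exactly the three two-sided ideals `(z)`, `(s)` and `(t)`, and
each of these is a completely prime ideal. -/
theorem extWeyl_height_one_primes
    (hp : p ≠ 0) (hq : q ≠ 0) (hlam : lam ≠ 0) (hmu : mu ≠ 0)
    (hpru : ∀ n : ℕ, 0 < n → p ^ n ≠ 1) (hqru : ∀ n : ℕ, 0 < n → q ^ n ≠ 1) :
    {P : TwoSidedIdeal (ExtWeyl K p q lam mu) | P.HasHeightOne} =
      {TwoSidedIdeal.span {wz K p q lam mu}, TwoSidedIdeal.span {ws K p q lam mu},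
        TwoSidedIdeal.span {wt K p q lam mu}} ∧
    (TwoSidedIdeal.span {wz K p q lam mu}).IsCompletelyPrime ∧
    (TwoSidedIdeal.span {ws K p q lam mu}).IsCompletelyPrime ∧
    (TwoSidedIdeal.span {wt K p q lam mu}).IsCompletelyPrime := by
  have hp1 : p ≠ 1 := by simpa using hpru 1 one_pos
  have cz := ker_toTorus_isCompletelyPrime hp hq hlam hmu hp1 0 1 1
  have cs := ker_toTorus_isCompletelyPrime hp hq hlam hmu hp1 1 0 1
  have ct := ker_toTorus_isCompletelyPrime hp hq hlam hmu hp1 1 1 0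
  have c0 := ker_toTorus_isCompletelyPrime hp hq hlam hmu hp1 1 1 1
  have kz := ker_toTorus_z hp hq hlam hmu hp1
  have ks := ker_toTorus_s hp hq hlam hmu hp1 hpru hqru
  have kt := ker_toTorus_t hp hq hlam hmu hp1 hpru hqru
  rw [kz] at cz
  rw [ks] at cs
  rw [kt] at ct
  rw [ker_toTorus_one hp hq hlam hmu hp1 hpru hqru] at c0
  have key : ∀ P : TwoSidedIdeal (ExtWeyl K p q lam mu), P.IsPrimeIdeal → P ≠ ⊥ →
      wz K p q lam mu ∈ P ∨ ws K p q lam mu ∈ P ∨ wt K p q lam mu ∈ P := fun P hP hne =>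
    weylSystem.mem_of_ne_bot hp hq hlam hmu hpru hqru hP hne
  have span_le : ∀ {P : TwoSidedIdeal (ExtWeyl K p q lam mu)} {u}, u ∈ P →
      TwoSidedIdeal.span {u} ≤ P := fun h => by
    rw [TwoSidedIdeal.span_le]; rintro _ rfl; exact h
  have zs : wz K p q lam mu ∉ TwoSidedIdeal.span {ws K p q lam mu} := by
    rw [← ks, TwoSidedIdeal.mem_ker, toTorus_z, one_smul]; exact tor_ne_zero _
  have zt : wz K p q lam mu ∉ TwoSidedIdeal.span {wt K p q lam mu} := by
    rw [← kt, TwoSidedIdeal.mem_ker, toTorus_z, one_smul]; exact tor_ne_zero _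
  have sz : ws K p q lam mu ∉ TwoSidedIdeal.span {wz K p q lam mu} := by
    rw [← kz, TwoSidedIdeal.mem_ker, toTorus_s, one_smul]; exact tor_ne_zero _
  have st : ws K p q lam mu ∉ TwoSidedIdeal.span {wt K p q lam mu} := by
    rw [← kt, TwoSidedIdeal.mem_ker, toTorus_s, one_smul]; exact tor_ne_zero _
  have tz : wt K p q lam mu ∉ TwoSidedIdeal.span {wz K p q lam mu} := by
    rw [← kz, TwoSidedIdeal.mem_ker, toTorus_t, one_smul]; exact tor_ne_zero _
  have ts : wt K p q lam mu ∉ TwoSidedIdeal.span {ws K p q lam mu} := by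
    rw [← ks, TwoSidedIdeal.mem_ker, toTorus_t, one_smul]; exact tor_ne_zero _
  have bot_lt : ∀ {u : ExtWeyl K p q lam mu} {I : TwoSidedIdeal (ExtWeyl K p q lam mu)},
      u ∉ I → ⊥ < TwoSidedIdeal.span {u} := fun {u I} h => by
    refine bot_lt_iff_ne_bot.2 fun h0 => h ?_
    have : u ∈ TwoSidedIdeal.span {u} := TwoSidedIdeal.subset_span rfl
    rw [h0, TwoSidedIdeal.mem_bot] at this
    rw [this]; exact I.zero_mem
  -- A completely prime `(u)` has height one as soon as any nonzero prime inside it contains `u`.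
  have height : ∀ u : ExtWeyl K p q lam mu, (TwoSidedIdeal.span {u}).IsCompletelyPrime →
      ⊥ < TwoSidedIdeal.span {u} →
      (∀ P : TwoSidedIdeal (ExtWeyl K p q lam mu), P.IsPrimeIdeal → P ≠ ⊥ →
        P ≤ TwoSidedIdeal.span {u} → u ∈ P) → (TwoSidedIdeal.span {u}).HasHeightOne := by
    intro u hu hlt h
    refine ⟨hu.isPrimeIdeal, ⟨⊥, c0.isPrimeIdeal, hlt⟩, ?_⟩
    rintro ⟨P₀, P₁, _, h1, h01, h1u⟩
    exact h1u.not_ge (span_le (h P₁ h1 (ne_bot_of_gt h01) h1u.le))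
  refine ⟨Set.ext fun P => ⟨?_, ?_⟩, cz, cs, ct⟩
  · rintro ⟨hP, ⟨P₀, _, hlt⟩, hno⟩
    have hmin : ∀ u : ExtWeyl K p q lam mu, (TwoSidedIdeal.span {u}).IsCompletelyPrime →
        ⊥ < TwoSidedIdeal.span {u} → u ∈ P → P = TwoSidedIdeal.span {u} := by
      intro u hu h0 huP
      by_contra hne
      exact hno ⟨⊥, _, c0.isPrimeIdeal, hu.isPrimeIdeal, h0,
        lt_of_le_of_ne (span_le huP) (Ne.symm hne)⟩
    rcases key P hP (ne_bot_of_gt hlt) with h | h | h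
    · exact Or.inl (hmin _ cz (bot_lt zs) h)
    · exact Or.inr (Or.inl (hmin _ cs (bot_lt sz) h))
    · exact Or.inr (Or.inr (hmin _ ct (bot_lt tz) h))
  · rintro (rfl | rfl | rfl)
    · refine height _ cz (bot_lt zs) fun P hP hne hle => ?_
      rcases key P hP hne with h | h | h
      exacts [h, absurd (hle h) sz, absurd (hle h) tz]
    · refine height _ cs (bot_lt sz) fun P hP hne hle => ?_
      rcases key P hP hne with h | h | h
      exacts [absurd (hle h) zs, h, absurd (hle h) ts]
    · refine height _ ct (bot_lt tz) fun P hP hne hle => ?_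
      rcases key P hP hne with h | h | h
      exacts [absurd (hle h) zt, absurd (hle h) st, h]
end
end

section
/- If neither p nor q is a root of unity, then the center of A_p(λ, μ, K_q[s,t]) consists exactly of the scalars K. -/
/-!
Write `z = xy - yx`. It is a normal element: `xz = p zx`, `zy = p yz`, and `z` commutes with `s`
and `t`. For `d : ℤ` let `w d` be `x ^ d` if `d ≥ 0` and `y ^ (-d)` if `d ≤ 0`. The monomials
`w d * z ^ k * s ^ b * t ^ c` form a basis of the algebra, and in this basis the commutation rules
with `z`, `s` and `t` are diagonal.

*Basis.* On the vector space `V` with basis `ℤ × ℕ × ℕ × ℕ` the formulas of left multiplication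
define a representation `extRep` (`extRep_rel` checks the relations). The linear map
`monMap : V → A` sending a basis vector to its monomial is `A`-linear (`monMap_extRep`), so
`a = monMap (a • e₀)` for every `a`; this gives surjectivity. Injectivity holds because the
monomial with index `m` sends `e₀` to `e_m` (`extRep_mon`).

*Center.* Let `a` be central with coordinates `v`. Commuting with `z` gives
`p ^ (-d) * v (d, k, b, c) = v (d, k, b, c)`, so only `d = 0` survives. Commuting with `s` and `t`
then gives `q ^ (-c) = 1` and `q ^ (-b) = 1` on the support, so `b = c = 0`. Finally
`z ^ k * x = p ^ (-k) • x * z ^ k` forces `k = 0`, and `a` is a scalar.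
-/

noncomputable section

open FreeAlgebra

/-! ### The weighted shift operators -/

/-- Indices `(d, k, b, c)` of the monomials `w d * z ^ k * s ^ b * t ^ c`. -/
abbrev MonIdx : Type := ℤ × ℕ × ℕ × ℕ

/-- The operator sending the basis vector `e_m` to `w m • e_(f m)`. -/
def shiftOp {K : Type*} [Field K] (f : MonIdx → MonIdx) (w : MonIdx → K) :
    (MonIdx →₀ K) →ₗ[K] (MonIdx →₀ K) :=
  Finsupp.linearCombination K (fun m => Finsupp.single (f m) (w m))

lemma shiftOp_single {K : Type*} [Field K] (f : MonIdx → MonIdx) (w : MonIdx → K)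
    (m : MonIdx) (c : K) :
    shiftOp f w (Finsupp.single m c) = Finsupp.single (f m) (c * w m) := by
  simp [shiftOp]

lemma shiftOp_apply {K : Type*} [Field K] {f : MonIdx → MonIdx} (hf : Function.Injective f)
    (w : MonIdx → K) (v : MonIdx →₀ K) (m : MonIdx) :
    shiftOp f w v (f m) = w m * v m := by
  induction v using Finsupp.induction_linear with
  | zero => simp
  | add u v hu hv => simp [hu, hv, mul_add]
  | single n c =>
    rw [shiftOp_single]
    by_cases h : n = m
    · subst h; simp [mul_comm]
    · have h' : f n ≠ f m := fun e => h (hf e)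
      simp [h, h']

/-- Index shift for multiplication by `z`. -/
def upZ (m : MonIdx) : MonIdx := (m.1, m.2.1 + 1, m.2.2.1, m.2.2.2)
/-- Index shift for multiplication by `s`. -/
def upS (m : MonIdx) : MonIdx := (m.1, m.2.1, m.2.2.1 + 1, m.2.2.2)
/-- Index shift for multiplication by `t`. -/
def upT (m : MonIdx) : MonIdx := (m.1, m.2.1, m.2.2.1, m.2.2.2 + 1)
/-- Index shift for multiplication by `x` on monomials of degree `d ≥ 0`. -/
def upX (m : MonIdx) : MonIdx := (m.1 + 1, m.2.1, m.2.2.1, m.2.2.2)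

lemma upZ_inj : Function.Injective upZ := by
  rintro ⟨a, b, c, d⟩ ⟨a', b', c', d'⟩ h; simpa [upZ] using h
lemma upS_inj : Function.Injective upS := by
  rintro ⟨a, b, c, d⟩ ⟨a', b', c', d'⟩ h; simpa [upS] using h
lemma upT_inj : Function.Injective upT := by
  rintro ⟨a, b, c, d⟩ ⟨a', b', c', d'⟩ h; simpa [upT] using h
lemma upX_inj : Function.Injective upX := by
  rintro ⟨a, b, c, d⟩ ⟨a', b', c', d'⟩ h; simpa [upX] using h

/-! ### The left regular representation in coordinates -/

section Coeffs

variable {K : Type*} [Field K]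

/-- Coefficient of `w (d + 1) * z` in `x * w d`. -/
def cxz (p : K) (d : ℤ) : K := if 0 ≤ d then 0 else p ^ (-d) * (p - 1)⁻¹
/-- Coefficient of `w (d + 1)` in `x * w d`. -/
def cx1 (p : K) (d : ℤ) : K := if 0 ≤ d then 1 else -(p - 1)⁻¹
/-- Coefficient of `w (d - 1) * z` in `y * w d`. -/
def cyz (p : K) (d : ℤ) : K := if d ≤ 0 then 0 else p ^ (1 - d) * (p - 1)⁻¹
/-- Coefficient of `w (d - 1)` in `y * w d`. -/
def cy1 (p : K) (d : ℤ) : K := if d ≤ 0 then 1 else -(p - 1)⁻¹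

/-- Left multiplication by `x` in coordinates. -/
def opX (p : K) : (MonIdx →₀ K) →ₗ[K] (MonIdx →₀ K) :=
  shiftOp (fun m => (m.1 + 1, m.2.1 + 1, m.2.2.1, m.2.2.2)) (fun m => cxz p m.1) +
  shiftOp (fun m => (m.1 + 1, m.2.1, m.2.2.1, m.2.2.2)) (fun m => cx1 p m.1)

/-- Left multiplication by `y` in coordinates. -/
def opY (p : K) : (MonIdx →₀ K) →ₗ[K] (MonIdx →₀ K) :=
  shiftOp (fun m => (m.1 - 1, m.2.1 + 1, m.2.2.1, m.2.2.2)) (fun m => cyz p m.1) +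
  shiftOp (fun m => (m.1 - 1, m.2.1, m.2.2.1, m.2.2.2)) (fun m => cy1 p m.1)

/-- Left multiplication by `s` in coordinates. -/
def opS (lam : K) : (MonIdx →₀ K) →ₗ[K] (MonIdx →₀ K) :=
  shiftOp upS (fun m => lam ^ m.1)

/-- Left multiplication by `t` in coordinates. -/
def opT (q mu : K) : (MonIdx →₀ K) →ₗ[K] (MonIdx →₀ K) :=
  shiftOp upT (fun m => mu ^ m.1 * q⁻¹ ^ m.2.2.1)

lemma opX_single (p : K) (d : ℤ) (k b c : ℕ) (r : K) :
    opX p (Finsupp.single (d, k, b, c) r) =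
      Finsupp.single (d + 1, k + 1, b, c) (r * cxz p d) +
      Finsupp.single (d + 1, k, b, c) (r * cx1 p d) := by
  simp [opX, shiftOp_single]

lemma opY_single (p : K) (d : ℤ) (k b c : ℕ) (r : K) :
    opY p (Finsupp.single (d, k, b, c) r) =
      Finsupp.single (d - 1, k + 1, b, c) (r * cyz p d) +
      Finsupp.single (d - 1, k, b, c) (r * cy1 p d) := by
  simp [opY, shiftOp_single]

lemma opS_single (lam : K) (d : ℤ) (k b c : ℕ) (r : K) :
    opS lam (Finsupp.single (d, k, b, c) r) = Finsupp.single (d, k, b + 1, c) (r * lam ^ d) := by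
  simp [opS, shiftOp_single, upS]

lemma opT_single (q mu : K) (d : ℤ) (k b c : ℕ) (r : K) :
    opT q mu (Finsupp.single (d, k, b, c) r) =
      Finsupp.single (d, k, b, c + 1) (r * (mu ^ d * q⁻¹ ^ b)) := by
  simp [opT, shiftOp_single, upT]

/-- The coordinate form of `xy = (p z - 1) / (p - 1)` on degree `d`. -/
lemma coeff_xy (p : K) (d : ℤ) :
    cyz p d * cxz p (d - 1) = 0 ∧
    cyz p d * cx1 p (d - 1) + cy1 p d * cxz p (d - 1) = p ^ (1 - d) * (p - 1)⁻¹ ∧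
    cy1 p d * cx1 p (d - 1) = -(p - 1)⁻¹ := by
  by_cases h : d ≤ 0
  · have h' : ¬ (0 ≤ d - 1) := by omega
    simp only [cyz, cxz, cy1, cx1, h, h', if_true, if_false]; simp
  · have h' : 0 ≤ d - 1 := by omega
    simp only [cyz, cxz, cy1, cx1, h, h', if_true, if_false]; simp

/-- The coordinate form of `yx = (z - 1) / (p - 1)` on degree `d`. -/
lemma coeff_yx (p : K) (d : ℤ) :
    cxz p d * cyz p (d + 1) = 0 ∧
    cxz p d * cy1 p (d + 1) + cx1 p d * cyz p (d + 1) = p ^ (-d) * (p - 1)⁻¹ ∧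
    cx1 p d * cy1 p (d + 1) = -(p - 1)⁻¹ := by
  by_cases h : 0 ≤ d
  · have h' : ¬ (d + 1 ≤ 0) := by omega
    simp [cyz, cxz, cy1, cx1, h, h']
  · have h' : d + 1 ≤ 0 := by omega
    simp [cyz, cxz, cy1, cx1, h, h']

lemma opX_opY_single (p : K) (d : ℤ) (k b c : ℕ) (r : K) :
    opX p (opY p (Finsupp.single (d, k, b, c) r)) =
      Finsupp.single (d, k + 1, b, c) (r * (p ^ (1 - d) * (p - 1)⁻¹)) +
      Finsupp.single (d, k, b, c) (r * (-(p - 1)⁻¹)) := by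
  obtain ⟨h1, h2, h3⟩ := coeff_xy p d
  rw [opY_single, map_add, opX_single, opX_single, mul_assoc, mul_assoc, mul_assoc, mul_assoc,
    h1, h3, ← h2]
  simp [mul_add, Finsupp.single_add, add_assoc]

lemma opY_opX_single (p : K) (d : ℤ) (k b c : ℕ) (r : K) :
    opY p (opX p (Finsupp.single (d, k, b, c) r)) =
      Finsupp.single (d, k + 1, b, c) (r * (p ^ (-d) * (p - 1)⁻¹)) +
      Finsupp.single (d, k, b, c) (r * (-(p - 1)⁻¹)) := by
  obtain ⟨h1, h2, h3⟩ := coeff_yx p d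
  rw [opX_single, map_add, opY_single, opY_single, mul_assoc, mul_assoc, mul_assoc, mul_assoc,
    h1, h3, ← h2]
  simp [mul_add, Finsupp.single_add, add_assoc]

end Coeffs

section Rep

variable (K : Type*) [Field K] (p q lam mu : K)

/-- The images of the four generators in `End V`. -/
def opGen : Fin 4 → Module.End K (MonIdx →₀ K) := ![opX p, opY p, opS lam, opT q mu]

variable {K p q lam mu}

lemma extRep_rel (hp : p ≠ 0) (hp1 : p ≠ 1) (hq : q ≠ 0) (hlam : lam ≠ 0) (hmu : mu ≠ 0)
    ⦃a b : FreeAlgebra K (Fin 4)⦄ (h : ExtWeylRel K p q lam mu a b) :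
    FreeAlgebra.lift K (opGen K p q lam mu) a = FreeAlgebra.lift K (opGen K p q lam mu) b := by
  have hp1' : p - 1 ≠ 0 := sub_ne_zero.mpr hp1
  cases h
  all_goals
    refine Finsupp.lhom_ext ?_
    rintro ⟨d, k, b, c⟩ r
    simp only [map_sub, map_mul, map_smul, map_one, FreeAlgebra.lift_ι_apply, opGen,
      Matrix.cons_val, Module.End.mul_apply, LinearMap.sub_apply, LinearMap.smul_apply,
      Module.End.one_apply]
  · rw [opX_opY_single p, opY_opX_single p]
    simp only [smul_add, Finsupp.smul_single, smul_eq_mul]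
    rw [show p * (r * (p ^ (-d) * (p - 1)⁻¹)) = r * (p ^ (1 - d) * (p - 1)⁻¹) by
      rw [sub_eq_add_neg 1 d, zpow_add₀ hp, zpow_one]; ring]
    rw [add_sub_add_left_eq_sub, ← Finsupp.single_sub]
    congr 1
    field_simp
    ring
  all_goals
    simp only [opX_single, opY_single, opS_single, opT_single, map_add, smul_add,
      Finsupp.smul_single, smul_eq_mul]
    try simp only [zpow_add₀ hlam, zpow_add₀ hmu, zpow_sub₀ hlam, zpow_sub₀ hmu, zpow_one]
  · congr 1
    rw [pow_succ]
    field_simp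
  all_goals
    congr 2 <;> field_simp

/-- The representation of the extended Weyl algebra on `V`, which is the left regular
representation written in the basis of monomials. -/
def extRep (hp : p ≠ 0) (hp1 : p ≠ 1) (hq : q ≠ 0) (hlam : lam ≠ 0) (hmu : mu ≠ 0) :
    ExtWeyl K p q lam mu →ₐ[K] Module.End K (MonIdx →₀ K) :=
  RingQuot.liftAlgHom K ⟨FreeAlgebra.lift K (opGen K p q lam mu),
    extRep_rel hp hp1 hq hlam hmu⟩

/-! ### Commutation rules in the algebra -/

variable (K p q lam mu)

/-- The generators `x, y, s, t` (for `i = 0, 1, 2, 3`). -/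
def gen (i : Fin 4) : ExtWeyl K p q lam mu :=
  RingQuot.mkAlgHom K (ExtWeylRel K p q lam mu) (FreeAlgebra.ι K i)

/-- The normal element `z = xy - yx`. -/
def genZ : ExtWeyl K p q lam mu :=
  gen K p q lam mu 0 * gen K p q lam mu 1 - gen K p q lam mu 1 * gen K p q lam mu 0

/-- `x ^ d` for `d ≥ 0` and `y ^ (-d)` for `d < 0`. -/
def wPow : ℤ → ExtWeyl K p q lam mu
  | Int.ofNat n => gen K p q lam mu 0 ^ n
  | Int.negSucc n => gen K p q lam mu 1 ^ (n + 1)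

/-- The basis monomial `w d * z ^ k * s ^ b * t ^ c`. -/
def mon (m : MonIdx) : ExtWeyl K p q lam mu :=
  wPow K p q lam mu m.1 * genZ K p q lam mu ^ m.2.1 * gen K p q lam mu 2 ^ m.2.2.1 *
    gen K p q lam mu 3 ^ m.2.2.2

/-- The linear map sending the basis vectors of `V` to the monomials. -/
def monMap : (MonIdx →₀ K) →ₗ[K] ExtWeyl K p q lam mu :=
  Finsupp.linearCombination K (mon K p q lam mu)

lemma gen_xy : gen K p q lam mu 0 * gen K p q lam mu 1 =
    p • (gen K p q lam mu 1 * gen K p q lam mu 0) + 1 := by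
  have h := RingQuot.mkAlgHom_rel K (ExtWeylRel.weyl (K := K) (p := p) (q := q) (lam := lam)
    (mu := mu))
  simp only [map_sub, map_mul, map_smul, map_one] at h
  exact sub_eq_iff_eq_add'.mp h

lemma gen_st : gen K p q lam mu 2 * gen K p q lam mu 3 =
    q • (gen K p q lam mu 3 * gen K p q lam mu 2) := by
  have h := RingQuot.mkAlgHom_rel K (ExtWeylRel.st (K := K) (p := p) (q := q) (lam := lam)
    (mu := mu))
  simp only [map_mul, map_smul] at h
  exact h

lemma gen_sx : gen K p q lam mu 2 * gen K p q lam mu 0 =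
    lam • (gen K p q lam mu 0 * gen K p q lam mu 2) := by
  have h := RingQuot.mkAlgHom_rel K (ExtWeylRel.sx (K := K) (p := p) (q := q) (lam := lam)
    (mu := mu))
  simp only [map_mul, map_smul] at h
  exact h

lemma gen_sy : gen K p q lam mu 2 * gen K p q lam mu 1 =
    lam⁻¹ • (gen K p q lam mu 1 * gen K p q lam mu 2) := by
  have h := RingQuot.mkAlgHom_rel K (ExtWeylRel.sy (K := K) (p := p) (q := q) (lam := lam)
    (mu := mu))
  simp only [map_mul, map_smul] at h
  exact h

lemma gen_tx : gen K p q lam mu 3 * gen K p q lam mu 0 =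
    mu • (gen K p q lam mu 0 * gen K p q lam mu 3) := by
  have h := RingQuot.mkAlgHom_rel K (ExtWeylRel.tx (K := K) (p := p) (q := q) (lam := lam)
    (mu := mu))
  simp only [map_mul, map_smul] at h
  exact h

lemma gen_ty : gen K p q lam mu 3 * gen K p q lam mu 1 =
    mu⁻¹ • (gen K p q lam mu 1 * gen K p q lam mu 3) := by
  have h := RingQuot.mkAlgHom_rel K (ExtWeylRel.ty (K := K) (p := p) (q := q) (lam := lam)
    (mu := mu))
  simp only [map_mul, map_smul] at h
  exact h

end Rep

section QComm

variable {K A : Type*} [Field K] [Ring A] [Algebra K A]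

lemma qcomm_pow_right {u v : A} {r : K} (h : u * v = r • (v * u)) (n : ℕ) :
    u * v ^ n = r ^ n • (v ^ n * u) := by
  induction n with
  | zero => simp
  | succ n ih =>
    rw [pow_succ, ← mul_assoc, ih, smul_mul_assoc, mul_assoc, h, mul_smul_comm, smul_smul,
      ← mul_assoc, pow_succ]

lemma qcomm_pow_left {u v : A} {r : K} (h : u * v = r • (v * u)) (n : ℕ) :
    u ^ n * v = r ^ n • (v * u ^ n) := by
  induction n with
  | zero => simp
  | succ n ih =>
    rw [pow_succ, mul_assoc, h, mul_smul_comm, ← mul_assoc, ih, smul_mul_assoc, smul_smul,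
      mul_assoc, pow_succ' r]

lemma qcomm_symm {u v : A} {r : K} (hr : r ≠ 0) (h : u * v = r • (v * u)) :
    v * u = r⁻¹ • (u * v) := by
  rw [h, smul_smul, inv_mul_cancel₀ hr, one_smul]

/-- Opposite weights on `v` and `w` cancel. -/
lemma qcomm_mul_cancel {u v w : A} {r r' : K} (hr : r * r' = 1) (h : u * v = r • (v * u))
    (h' : u * w = r' • (w * u)) : u * (v * w) = v * w * u := by
  rw [← mul_assoc, h, smul_mul_assoc, mul_assoc, h', mul_smul_comm, smul_smul, hr, one_smul,
    mul_assoc]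

end QComm

section Alg

variable {K : Type*} [Field K] {p q lam mu : K}

local notation "gx" => gen K p q lam mu 0
local notation "gy" => gen K p q lam mu 1
local notation "gs" => gen K p q lam mu 2
local notation "gt" => gen K p q lam mu 3
local notation "gz" => genZ K p q lam mu
local notation "gw" => wPow K p q lam mu

lemma genZ_eq : gz = (p - 1) • (gy * gx) + 1 := by
  rw [genZ, gen_xy]; module

lemma gen_yx (hp1 : p ≠ 1) :
    gy * gx = (p - 1)⁻¹ • gz + (-(p - 1)⁻¹) • (1 : ExtWeyl K p q lam mu) := by
  have h : p - 1 ≠ 0 := sub_ne_zero.mpr hp1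
  rw [genZ_eq, smul_add, smul_smul, inv_mul_cancel₀ h, one_smul, add_assoc, ← add_smul]
  simp

lemma gen_xy' (hp1 : p ≠ 1) :
    gx * gy = (p * (p - 1)⁻¹) • gz + (-(p - 1)⁻¹) • (1 : ExtWeyl K p q lam mu) := by
  have h : p - 1 ≠ 0 := sub_ne_zero.mpr hp1
  rw [gen_xy, gen_yx hp1, smul_add, smul_smul, smul_smul, add_assoc]
  congr 1
  conv_lhs => rw [← one_smul K (1 : ExtWeyl K p q lam mu), smul_smul, ← add_smul]
  congr 1
  field_simp
  ring

lemma gen_xz : gx * gz = p • (gz * gx) := by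
  rw [genZ_eq, mul_add, mul_smul_comm, ← mul_assoc, gen_xy, add_mul, add_mul, smul_mul_assoc,
    smul_mul_assoc]
  simp only [one_mul, mul_one]
  module

lemma gen_zy : gz * gy = p • (gy * gz) := by
  rw [genZ_eq, add_mul, smul_mul_assoc, mul_assoc, gen_xy, mul_add, mul_add, mul_smul_comm,
    mul_smul_comm]
  simp only [one_mul, mul_one]
  module

lemma gen_sz (hlam : lam ≠ 0) : gs * gz = gz * gs := by
  rw [genZ, mul_sub, sub_mul,
    qcomm_mul_cancel (mul_inv_cancel₀ hlam) (gen_sx K p q lam mu) (gen_sy K p q lam mu),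
    qcomm_mul_cancel (inv_mul_cancel₀ hlam) (gen_sy K p q lam mu) (gen_sx K p q lam mu)]

lemma gen_tz (hmu : mu ≠ 0) : gt * gz = gz * gt := by
  rw [genZ, mul_sub, sub_mul,
    qcomm_mul_cancel (mul_inv_cancel₀ hmu) (gen_tx K p q lam mu) (gen_ty K p q lam mu),
    qcomm_mul_cancel (inv_mul_cancel₀ hmu) (gen_ty K p q lam mu) (gen_tx K p q lam mu)]

/-- An element with opposite weights on `x` and `y` has weight `r ^ d` on `w d`. -/
lemma qcomm_wPow {u : ExtWeyl K p q lam mu} {r : K} (hx : u * gx = r • (gx * u))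
    (hy : u * gy = r⁻¹ • (gy * u)) (d : ℤ) : u * gw d = r ^ d • (gw d * u) := by
  cases d with
  | ofNat n => simpa [wPow] using qcomm_pow_right hx n
  | negSucc n => simpa [wPow, zpow_negSucc] using qcomm_pow_right hy (n + 1)

lemma gen_zw (hp : p ≠ 0) (d : ℤ) : gz * gw d = p⁻¹ ^ d • (gw d * gz) :=
  qcomm_wPow (qcomm_symm hp gen_xz) (by rw [inv_inv]; exact gen_zy) d

lemma wPow_natCast (n : ℕ) : gw (n : ℤ) = gx ^ n := rfl

lemma wPow_neg_natCast (n : ℕ) : gw (-(n : ℤ)) = gy ^ n := by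
  cases n with
  | zero => simp [show gw 0 = gx ^ 0 from rfl]
  | succ n => rfl

lemma gen_xw (hp : p ≠ 0) (hp1 : p ≠ 1) (d : ℤ) :
    gx * gw d = cxz p d • (gw (d + 1) * gz) + cx1 p d • gw (d + 1) := by
  by_cases h : 0 ≤ d
  · obtain ⟨n, rfl⟩ := Int.eq_ofNat_of_zero_le h
    have e : ((n : ℤ) + 1) = ((n + 1 : ℕ) : ℤ) := by push_cast; ring
    rw [e, wPow_natCast, wPow_natCast, pow_succ']
    simp [cxz, cx1]
  · obtain ⟨n, hn⟩ := Int.eq_ofNat_of_zero_le (show 0 ≤ -d - 1 by omega)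
    obtain rfl : d = -((n + 1 : ℕ) : ℤ) := by push_cast; omega
    have e : -((n + 1 : ℕ) : ℤ) + 1 = -(n : ℤ) := by push_cast; ring
    have hz := gen_zw (q := q) (lam := lam) (mu := mu) hp (-(n : ℤ))
    rw [e, wPow_neg_natCast (n + 1), pow_succ', ← mul_assoc, gen_xy' hp1, add_mul,
      ← wPow_neg_natCast, smul_mul_assoc, hz, smul_smul, smul_mul_assoc, one_mul]
    simp only [cxz, cx1, h, if_false]
    congr 2
    simp only [inv_zpow', neg_neg, Nat.cast_add, Nat.cast_one, zpow_add₀ hp, zpow_one]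
    ring

lemma gen_yw (hp : p ≠ 0) (hp1 : p ≠ 1) (d : ℤ) :
    gy * gw d = cyz p d • (gw (d - 1) * gz) + cy1 p d • gw (d - 1) := by
  by_cases h : d ≤ 0
  · obtain ⟨n, hn⟩ := Int.eq_ofNat_of_zero_le (show 0 ≤ -d by omega)
    obtain rfl : d = -(n : ℤ) := by omega
    have e : (-(n : ℤ) - 1) = -((n + 1 : ℕ) : ℤ) := by push_cast; ring
    rw [e, wPow_neg_natCast, wPow_neg_natCast, pow_succ']
    simp [cyz, cy1]
  · obtain ⟨n, hn⟩ := Int.eq_ofNat_of_zero_le (show 0 ≤ d - 1 by omega)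
    obtain rfl : d = ((n + 1 : ℕ) : ℤ) := by push_cast; omega
    have e : ((n + 1 : ℕ) : ℤ) - 1 = (n : ℤ) := by push_cast; ring
    have e' : 1 - ((n + 1 : ℕ) : ℤ) = -(n : ℤ) := by push_cast; ring
    have hz := gen_zw (q := q) (lam := lam) (mu := mu) hp (n : ℤ)
    rw [e, wPow_natCast (n + 1), pow_succ', ← mul_assoc, gen_yx hp1, add_mul,
      ← wPow_natCast, smul_mul_assoc, hz, smul_smul, smul_mul_assoc, one_mul]
    simp only [cyz, cy1, h, if_false, e']
    congr 2
    rw [inv_zpow', mul_comm]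

/-! ### The monomials form a basis -/

lemma monMap_single (m : MonIdx) (r : K) :
    monMap K p q lam mu (Finsupp.single m r) = r • mon K p q lam mu m := by
  simp [monMap]

lemma monMap_opX (hp : p ≠ 0) (hp1 : p ≠ 1) (v : MonIdx →₀ K) :
    monMap K p q lam mu (opX p v) = gx * monMap K p q lam mu v := by
  induction v using Finsupp.induction_linear with
  | zero => simp
  | add u v hu hv => simp [hu, hv, mul_add]
  | single m r =>
    obtain ⟨d, k, b, c⟩ := m
    rw [opX_single, map_add, monMap_single, monMap_single, monMap_single, mul_smul_comm]
    simp only [mon, ← mul_assoc]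
    rw [gen_xw hp hp1 d]
    simp only [add_mul, smul_mul_assoc, smul_add, smul_smul, pow_succ', mul_assoc]

lemma monMap_opY (hp : p ≠ 0) (hp1 : p ≠ 1) (v : MonIdx →₀ K) :
    monMap K p q lam mu (opY p v) = gy * monMap K p q lam mu v := by
  induction v using Finsupp.induction_linear with
  | zero => simp
  | add u v hu hv => simp [hu, hv, mul_add]
  | single m r =>
    obtain ⟨d, k, b, c⟩ := m
    rw [opY_single, map_add, monMap_single, monMap_single, monMap_single, mul_smul_comm]
    simp only [mon, ← mul_assoc]
    rw [gen_yw hp hp1 d]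
    simp only [add_mul, smul_mul_assoc, smul_add, smul_smul, pow_succ', mul_assoc]

lemma gen_s_mon (hlam : lam ≠ 0) (d : ℤ) (k b c : ℕ) :
    gs * mon K p q lam mu (d, k, b, c) = lam ^ d • mon K p q lam mu (d, k, b + 1, c) := by
  have h1 := qcomm_wPow (gen_sx K p q lam mu) (gen_sy K p q lam mu) d
  have h2 : gs * gz ^ k = gz ^ k * gs := Commute.pow_right (gen_sz hlam) k
  simp only [mon]
  rw [← mul_assoc, ← mul_assoc, ← mul_assoc, h1, smul_mul_assoc, smul_mul_assoc, smul_mul_assoc,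
    mul_assoc (gw d) gs, h2, pow_succ']
  simp only [mul_assoc]

lemma gen_t_mon (hq : q ≠ 0) (hmu : mu ≠ 0) (d : ℤ) (k b c : ℕ) :
    gt * mon K p q lam mu (d, k, b, c) =
      (mu ^ d * q⁻¹ ^ b) • mon K p q lam mu (d, k, b, c + 1) := by
  have h1 := qcomm_wPow (gen_tx K p q lam mu) (gen_ty K p q lam mu) d
  have h2 : gt * gz ^ k = gz ^ k * gt := Commute.pow_right (gen_tz hmu) k
  have h3 := qcomm_pow_right (qcomm_symm hq (gen_st K p q lam mu)) b
  simp only [mon]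
  rw [← mul_assoc, ← mul_assoc, ← mul_assoc, h1, smul_mul_assoc, smul_mul_assoc, smul_mul_assoc,
    mul_assoc (gw d) gt, h2, ← mul_assoc, mul_assoc _ gt, h3, mul_smul_comm, smul_mul_assoc,
    smul_smul, pow_succ']
  simp only [mul_assoc]

lemma gen_z_mon (hp : p ≠ 0) (d : ℤ) (k b c : ℕ) :
    gz * mon K p q lam mu (d, k, b, c) = p⁻¹ ^ d • mon K p q lam mu (d, k + 1, b, c) := by
  simp only [mon, ← mul_assoc]
  rw [gen_zw hp]
  simp only [smul_mul_assoc, pow_succ', mul_assoc]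

lemma mon_z (hlam : lam ≠ 0) (hmu : mu ≠ 0) (d : ℤ) (k b c : ℕ) :
    mon K p q lam mu (d, k, b, c) * gz = mon K p q lam mu (d, k + 1, b, c) := by
  have h2 : gs ^ b * gz = gz * gs ^ b := Commute.pow_left (gen_sz hlam) b
  have h3 : gt ^ c * gz = gz * gt ^ c := Commute.pow_left (gen_tz hmu) c
  simp only [mon]
  rw [mul_assoc, h3, ← mul_assoc, mul_assoc _ _ gz, h2, pow_succ]
  simp only [mul_assoc]

lemma mon_s (hq : q ≠ 0) (d : ℤ) (k b c : ℕ) :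
    mon K p q lam mu (d, k, b, c) * gs = q⁻¹ ^ c • mon K p q lam mu (d, k, b + 1, c) := by
  have h3 := qcomm_pow_left (qcomm_symm hq (gen_st K p q lam mu)) c
  simp only [mon]
  rw [mul_assoc, h3, mul_smul_comm, pow_succ]
  simp only [mul_assoc]

lemma mon_t (d : ℤ) (k b c : ℕ) :
    mon K p q lam mu (d, k, b, c) * gt = mon K p q lam mu (d, k, b, c + 1) := by
  simp only [mon, pow_succ, mul_assoc]

lemma monMap_extRep (hp : p ≠ 0) (hp1 : p ≠ 1) (hq : q ≠ 0) (hlam : lam ≠ 0) (hmu : mu ≠ 0)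
    (a : ExtWeyl K p q lam mu) (v : MonIdx →₀ K) :
    monMap K p q lam mu (extRep hp hp1 hq hlam hmu a v) = a * monMap K p q lam mu v := by
  obtain ⟨a, rfl⟩ := RingQuot.mkAlgHom_surjective K (ExtWeylRel K p q lam mu) a
  simp only [extRep, RingQuot.liftAlgHom_mkAlgHom_apply]
  induction a using FreeAlgebra.induction generalizing v with
  | grade0 r => simp [Algebra.algebraMap_eq_smul_one]
  | add a b ha hb => simp [ha, hb, add_mul]
  | mul a b ha hb => simp [ha, hb, mul_assoc]
  | grade1 i =>
    rw [FreeAlgebra.lift_ι_apply]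
    fin_cases i
    · exact monMap_opX hp hp1 v
    · exact monMap_opY hp hp1 v
    · change monMap K p q lam mu (opS lam v) = gs * monMap K p q lam mu v
      induction v using Finsupp.induction_linear with
      | zero => simp
      | add u v hu hv => simp [hu, hv, mul_add]
      | single m r =>
        obtain ⟨d, k, b, c⟩ := m
        rw [opS_single, monMap_single, monMap_single, mul_smul_comm, gen_s_mon hlam, smul_smul]
    · change monMap K p q lam mu (opT q mu v) = gt * monMap K p q lam mu v
      induction v using Finsupp.induction_linear with
      | zero => simp
      | add u v hu hv => simp [hu, hv, mul_add]
      | single m r =>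
        obtain ⟨d, k, b, c⟩ := m
        rw [opT_single, monMap_single, monMap_single, mul_smul_comm, gen_t_mon hq hmu, smul_smul]

lemma extRep_gen (hp : p ≠ 0) (hp1 : p ≠ 1) (hq : q ≠ 0) (hlam : lam ≠ 0) (hmu : mu ≠ 0)
    (i : Fin 4) :
    extRep hp hp1 hq hlam hmu (gen K p q lam mu i) = opGen K p q lam mu i := by
  simp [extRep, gen, RingQuot.liftAlgHom_mkAlgHom_apply]

lemma extRep_genZ_single (hp : p ≠ 0) (hp1 : p ≠ 1) (hq : q ≠ 0) (hlam : lam ≠ 0)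
    (hmu : mu ≠ 0) (k b c : ℕ) :
    extRep hp hp1 hq hlam hmu gz (Finsupp.single (0, k, b, c) 1) =
      Finsupp.single (0, k + 1, b, c) 1 := by
  have hp1' : p - 1 ≠ 0 := sub_ne_zero.mpr hp1
  rw [genZ, map_sub, map_mul, map_mul, extRep_gen, extRep_gen]
  change opX p (opY p _) - opY p (opX p _) = _
  rw [opX_opY_single p, opY_opX_single p, add_sub_add_right_eq_sub, ← Finsupp.single_sub]
  congr 1
  simp only [sub_zero, neg_zero, zpow_one, zpow_zero]
  field_simp

lemma extRep_mon (hp : p ≠ 0) (hp1 : p ≠ 1) (hq : q ≠ 0) (hlam : lam ≠ 0) (hmu : mu ≠ 0)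
    (m : MonIdx) :
    extRep hp hp1 hq hlam hmu (mon K p q lam mu m) (Finsupp.single (0, 0, 0, 0) 1) =
      Finsupp.single m 1 := by
  obtain ⟨d, k, b, c⟩ := m
  have ht : ∀ c : ℕ, (opT q mu ^ c : Module.End K (MonIdx →₀ K))
      (Finsupp.single (0, 0, 0, 0) 1) = Finsupp.single (0, 0, 0, c) 1 := by
    intro c
    induction c with
    | zero => simp
    | succ c ih => rw [pow_succ', Module.End.mul_apply, ih, opT_single]; simp
  have hs : ∀ b : ℕ, (opS lam ^ b : Module.End K (MonIdx →₀ K))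
      (Finsupp.single (0, 0, 0, c) 1) = Finsupp.single (0, 0, b, c) 1 := by
    intro b
    induction b with
    | zero => simp
    | succ b ih => rw [pow_succ', Module.End.mul_apply, ih, opS_single]; simp
  have hz : ∀ k : ℕ, (extRep hp hp1 hq hlam hmu gz ^ k : Module.End K (MonIdx →₀ K))
      (Finsupp.single (0, 0, b, c) 1) = Finsupp.single (0, k, b, c) 1 := by
    intro k
    induction k with
    | zero => simp
    | succ k ih => rw [pow_succ', Module.End.mul_apply, ih, extRep_genZ_single]
  have hx : ∀ n : ℕ, (opX p ^ n : Module.End K (MonIdx →₀ K))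
      (Finsupp.single (0, k, b, c) 1) = Finsupp.single ((n : ℤ), k, b, c) 1 := by
    intro n
    induction n with
    | zero => simp
    | succ n ih => rw [pow_succ', Module.End.mul_apply, ih, opX_single]; simp [cxz, cx1]
  have hy : ∀ n : ℕ, (opY p ^ n : Module.End K (MonIdx →₀ K))
      (Finsupp.single (0, k, b, c) 1) = Finsupp.single (-(n : ℤ), k, b, c) 1 := by
    intro n
    induction n with
    | zero => simp
    | succ n ih =>
      rw [pow_succ', Module.End.mul_apply, ih, opY_single]
      simp [cyz, cy1, sub_eq_add_neg, add_comm]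
  simp only [mon, map_mul, map_pow, extRep_gen, Module.End.mul_apply]
  change extRep hp hp1 hq hlam hmu (gw d) ((extRep hp hp1 hq hlam hmu gz ^ k)
    ((opS lam ^ b) ((opT q mu ^ c) _))) = _
  rw [ht, hs, hz]
  cases d with
  | ofNat n =>
    rw [wPow, map_pow, extRep_gen]
    exact hx n
  | negSucc n =>
    rw [wPow, map_pow, extRep_gen]
    exact hy (n + 1)

lemma monMap_injective (hp : p ≠ 0) (hp1 : p ≠ 1) (hq : q ≠ 0) (hlam : lam ≠ 0) (hmu : mu ≠ 0) :
    Function.Injective (monMap K p q lam mu) := by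
  have key : ∀ v : MonIdx →₀ K, extRep hp hp1 hq hlam hmu (monMap K p q lam mu v)
      (Finsupp.single (0, 0, 0, 0) 1) = v := by
    intro v
    induction v using Finsupp.induction_linear with
    | zero => simp
    | add u v hu hv => simp [hu, hv]
    | single m r => rw [monMap_single, map_smul, LinearMap.smul_apply, extRep_mon]; simp
  intro u v h
  rw [← key u, h, key v]

lemma mon_zero : mon K p q lam mu (0, 0, 0, 0) = 1 := by
  simp [mon, show gw 0 = gx ^ 0 from rfl]

lemma monMap_surjective (hp : p ≠ 0) (hp1 : p ≠ 1) (hq : q ≠ 0) (hlam : lam ≠ 0)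
    (hmu : mu ≠ 0) : Function.Surjective (monMap K p q lam mu) := fun a =>
  ⟨extRep hp hp1 hq hlam hmu a (Finsupp.single (0, 0, 0, 0) 1), by
    rw [monMap_extRep, monMap_single, mon_zero, one_smul, mul_one]⟩

/-! ### The center -/

/-- If left and right multiplication by `g` act on the monomials occurring in `v` through the same
injective index shift `f`, with weights `wl` and `wr`, and `g` commutes with the element with
coordinates `v`, then `wl = wr` on the support of `v`. -/
lemma weight_eq (hp : p ≠ 0) (hp1 : p ≠ 1) (hq : q ≠ 0) (hlam : lam ≠ 0) (hmu : mu ≠ 0)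
    {v : MonIdx →₀ K} {g : ExtWeyl K p q lam mu} {f : MonIdx → MonIdx}
    (hf : Function.Injective f) {wl wr : MonIdx → K}
    (hl : ∀ m, v m ≠ 0 → g * mon K p q lam mu m = wl m • mon K p q lam mu (f m))
    (hr : ∀ m, v m ≠ 0 → mon K p q lam mu m * g = wr m • mon K p q lam mu (f m))
    (hc : g * monMap K p q lam mu v = monMap K p q lam mu v * g) (m : MonIdx) (hm : v m ≠ 0) :
    wl m = wr m := by
  have expand : ∀ w : MonIdx → K, monMap K p q lam mu (shiftOp f w v) =
      ∑ n ∈ v.support, v n • w n • mon K p q lam mu (f n) := by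
    intro w
    rw [shiftOp, Finsupp.linearCombination_apply, Finsupp.sum, map_sum]
    refine Finset.sum_congr rfl fun n _ => ?_
    rw [map_smul, monMap_single]
  have hv : monMap K p q lam mu v = ∑ n ∈ v.support, v n • mon K p q lam mu n := by
    rw [monMap, Finsupp.linearCombination_apply, Finsupp.sum]
  have e : shiftOp f wl v = shiftOp f wr v := by
    apply monMap_injective hp hp1 hq hlam hmu
    rw [expand, expand]
    rw [hv, Finset.mul_sum, Finset.sum_mul] at hc
    convert hc using 1
    · refine Finset.sum_congr rfl fun n hn => ?_
      rw [mul_smul_comm, hl n (Finsupp.mem_support_iff.mp hn)]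
    · refine Finset.sum_congr rfl fun n hn => ?_
      rw [smul_mul_assoc, hr n (Finsupp.mem_support_iff.mp hn)]
  have e' := DFunLike.congr_fun e (f m)
  rw [shiftOp_apply hf, shiftOp_apply hf] at e'
  exact mul_right_cancel₀ hm e'

end Alg

lemma inv_pow_ne_one {K : Type*} [Field K] {r : K} (h : ∀ n : ℕ, 0 < n → r ^ n ≠ 1) {n : ℕ}
    (e : r⁻¹ ^ n = 1) : n = 0 := by
  by_contra hn
  exact h n (Nat.pos_of_ne_zero hn) (by rwa [inv_pow, inv_eq_one] at e)

/-- If neither `p` nor `q` is a root of unity, then the center of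
`A_p(λ, μ, K_q[s,t])` consists exactly of the scalars `K`. -/
theorem extWeyl_center_eq_scalars
    (K : Type*) [Field K] (p q lam mu : K)
    (hp : p ≠ 0) (hq : q ≠ 0) (hlam : lam ≠ 0) (hmu : mu ≠ 0)
    (hpru : ∀ n : ℕ, 0 < n → p ^ n ≠ 1) (hqru : ∀ n : ℕ, 0 < n → q ^ n ≠ 1) :
    Subalgebra.center K (ExtWeyl K p q lam mu) = ⊥ := by
  have hp1 : p ≠ 1 := by simpa using hpru 1 one_pos
  refine le_antisymm (fun a ha => ?_) bot_le
  rw [Subalgebra.mem_center_iff] at ha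
  obtain ⟨v, rfl⟩ := monMap_surjective hp hp1 hq hlam hmu a
  have hd : ∀ m, v m ≠ 0 → m.1 = 0 := by
    intro m hm
    have e := weight_eq hp hp1 hq hlam hmu (g := genZ K p q lam mu) upZ_inj
      (wl := fun m => p⁻¹ ^ m.1) (wr := fun _ => 1)
      (fun m _ => gen_z_mon hp _ _ _ _)
      (fun m _ => by rw [one_smul]; exact mon_z hlam hmu _ _ _ _) (ha _) m hm
    change p⁻¹ ^ m.1 = 1 at e
    rcases Int.eq_nat_or_neg m.1 with ⟨n, hn | hn⟩
    · rw [hn, zpow_natCast] at e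
      simp [hn, inv_pow_ne_one hpru e]
    · rw [hn, inv_zpow', neg_neg, zpow_natCast] at e
      by_contra h0
      exact hpru n (by omega) e
  have hc : ∀ m, v m ≠ 0 → m.2.2.2 = 0 := by
    intro m hm
    have e := weight_eq hp hp1 hq hlam hmu (g := gen K p q lam mu 2) upS_inj
      (wl := fun m => lam ^ m.1) (wr := fun m => q⁻¹ ^ m.2.2.2)
      (fun m _ => gen_s_mon hlam _ _ _ _)
      (fun m _ => mon_s hq _ _ _ _) (ha _) m hm
    simp only [hd m hm, zpow_zero] at e
    exact inv_pow_ne_one hqru e.symm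
  have hb : ∀ m, v m ≠ 0 → m.2.2.1 = 0 := by
    intro m hm
    have e := weight_eq hp hp1 hq hlam hmu (g := gen K p q lam mu 3) upT_inj
      (wl := fun m => mu ^ m.1 * q⁻¹ ^ m.2.2.1) (wr := fun _ => 1)
      (fun m _ => gen_t_mon hq hmu _ _ _ _)
      (fun m _ => by rw [one_smul]; exact mon_t _ _ _ _) (ha _) m hm
    simp only [hd m hm, zpow_zero, one_mul] at e
    exact inv_pow_ne_one hqru e
  have hw0 : wPow K p q lam mu 0 = 1 := pow_zero _
  have hw1 : wPow K p q lam mu 1 = gen K p q lam mu 0 := pow_one _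
  have hk : ∀ m, v m ≠ 0 → m.2.1 = 0 := by
    intro m hm
    have e := weight_eq hp hp1 hq hlam hmu (g := gen K p q lam mu 0) upX_inj
      (wl := fun _ => 1) (wr := fun m => p⁻¹ ^ m.2.1)
      (fun m hm => by simp [mon, upX, hd m hm, hc m hm, hb m hm, hw0, hw1])
      (fun m hm => by
        have h := qcomm_pow_left (qcomm_symm hp (gen_xz (q := q) (lam := lam) (mu := mu))) m.2.1
        simpa [mon, upX, hd m hm, hc m hm, hb m hm, hw0, hw1] using h) (ha _) m hm
    exact inv_pow_ne_one hpru e.symm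
  have hv : v = Finsupp.single (0, 0, 0, 0) (v (0, 0, 0, 0)) := by
    ext m
    by_cases hm : v m = 0
    · by_cases h0 : m = (0, 0, 0, 0)
      · subst h0; simp
      · rw [hm, Finsupp.single_eq_of_ne h0]
    · have : m = (0, 0, 0, 0) :=
        Prod.ext (hd m hm) (Prod.ext (hk m hm) (Prod.ext (hb m hm) (hc m hm)))
      subst this; simp
  rw [hv, monMap_single, mon_zero, ← Algebra.algebraMap_eq_smul_one]
  exact Subalgebra.algebraMap_mem _ _
end
end

section
/- If neither p nor q is a root of unity, then A = A_p(λ, μ, K_q[s,t]) is universally cancellative; consequently A is strongly cancellative and cancellative. -/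
/-!
The theorem has two halves.

*An algebra `A` whose center is the base field `K` is universally cancellative.* Suppose
`φ : A ⊗ R ≃ B ⊗ R`. The center of `A ⊗ R` is `R`, and `Z(B) ⊗ R` is central in `B ⊗ R`, so `φ⁻¹`
embeds `Z(B) ⊗ R` into `R` (`exists_center_embedding`). An element of `Z(B)` transcendental over `K`
would give an embedding of `R[X]` into `R`, against the finiteness of the transcendence degree of
`R`. Hence `Z(B)` is a domain algebraic over `K`, i.e. a field, and the augmentation `R → K`
retracts it onto `K`, so `Z(B) = K` (`center_eq_bot_of_tensor_equiv`). Now `φ` restricts to an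
automorphism of the common center `R`, and reducing `φ` modulo an augmentation of `R` and its
transport along this automorphism gives `A ≃ B`.

*The center of the extended quantized Weyl algebra is `K`.* The element `z = 1 + (p - 1) y x`
satisfies `x z = p z x`, `z y = p y z` and commutes with `s` and `t`. The elements
`z ^ a * W n * s ^ k * t ^ l`, where `W n` is `x ^ n` or `y ^ (-n)` according to the sign of `n`,
form a basis: they are closed under left multiplication by the generators, and independent because
the resulting formulas define a representation on the free module on the indices. Right and left
multiplication by `z`, `s`, `t` (and by `x`, on powers of `z`) inject the basis into itself up to
scalars, and comparing these scalars leaves only the constants (`ExtWeyl.center_eq_bot`).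
-/

noncomputable section

open FreeAlgebra
open scoped TensorProduct

universe u v

/-- A `K`-algebra `A` is cancellative if `A[w] ≅ B[w]` implies `A ≅ B`. -/
def IsCancellativeAlgebra (K : Type u) (A : Type v) [Field K] [Ring A] [Algebra K A] : Prop :=
  ∀ (B : Type v) [Ring B] [Algebra K B],
    Nonempty (Polynomial A ≃ₐ[K] Polynomial B) → Nonempty (A ≃ₐ[K] B)

/-- A `K`-algebra `A` is strongly cancellative if, for any `d ≥ 1`,
`A[w₁,…,w_d] ≅ B[w₁,…,w_d]` implies `A ≅ B`. -/
def IsStronglyCancellativeAlgebra (K : Type u) (A : Type v) [Field K] [Ring A]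
    [Algebra K A] : Prop :=
  ∀ d : ℕ, 1 ≤ d → ∀ (B : Type v) [Ring B] [Algebra K B],
    Nonempty ((A ⊗[K] MvPolynomial (Fin d) K) ≃ₐ[K] (B ⊗[K] MvPolynomial (Fin d) K)) →
      Nonempty (A ≃ₐ[K] B)

/-- A `K`-algebra `A` is universally cancellative if, for every finitely generated commutative
`K`-algebra domain `R` with `R/I = K` for some ideal `I`, and every `K`-algebra `B`,
`A ⊗ R ≅ B ⊗ R` implies `A ≅ B`. -/
def IsUniversallyCancellativeAlgebra (K : Type u) (A : Type v) [Field K] [Ring A]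
    [Algebra K A] : Prop :=
  ∀ (R : Type u) [CommRing R] [IsDomain R] [Algebra K R], Algebra.FiniteType K R →
    (∃ I : Ideal R, Nonempty ((R ⧸ I) ≃ₐ[K] K)) →
    ∀ (B : Type v) [Ring B] [Algebra K B],
      Nonempty ((A ⊗[K] R) ≃ₐ[K] (B ⊗[K] R)) → Nonempty (A ≃ₐ[K] B)

/-! ### Algebras with trivial center are universally cancellative -/

/-- The image of `Z(B) ⊗ R` in `B ⊗ R` is central. -/
theorem map_center_mem_center {K B R : Type*} [Field K] [Ring B] [Algebra K B]
    [CommRing R] [Algebra K R] (v : Subalgebra.center K B ⊗[K] R) :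
    Algebra.TensorProduct.map (Subalgebra.center K B).val (AlgHom.id K R) v ∈
      Subalgebra.center K (B ⊗[K] R) := by
  induction v using TensorProduct.induction_on with
  | zero => simp
  | tmul c r =>
    rw [Subalgebra.mem_center_iff]
    intro b
    induction b using TensorProduct.induction_on with
    | zero => simp
    | tmul b r' =>
      simp [Subalgebra.mem_center_iff.1 c.2 b, mul_comm r r']
    | add _ _ h h' => rw [add_mul, mul_add, h, h']
  | add a b ha hb => rw [map_add]; exact add_mem ha hb

/-- If `K` is the center of `A`, then the center of `A ⊗ R` is `R`. -/
theorem exists_one_tmul_of_mem_center {K A R : Type*} [Field K] [Ring A] [Algebra K A]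
    [CommRing R] [Algebra K R] (hA : Subalgebra.center K A = ⊥) (w : A ⊗[K] R)
    (hw : w ∈ Subalgebra.center K (A ⊗[K] R)) :
    ∃ r : R, (1 : A) ⊗ₜ[K] r = w := by
  have h1 : w ∈ Subalgebra.centralizer K
      ((Algebra.TensorProduct.includeLeft : A →ₐ[K] A ⊗[K] R).range : Set (A ⊗[K] R)) := by
    rw [Subalgebra.mem_centralizer_iff]
    intro g _
    exact Subalgebra.mem_center_iff.1 hw g
  rw [Subalgebra.centralizer_coe_range_includeLeft_eq_center_tensorProduct] at h1
  obtain ⟨v, rfl⟩ := h1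
  clear hw
  induction v using TensorProduct.induction_on with
  | zero => exact ⟨0, by simp⟩
  | tmul c r =>
    have hc : (c : A) ∈ (⊥ : Subalgebra K A) := by rw [← hA]; exact c.2
    obtain ⟨k, hk⟩ := Algebra.mem_bot.1 hc
    refine ⟨k • r, ?_⟩
    simp [← hk, Algebra.algebraMap_eq_smul_one, TensorProduct.smul_tmul]
  | add a b ha hb =>
    obtain ⟨r, hr⟩ := ha
    obtain ⟨r', hr'⟩ := hb
    refine ⟨r + r', ?_⟩
    rw [TensorProduct.tmul_add, hr, hr']
    exact (map_add _ a b).symm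

/-- If `K` is the center of `A`, an isomorphism `A ⊗ R ≃ B ⊗ R` embeds `Z(B) ⊗ R`, which consists
of central elements of `B ⊗ R`, into the center `R` of `A ⊗ R`. -/
theorem exists_center_embedding {K A B R : Type*} [Field K] [Ring A] [Algebra K A] [Nontrivial A]
    [Ring B] [Algebra K B] [CommRing R] [Algebra K R] (hA : Subalgebra.center K A = ⊥)
    (φ : (A ⊗[K] R) ≃ₐ[K] (B ⊗[K] R)) :
    ∃ j : (Subalgebra.center K B ⊗[K] R) →ₐ[K] R, Function.Injective j ∧
      ∀ w, (1 : A) ⊗ₜ[K] j w =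
        φ.symm (Algebra.TensorProduct.map (Subalgebra.center K B).val (AlgHom.id K R) w) := by
  have hinj : Function.Injective
      (Algebra.TensorProduct.includeRight : R →ₐ[K] A ⊗[K] R) :=
    Algebra.TensorProduct.includeRight_injective (FaithfulSMul.algebraMap_injective K A)
  let θ : (Subalgebra.center K B ⊗[K] R) →ₐ[K] A ⊗[K] R :=
    φ.symm.toAlgHom.comp
      (Algebra.TensorProduct.map (Subalgebra.center K B).val (AlgHom.id K R))
  have hθ : ∀ w, θ w ∈ (Algebra.TensorProduct.includeRight : R →ₐ[K] A ⊗[K] R).range := by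
    intro w
    obtain ⟨r, hr⟩ := exists_one_tmul_of_mem_center hA (θ w) (by
      rw [Subalgebra.mem_center_iff]
      intro b
      apply φ.injective
      have := Subalgebra.mem_center_iff.1 (map_center_mem_center w) (φ b)
      simpa [θ] using this)
    exact ⟨r, hr⟩
  let e := AlgEquiv.ofInjective _ hinj
  let j := e.symm.toAlgHom.comp (θ.codRestrict _ hθ)
  have hj : ∀ w, (1 : A) ⊗ₜ[K] j w = θ w := by
    intro w
    have : e (j w) = θ.codRestrict _ hθ w := e.apply_symm_apply _
    exact congrArg Subtype.val this
  refine ⟨j, ?_, hj⟩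
  intro a b hab
  have h1 : θ a = θ b := by rw [← hj, ← hj, hab]
  have h2 := φ.symm.injective h1
  exact TensorProduct.map_injective_of_flat_flat (Subalgebra.center K B).val.toLinearMap
    (LinearMap.id : R →ₗ[K] R) Subtype.val_injective Function.injective_id h2

/-- A finitely generated domain has finite transcendence degree, so it contains no copy of its own
polynomial ring. -/
theorem not_injective_polynomial {K R : Type u} [Field K] [CommRing R] [IsDomain R] [Algebra K R]
    (hR : Algebra.FiniteType K R) (f : Polynomial R →ₐ[K] R) : ¬ Function.Injective f := by
  intro hf
  have h1 := trdeg_le_of_injective f hf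
  rw [← trdeg_add_eq K R, Polynomial.trdeg_of_isDomain] at h1
  have h2 : Algebra.trdeg K R < Cardinal.aleph0 := trdeg_lt_aleph0_of_finiteType
  obtain ⟨n, hn⟩ := Cardinal.lt_aleph0.1 h2
  rw [hn] at h1
  exact absurd (by exact_mod_cast h1 : n + 1 ≤ n) (by omega)

/-- If `K` is the center of `A` and `A ⊗ R ≃ B ⊗ R`, then `K` is also the center of `B`:
comparing transcendence degrees, the domain `Z(B)` is algebraic over `K`, and the augmentation
of `R` retracts it onto `K`. -/
theorem center_eq_bot_of_tensor_equiv {K R : Type u} {A B : Type*} [Field K] [Ring A] [Algebra K A]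
    [Nontrivial A] [Ring B] [Algebra K B] [CommRing R] [IsDomain R] [Algebra K R]
    (hR : Algebra.FiniteType K R) (ε : R →ₐ[K] K) (hA : Subalgebra.center K A = ⊥)
    (φ : (A ⊗[K] R) ≃ₐ[K] (B ⊗[K] R)) : Subalgebra.center K B = ⊥ := by
  obtain ⟨j, hj, -⟩ := exists_center_embedding hA φ
  let i : Subalgebra.center K B →ₐ[K] R := j.comp Algebra.TensorProduct.includeLeft
  have hi : Function.Injective i := hj.comp
    (Algebra.TensorProduct.includeLeft_injective (S := K) (FaithfulSMul.algebraMap_injective K R))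
  have hdom : IsDomain (Subalgebra.center K B) := hi.isDomain i.toRingHom
  refine eq_bot_iff.2 fun b hb => ?_
  let c : Subalgebra.center K B := ⟨b, hb⟩
  let d : Subalgebra.center K B := c - algebraMap K _ (ε (i c))
  have hd : ε (i d) = 0 := by simp [d]
  have halg : IsAlgebraic K d := by
    by_contra htr
    have hinj : Function.Injective (Polynomial.aeval (R := K) d) :=
      transcendental_iff_injective.1 htr
    let g := Algebra.TensorProduct.map (Polynomial.aeval (R := K) d) (AlgHom.id K R)
    have hg : Function.Injective g :=
      TensorProduct.map_injective_of_flat_flat (Polynomial.aeval (R := K) d).toLinearMap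
        (LinearMap.id : R →ₗ[K] R) hinj Function.injective_id
    let e := (polyEquivTensor K R).trans (Algebra.TensorProduct.comm K R (Polynomial K))
    exact not_injective_polynomial hR ((j.comp g).comp e.toAlgHom)
      ((hj.comp hg).comp e.injective)
  have hd0 : d = 0 := by
    by_contra hne
    have hu := ((halg.isIntegral).isUnit hne).map (ε.comp i)
    exact hu.ne_zero hd
  have : c = algebraMap K _ (ε (i c)) := sub_eq_zero.1 hd0
  exact Algebra.mem_bot.2 ⟨ε (i c), (congrArg Subtype.val this).symm⟩

/-- The map `A ⊗ R → A` induced by an augmentation `R → K`. -/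
def tensorAug {K : Type*} (A : Type*) {R : Type*} [Field K] [Ring A] [Algebra K A] [CommRing R]
    [Algebra K R] (ε : R →ₐ[K] K) : (A ⊗[K] R) →ₐ[K] A :=
  Algebra.TensorProduct.lift (AlgHom.id K A) ((Algebra.ofId K A).comp ε)
    fun a r => show Commute a (algebraMap K A (ε r)) from (Algebra.commutes (ε r) a).symm

theorem tensorAug_tmul {K A R : Type*} [Field K] [Ring A] [Algebra K A] [CommRing R]
    [Algebra K R] (ε : R →ₐ[K] K) (a : A) (r : R) :
    tensorAug A ε (a ⊗ₜ[K] r) = ε r • a := by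
  rw [Algebra.smul_def, Algebra.commutes]
  exact Algebra.TensorProduct.lift_tmul _ _ _ a r

/-- If `φ` matches the augmentations `ε` and `ε'` on `R`, then reducing `φ` modulo them commutes
with reduction. -/
theorem tensorAug_comp {K A B R : Type*} [Field K] [Ring A] [Algebra K A]
    [Ring B] [Algebra K B] [CommRing R] [Algebra K R] (ε ε' : R →ₐ[K] K)
    (φ : (A ⊗[K] R) →ₐ[K] (B ⊗[K] R))
    (h : ∀ r, tensorAug B ε' (φ ((1 : A) ⊗ₜ[K] r)) = algebraMap K B (ε r)) (w : A ⊗[K] R) :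
    tensorAug B ε' (φ (tensorAug A ε w ⊗ₜ[K] (1 : R))) = tensorAug B ε' (φ w) := by
  induction w using TensorProduct.induction_on with
  | zero => simp
  | tmul a r =>
    have h1 : a ⊗ₜ[K] r = (1 : A) ⊗ₜ[K] r * a ⊗ₜ[K] (1 : R) := by simp
    rw [h1, map_mul φ, map_mul (tensorAug B ε'), h, ← h1, tensorAug_tmul, ← TensorProduct.smul_tmul',
      map_smul, map_smul, Algebra.smul_def]
  | add a b ha hb => simp only [map_add, TensorProduct.add_tmul, ha, hb]

/-- A nontrivial algebra whose center is the base field is universally cancellative. -/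
theorem isUniversallyCancellative_of_center_eq_bot (K : Type u) (A : Type v) [Field K] [Ring A]
    [Algebra K A] [Nontrivial A] (hA : Subalgebra.center K A = ⊥) :
    IsUniversallyCancellativeAlgebra K A := by
  rintro R _ _ _ hR ⟨I, ⟨e⟩⟩ B _ _ ⟨φ⟩
  let ε : R →ₐ[K] K := e.toAlgHom.comp (Ideal.Quotient.mkₐ K I)
  have hB := center_eq_bot_of_tensor_equiv hR ε hA φ
  obtain ⟨j, -, hj⟩ := exists_center_embedding hA φ
  let h : R →ₐ[K] R := j.comp Algebra.TensorProduct.includeRight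
  have hh : ∀ r, φ.symm ((1 : B) ⊗ₜ[K] r) = (1 : A) ⊗ₜ[K] h r := by
    intro r
    refine Eq.trans ?_ (hj ((1 : Subalgebra.center K B) ⊗ₜ[K] r)).symm
    simp
  let ε' : R →ₐ[K] K := ε.comp h
  have hinj : Function.Injective (fun r : R => (1 : A) ⊗ₜ[K] r) :=
    Algebra.TensorProduct.includeRight_injective (FaithfulSMul.algebraMap_injective K A)
  have c1 : ∀ r, tensorAug B ε' (φ ((1 : A) ⊗ₜ[K] r)) = algebraMap K B (ε r) := by
    intro r
    obtain ⟨r', hr'⟩ := exists_one_tmul_of_mem_center hB (φ ((1 : A) ⊗ₜ[K] r)) (by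
      rw [Subalgebra.mem_center_iff]
      intro b
      apply φ.symm.injective
      have := Subalgebra.mem_center_iff.1
        (map_center_mem_center ((1 : Subalgebra.center K A) ⊗ₜ[K] r)) (φ.symm b)
      simpa using this)
    have h2 : h r' = r := by
      apply hinj
      change (1 : A) ⊗ₜ[K] h r' = (1 : A) ⊗ₜ[K] r
      rw [← hh, hr', φ.symm_apply_apply]
    rw [← hr', tensorAug_tmul, Algebra.algebraMap_eq_smul_one]
    change ε (h r') • (1 : B) = _
    rw [h2]
  have c2 : ∀ r, tensorAug A ε (φ.symm ((1 : B) ⊗ₜ[K] r)) = algebraMap K A (ε' r) := by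
    intro r
    rw [hh, tensorAug_tmul, Algebra.algebraMap_eq_smul_one]
    rfl
  let f : A →ₐ[K] B :=
    (tensorAug B ε').comp (φ.toAlgHom.comp Algebra.TensorProduct.includeLeft)
  let g : B →ₐ[K] A :=
    (tensorAug A ε).comp (φ.symm.toAlgHom.comp Algebra.TensorProduct.includeLeft)
  refine ⟨AlgEquiv.ofAlgHom f g (AlgHom.ext fun b => ?_) (AlgHom.ext fun a => ?_)⟩
  · refine (tensorAug_comp ε ε' φ.toAlgHom c1 (φ.symm (b ⊗ₜ[K] (1 : R)))).trans ?_
    simp [tensorAug_tmul]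
  · refine (tensorAug_comp ε' ε φ.symm.toAlgHom c2 (φ (a ⊗ₜ[K] (1 : R)))).trans ?_
    simp [tensorAug_tmul]

/-! ### Scalar commutation relations -/

section Skew

variable {K A : Type*} [Field K] [Ring A] [Algebra K A]

theorem mul_pow_of_skew {c : K} {u v : A} (h : u * v = c • (v * u)) (n : ℕ) :
    u * v ^ n = c ^ n • (v ^ n * u) := by
  induction n with
  | zero => simp
  | succ n ih =>
    rw [pow_succ, ← mul_assoc, ih, smul_mul_assoc, mul_assoc, h, mul_smul_comm, smul_smul,
      ← mul_assoc, pow_succ]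

theorem pow_mul_of_skew {c : K} {u v : A} (h : u * v = c • (v * u)) (n : ℕ) :
    u ^ n * v = c ^ n • (v * u ^ n) := by
  induction n with
  | zero => simp
  | succ n ih =>
    rw [pow_succ, mul_assoc, h, mul_smul_comm, ← mul_assoc, ih, smul_mul_assoc, smul_smul,
      mul_assoc, pow_succ' c]

theorem skew_symm {c : K} (hc : c ≠ 0) {u v : A} (h : u * v = c • (v * u)) :
    v * u = c⁻¹ • (u * v) := by
  rw [h, smul_smul, inv_mul_cancel₀ hc, one_smul]

end Skew

/-! ### The generators and the normal element -/

namespace ExtWeyl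

variable {K : Type*} [Field K]

section Generators

variable (p q lam mu : K)

/-- The generators `x, y, s, t` (numbered `0, 1, 2, 3`) of the extended quantized Weyl algebra. -/
def gen (i : Fin 4) : ExtWeyl K p q lam mu :=
  RingQuot.mkAlgHom K (ExtWeylRel K p q lam mu) (ι K i)

/-- The normal element `z = 1 + (p - 1) y x = x y - y x`. -/
def Z : ExtWeyl K p q lam mu := 1 + (p - 1) • (gen p q lam mu 1 * gen p q lam mu 0)

/-- The element `x ^ n` for `n ≥ 0` and `y ^ (-n)` for `n < 0`. -/
def W (n : ℤ) : ExtWeyl K p q lam mu :=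
  if 0 ≤ n then gen p q lam mu 0 ^ n.toNat else gen p q lam mu 1 ^ (-n).toNat

/-- The indices `(a, n, k, l)` of the basis elements `z ^ a * W n * s ^ k * t ^ l`. -/
abbrev Idx := ℕ × ℤ × ℕ × ℕ

/-- The basis element `z ^ a * W n * s ^ k * t ^ l`. -/
def mon (i : Idx) : ExtWeyl K p q lam mu :=
  Z p q lam mu ^ i.1 * (W p q lam mu i.2.1 *
    (gen p q lam mu 2 ^ i.2.2.1 * gen p q lam mu 3 ^ i.2.2.2))

end Generators

variable {p q lam mu : K}

local notation "x" => gen p q lam mu 0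
local notation "y" => gen p q lam mu 1
local notation "s" => gen p q lam mu 2
local notation "t" => gen p q lam mu 3
local notation "z" => Z p q lam mu

theorem x_mul_y : x * y = 1 + p • (y * x) := by
  have h := RingQuot.mkAlgHom_rel K (ExtWeylRel.weyl (K := K) (p := p) (q := q) (lam := lam)
    (mu := mu))
  simp only [map_sub, map_mul, map_smul, map_one] at h
  exact sub_eq_iff_eq_add.1 h

theorem s_mul_t : s * t = q • (t * s) := by
  have h := RingQuot.mkAlgHom_rel K (ExtWeylRel.st (K := K) (p := p) (q := q) (lam := lam)
    (mu := mu))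
  simp only [map_mul, map_smul] at h
  exact h

theorem s_mul_x : s * x = lam • (x * s) := by
  have h := RingQuot.mkAlgHom_rel K (ExtWeylRel.sx (K := K) (p := p) (q := q) (lam := lam)
    (mu := mu))
  simp only [map_mul, map_smul] at h
  exact h

theorem s_mul_y : s * y = lam⁻¹ • (y * s) := by
  have h := RingQuot.mkAlgHom_rel K (ExtWeylRel.sy (K := K) (p := p) (q := q) (lam := lam)
    (mu := mu))
  simp only [map_mul, map_smul] at h
  exact h

theorem t_mul_x : t * x = mu • (x * t) := by
  have h := RingQuot.mkAlgHom_rel K (ExtWeylRel.tx (K := K) (p := p) (q := q) (lam := lam)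
    (mu := mu))
  simp only [map_mul, map_smul] at h
  exact h

theorem t_mul_y : t * y = mu⁻¹ • (y * t) := by
  have h := RingQuot.mkAlgHom_rel K (ExtWeylRel.ty (K := K) (p := p) (q := q) (lam := lam)
    (mu := mu))
  simp only [map_mul, map_smul] at h
  exact h

theorem x_mul_z : x * z = p • (z * x) := by
  have h : x * (y * x) = (1 + p • (y * x)) * x := by rw [← mul_assoc, x_mul_y]
  rw [Z, mul_add, mul_smul_comm, h]
  simp only [add_mul, smul_mul_assoc, one_mul, mul_one]
  module

theorem z_mul_y : z * y = p • (y * z) := by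
  have h : y * x * y = y * (1 + p • (y * x)) := by rw [mul_assoc, x_mul_y]
  rw [Z, add_mul, smul_mul_assoc, h]
  simp only [mul_add, mul_smul_comm, one_mul, mul_one]
  module

theorem s_mul_z (hlam : lam ≠ 0) : s * z = z * s := by
  have h : s * (y * x) = y * x * s := by
    rw [← mul_assoc, s_mul_y, smul_mul_assoc, mul_assoc, s_mul_x, mul_smul_comm, smul_smul,
      inv_mul_cancel₀ hlam, one_smul, mul_assoc]
  rw [Z, mul_add, mul_smul_comm, h, add_mul, smul_mul_assoc, one_mul, mul_one]

theorem t_mul_z (hmu : mu ≠ 0) : t * z = z * t := by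
  have h : t * (y * x) = y * x * t := by
    rw [← mul_assoc, t_mul_y, smul_mul_assoc, mul_assoc, t_mul_x, mul_smul_comm, smul_smul,
      inv_mul_cancel₀ hmu, one_smul, mul_assoc]
  rw [Z, mul_add, mul_smul_comm, h, add_mul, smul_mul_assoc, one_mul, mul_one]

theorem y_mul_x (hp1 : p - 1 ≠ 0) : y * x = (p - 1)⁻¹ • (z - 1) := by
  rw [Z, add_sub_cancel_left, smul_smul, inv_mul_cancel₀ hp1, one_smul]

theorem x_mul_y_eq (hp1 : p - 1 ≠ 0) : x * y = (p - 1)⁻¹ • (p • z - 1) := by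
  rw [x_mul_y, y_mul_x hp1]
  match_scalars <;> field_simp
  ring

theorem W_natCast (n : ℕ) : W p q lam mu n = x ^ n := by simp [W]

theorem W_neg_natCast (n : ℕ) : W p q lam mu (-n) = y ^ n := by
  rcases Nat.eq_zero_or_pos n with rfl | h
  · simp [W]
  · have : ¬ (0 : ℤ) ≤ -n := by omega
    rw [W, if_neg this, neg_neg, Int.toNat_natCast]

theorem x_mul_W_of_nonneg {n : ℤ} (hn : 0 ≤ n) :
    x * W p q lam mu n = W p q lam mu (n + 1) := by
  lift n to ℕ using hn
  rw [W_natCast, ← Nat.cast_succ, W_natCast, pow_succ']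

theorem x_mul_W_of_neg (hp1 : p - 1 ≠ 0) {n : ℤ} (hn : n < 0) :
    x * W p q lam mu n =
      (p - 1)⁻¹ • (p • (z * W p q lam mu (n + 1)) - W p q lam mu (n + 1)) := by
  obtain ⟨m, rfl⟩ : ∃ m : ℕ, n = -((m + 1 : ℕ) : ℤ) := ⟨(-n - 1).toNat, by omega⟩
  have h : -((m + 1 : ℕ) : ℤ) + 1 = -(m : ℤ) := by push_cast; ring
  rw [h, W_neg_natCast, W_neg_natCast, pow_succ', ← mul_assoc, x_mul_y_eq hp1, smul_mul_assoc,
    sub_mul, smul_mul_assoc, one_mul]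

theorem y_mul_W_of_nonpos {n : ℤ} (hn : n ≤ 0) :
    y * W p q lam mu n = W p q lam mu (n - 1) := by
  obtain ⟨m, rfl⟩ : ∃ m : ℕ, n = -(m : ℤ) := ⟨(-n).toNat, by omega⟩
  have h : -(m : ℤ) - 1 = -((m + 1 : ℕ) : ℤ) := by push_cast; ring
  rw [h, W_neg_natCast, W_neg_natCast, pow_succ']

theorem y_mul_W_of_pos (hp1 : p - 1 ≠ 0) {n : ℤ} (hn : 0 < n) :
    y * W p q lam mu n =
      (p - 1)⁻¹ • (z * W p q lam mu (n - 1) - W p q lam mu (n - 1)) := by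
  obtain ⟨m, rfl⟩ : ∃ m : ℕ, n = ((m + 1 : ℕ) : ℤ) := ⟨(n - 1).toNat, by omega⟩
  have h : ((m + 1 : ℕ) : ℤ) - 1 = (m : ℤ) := by push_cast; ring
  rw [h, W_natCast, W_natCast, pow_succ', ← mul_assoc, y_mul_x hp1, smul_mul_assoc,
    sub_mul, one_mul]

/-- An element that scales `x` by `c` and `y` by `c⁻¹` scales `W n` by `c ^ n`. -/
theorem mul_W_of_skew {c : K} {u : ExtWeyl K p q lam mu} (hx : u * x = c • (x * u))
    (hy : u * y = c⁻¹ • (y * u)) (n : ℤ) :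
    u * W p q lam mu n = c ^ n • (W p q lam mu n * u) := by
  obtain ⟨m, rfl | rfl⟩ := n.eq_nat_or_neg
  · rw [W_natCast, mul_pow_of_skew hx, zpow_natCast]
  · rw [W_neg_natCast, mul_pow_of_skew hy, zpow_neg, zpow_natCast, inv_pow]

theorem W_mul_z (hp : p ≠ 0) (n : ℤ) : W p q lam mu n * z = p ^ n • (z * W p q lam mu n) := by
  have h := mul_W_of_skew (skew_symm hp x_mul_z) (c := p⁻¹)
    (by rw [inv_inv]; exact z_mul_y (p := p) (q := q) (lam := lam) (mu := mu)) n
  rw [h, smul_smul, ← mul_zpow, mul_inv_cancel₀ hp, one_zpow, one_smul]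

/-! ### Multiplication of basis elements by generators -/

theorem z_mul_mon (a : ℕ) (n : ℤ) (k l : ℕ) :
    z * mon p q lam mu (a, n, k, l) = mon p q lam mu (a + 1, n, k, l) := by
  simp only [mon]
  rw [← mul_assoc, ← pow_succ']

theorem x_mul_mon_of_nonneg (a : ℕ) {n : ℤ} (hn : 0 ≤ n) (k l : ℕ) :
    x * mon p q lam mu (a, n, k, l) = p ^ a • mon p q lam mu (a, n + 1, k, l) := by
  simp only [mon]
  rw [← mul_assoc, mul_pow_of_skew x_mul_z, smul_mul_assoc, mul_assoc, ← mul_assoc x,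
    x_mul_W_of_nonneg hn]

theorem x_mul_mon_of_neg (hp1 : p - 1 ≠ 0) (a : ℕ) {n : ℤ} (hn : n < 0) (k l : ℕ) :
    x * mon p q lam mu (a, n, k, l) = (p ^ a * (p - 1)⁻¹) •
      (p • mon p q lam mu (a + 1, n + 1, k, l) - mon p q lam mu (a, n + 1, k, l)) := by
  simp only [mon]
  rw [← mul_assoc, mul_pow_of_skew x_mul_z, smul_mul_assoc, mul_assoc, ← mul_assoc x,
    x_mul_W_of_neg hp1 hn]
  simp only [smul_mul_assoc, mul_smul_comm, sub_mul, mul_sub, smul_smul, pow_succ, mul_assoc,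
    smul_sub]

theorem y_mul_mon_of_nonpos (hp : p ≠ 0) (a : ℕ) {n : ℤ} (hn : n ≤ 0) (k l : ℕ) :
    y * mon p q lam mu (a, n, k, l) = (p ^ a)⁻¹ • mon p q lam mu (a, n - 1, k, l) := by
  simp only [mon]
  rw [← mul_assoc, mul_pow_of_skew (skew_symm hp z_mul_y), smul_mul_assoc, mul_assoc,
    ← mul_assoc y, y_mul_W_of_nonpos hn, inv_pow]

theorem y_mul_mon_of_pos (hp : p ≠ 0) (hp1 : p - 1 ≠ 0) (a : ℕ) {n : ℤ} (hn : 0 < n) (k l : ℕ) :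
    y * mon p q lam mu (a, n, k, l) = ((p ^ a)⁻¹ * (p - 1)⁻¹) •
      (mon p q lam mu (a + 1, n - 1, k, l) - mon p q lam mu (a, n - 1, k, l)) := by
  simp only [mon]
  rw [← mul_assoc, mul_pow_of_skew (skew_symm hp z_mul_y), smul_mul_assoc, mul_assoc,
    ← mul_assoc y, y_mul_W_of_pos hp1 hn, inv_pow]
  simp only [smul_mul_assoc, mul_smul_comm, sub_mul, mul_sub, smul_smul, pow_succ, mul_assoc,
    smul_sub]

theorem s_mul_mon (hlam : lam ≠ 0) (a : ℕ) (n : ℤ) (k l : ℕ) :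
    s * mon p q lam mu (a, n, k, l) = lam ^ n • mon p q lam mu (a, n, k + 1, l) := by
  have h1 : s * z ^ a = z ^ a * s := Commute.pow_right (s_mul_z hlam) a
  simp only [mon]
  rw [← mul_assoc, h1, mul_assoc, ← mul_assoc s, mul_W_of_skew s_mul_x s_mul_y, smul_mul_assoc,
    mul_smul_comm, mul_assoc, ← mul_assoc s, ← pow_succ']

theorem t_mul_mon (hq : q ≠ 0) (hmu : mu ≠ 0) (a : ℕ) (n : ℤ) (k l : ℕ) :
    t * mon p q lam mu (a, n, k, l) = (mu ^ n * (q ^ k)⁻¹) • mon p q lam mu (a, n, k, l + 1) := by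
  have h1 : t * z ^ a = z ^ a * t := Commute.pow_right (t_mul_z hmu) a
  simp only [mon]
  rw [← mul_assoc, h1, mul_assoc, ← mul_assoc t, mul_W_of_skew t_mul_x t_mul_y, smul_mul_assoc,
    mul_smul_comm, mul_assoc, ← mul_assoc t, mul_pow_of_skew (skew_symm hq s_mul_t),
    smul_mul_assoc, mul_smul_comm, mul_smul_comm, smul_smul, mul_assoc, ← pow_succ', inv_pow]

theorem mon_mul_z (hp : p ≠ 0) (hlam : lam ≠ 0) (hmu : mu ≠ 0) (a : ℕ) (n : ℤ) (k l : ℕ) :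
    mon p q lam mu (a, n, k, l) * z = p ^ n • mon p q lam mu (a + 1, n, k, l) := by
  have h1 : s ^ k * z = z * s ^ k := Commute.pow_left (s_mul_z hlam) k
  have h2 : t ^ l * z = z * t ^ l := Commute.pow_left (t_mul_z hmu) l
  simp only [mon]
  rw [mul_assoc, mul_assoc, mul_assoc, h2, ← mul_assoc (s ^ k), h1, mul_assoc z,
    ← mul_assoc (W p q lam mu n), W_mul_z hp, smul_mul_assoc, mul_smul_comm, mul_assoc z,
    ← mul_assoc _ z, ← pow_succ]

theorem mon_mul_s (hq : q ≠ 0) (a : ℕ) (n : ℤ) (k l : ℕ) :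
    mon p q lam mu (a, n, k, l) * s = (q ^ l)⁻¹ • mon p q lam mu (a, n, k + 1, l) := by
  simp only [mon]
  rw [mul_assoc, mul_assoc, mul_assoc, pow_mul_of_skew (skew_symm hq s_mul_t), inv_pow,
    mul_smul_comm, mul_smul_comm, mul_smul_comm, ← mul_assoc _ s, ← pow_succ]

theorem mon_mul_t (a : ℕ) (n : ℤ) (k l : ℕ) :
    mon p q lam mu (a, n, k, l) * t = mon p q lam mu (a, n, k, l + 1) := by
  simp only [mon]
  rw [mul_assoc, mul_assoc, mul_assoc, ← pow_succ]

theorem mon_zero_mul_x (a : ℕ) :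
    mon p q lam mu (a, 0, 0, 0) * x = mon p q lam mu (a, 1, 0, 0) := by
  simp [mon, W]

/-! ### The regular representation and the basis -/

section Representation

variable (p q lam mu)

/-- The images of the basis vectors under left multiplication by the generators, in the
coordinates given by the elements `mon i`. -/
def act : Fin 4 → Idx → (Idx →₀ K)
  | 0, (a, n, k, l) =>
    if 0 ≤ n then p ^ a • Finsupp.single (a, n + 1, k, l) 1
    else (p ^ a * (p - 1)⁻¹) •
      (p • Finsupp.single (a + 1, n + 1, k, l) 1 - Finsupp.single (a, n + 1, k, l) 1)
  | 1, (a, n, k, l) =>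
    if n ≤ 0 then (p ^ a)⁻¹ • Finsupp.single (a, n - 1, k, l) 1
    else ((p ^ a)⁻¹ * (p - 1)⁻¹) •
      (Finsupp.single (a + 1, n - 1, k, l) 1 - Finsupp.single (a, n - 1, k, l) 1)
  | 2, (a, n, k, l) => lam ^ n • Finsupp.single (a, n, k + 1, l) 1
  | 3, (a, n, k, l) => (mu ^ n * (q ^ k)⁻¹) • Finsupp.single (a, n, k, l + 1) 1

/-- The operator of left multiplication by a generator on `Idx →₀ K`. -/
def op (i : Fin 4) : Module.End K (Idx →₀ K) := Finsupp.linearCombination K (act p q lam mu i)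

variable {p q lam mu}

theorem op_x_of_nonneg (a : ℕ) {n : ℤ} (hn : 0 ≤ n) (k l : ℕ) :
    op p q lam mu 0 (Finsupp.single (a, n, k, l) 1) =
      p ^ a • Finsupp.single (a, n + 1, k, l) 1 := by
  simp [op, act, hn]

theorem op_x_of_neg (a : ℕ) {n : ℤ} (hn : n < 0) (k l : ℕ) :
    op p q lam mu 0 (Finsupp.single (a, n, k, l) 1) = (p ^ a * (p - 1)⁻¹) •
      (p • Finsupp.single (a + 1, n + 1, k, l) 1 - Finsupp.single (a, n + 1, k, l) 1) := by
  rw [op, Finsupp.linearCombination_single, one_smul, act, if_neg (not_le.2 hn)]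

theorem op_y_of_nonpos (a : ℕ) {n : ℤ} (hn : n ≤ 0) (k l : ℕ) :
    op p q lam mu 1 (Finsupp.single (a, n, k, l) 1) =
      (p ^ a)⁻¹ • Finsupp.single (a, n - 1, k, l) 1 := by
  rw [op, Finsupp.linearCombination_single, one_smul, act, if_pos hn]

theorem op_y_of_pos (a : ℕ) {n : ℤ} (hn : 0 < n) (k l : ℕ) :
    op p q lam mu 1 (Finsupp.single (a, n, k, l) 1) = ((p ^ a)⁻¹ * (p - 1)⁻¹) •
      (Finsupp.single (a + 1, n - 1, k, l) 1 - Finsupp.single (a, n - 1, k, l) 1) := by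
  rw [op, Finsupp.linearCombination_single, one_smul, act, if_neg (not_le.2 hn)]

theorem op_s (a : ℕ) (n : ℤ) (k l : ℕ) :
    op p q lam mu 2 (Finsupp.single (a, n, k, l) 1) =
      lam ^ n • Finsupp.single (a, n, k + 1, l) 1 := by
  rw [op, Finsupp.linearCombination_single, one_smul, act]

theorem op_t (a : ℕ) (n : ℤ) (k l : ℕ) :
    op p q lam mu 3 (Finsupp.single (a, n, k, l) 1) =
      (mu ^ n * (q ^ k)⁻¹) • Finsupp.single (a, n, k, l + 1) 1 := by
  rw [op, Finsupp.linearCombination_single, one_smul, act]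

theorem op_y_op_x (hp : p ≠ 0) (a : ℕ) (n : ℤ) (k l : ℕ) :
    op p q lam mu 1 (op p q lam mu 0 (Finsupp.single (a, n, k, l) 1)) =
      (p - 1)⁻¹ • (Finsupp.single (a + 1, n, k, l) 1 - Finsupp.single (a, n, k, l) 1) := by
  have hpa : p ^ a ≠ 0 := pow_ne_zero _ hp
  rcases le_or_gt 0 n with hn | hn
  · rw [op_x_of_nonneg a hn, map_smul, op_y_of_pos a (by omega), add_sub_cancel_right]
    match_scalars <;> field_simp
  · rw [op_x_of_neg a hn, map_smul, map_sub, map_smul, op_y_of_nonpos _ (by omega),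
      op_y_of_nonpos _ (by omega), add_sub_cancel_right]
    match_scalars <;> field_simp
    rw [pow_succ]

theorem op_x_op_y (hp : p ≠ 0) (a : ℕ) (n : ℤ) (k l : ℕ) :
    op p q lam mu 0 (op p q lam mu 1 (Finsupp.single (a, n, k, l) 1)) =
      (p - 1)⁻¹ • (p • Finsupp.single (a + 1, n, k, l) 1 - Finsupp.single (a, n, k, l) 1) := by
  have hpa : p ^ a ≠ 0 := pow_ne_zero _ hp
  rcases le_or_gt n 0 with hn | hn
  · rw [op_y_of_nonpos a hn, map_smul, op_x_of_neg a (by omega), sub_add_cancel]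
    match_scalars <;> field_simp
  · rw [op_y_of_pos a hn, map_smul, map_sub, op_x_of_nonneg _ (by omega),
      op_x_of_nonneg _ (by omega), sub_add_cancel]
    match_scalars <;> field_simp
    rw [pow_succ]

/-- The operators `op i` satisfy the defining relations of the algebra. -/
theorem op_rel (hp : p ≠ 0) (hp1 : p - 1 ≠ 0) (hq : q ≠ 0) (hlam : lam ≠ 0) (hmu : mu ≠ 0)
    ⦃u v : FreeAlgebra K (Fin 4)⦄ (h : ExtWeylRel K p q lam mu u v) :
    FreeAlgebra.lift K (op p q lam mu) u = FreeAlgebra.lift K (op p q lam mu) v := by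
  have hext : ∀ f g : Module.End K (Idx →₀ K),
      (∀ a n k l, f (Finsupp.single (a, n, k, l) 1) = g (Finsupp.single (a, n, k, l) 1)) →
        f = g := fun f g H =>
    Finsupp.lhom_ext' fun i => LinearMap.ext_ring (H i.1 i.2.1 i.2.2.1 i.2.2.2)
  have hqk : ∀ k : ℕ, q ^ k ≠ 0 := fun k => pow_ne_zero _ hq
  cases h <;> refine hext _ _ fun a n k l => ?_ <;>
    simp only [map_sub, map_mul, map_smul, map_one, FreeAlgebra.lift_ι_apply,
      LinearMap.sub_apply, LinearMap.smul_apply, Module.End.mul_apply, Module.End.one_apply]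
  · rw [op_x_op_y hp, op_y_op_x hp]
    match_scalars <;> field_simp <;> ring
  · simp only [op_s, op_t, map_smul, smul_smul]
    congr 1
    have := hqk k
    field_simp
    rw [pow_succ]
  · rcases le_or_gt 0 n with hn | hn
    · simp only [op_s, op_x_of_nonneg _ hn, map_smul, smul_smul, zpow_add_one₀ hlam]
      match_scalars; ring
    · simp only [op_s, op_x_of_neg _ hn, map_smul, map_sub, smul_smul, zpow_add_one₀ hlam]
      match_scalars <;> ring
  · rcases le_or_gt n 0 with hn | hn
    · simp only [op_s, op_y_of_nonpos _ hn, map_smul, smul_smul, zpow_sub_one₀ hlam]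
      match_scalars; ring
    · simp only [op_s, op_y_of_pos _ hn, map_smul, map_sub, smul_smul, zpow_sub_one₀ hlam]
      match_scalars <;> ring
  · rcases le_or_gt 0 n with hn | hn
    · simp only [op_t, op_x_of_nonneg _ hn, map_smul, smul_smul, zpow_add_one₀ hmu]
      match_scalars; ring
    · simp only [op_t, op_x_of_neg _ hn, map_smul, map_sub, smul_smul, zpow_add_one₀ hmu]
      match_scalars <;> ring
  · rcases le_or_gt n 0 with hn | hn
    · simp only [op_t, op_y_of_nonpos _ hn, map_smul, smul_smul, zpow_sub_one₀ hmu]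
      match_scalars; ring
    · simp only [op_t, op_y_of_pos _ hn, map_smul, map_sub, smul_smul, zpow_sub_one₀ hmu]
      match_scalars <;> ring

variable (hp : p ≠ 0) (hp1 : p - 1 ≠ 0) (hq : q ≠ 0) (hlam : lam ≠ 0) (hmu : mu ≠ 0)

/-- The regular representation in coordinates. -/
def rep : ExtWeyl K p q lam mu →ₐ[K] Module.End K (Idx →₀ K) :=
  RingQuot.liftAlgHom K ⟨FreeAlgebra.lift K (op p q lam mu), op_rel hp hp1 hq hlam hmu⟩

theorem rep_gen (i : Fin 4) :
    rep hp hp1 hq hlam hmu (gen p q lam mu i) = op p q lam mu i := by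
  rw [gen, rep, RingQuot.liftAlgHom_mkAlgHom_apply, FreeAlgebra.lift_ι_apply]

theorem rep_z (a : ℕ) (n : ℤ) (k l : ℕ) :
    rep hp hp1 hq hlam hmu z (Finsupp.single (a, n, k, l) 1) =
      Finsupp.single (a + 1, n, k, l) 1 := by
  rw [Z, map_add, map_smul, map_mul, rep_gen, rep_gen, map_one, LinearMap.add_apply,
    LinearMap.smul_apply, Module.End.mul_apply, op_y_op_x hp, Module.End.one_apply]
  match_scalars <;> field_simp
  ring

/-- The basis element with index `i` sends the vacuum vector to the basis vector with index `i`. -/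
theorem rep_mon (i : Idx) :
    rep hp hp1 hq hlam hmu (mon p q lam mu i) (Finsupp.single (0, 0, 0, 0) 1) =
      Finsupp.single i 1 := by
  obtain ⟨a, n, k, l⟩ := i
  have h1 : (op p q lam mu 3 ^ l) (Finsupp.single (0, 0, 0, 0) 1) =
      Finsupp.single (0, 0, 0, l) 1 := by
    induction l with
    | zero => simp
    | succ l ih => rw [pow_succ', Module.End.mul_apply, ih, op_t]; simp
  have h2 : (op p q lam mu 2 ^ k) (Finsupp.single (0, 0, 0, l) 1) =
      Finsupp.single (0, 0, k, l) 1 := by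
    induction k with
    | zero => simp
    | succ k ih => rw [pow_succ', Module.End.mul_apply, ih, op_s]; simp
  have h3 : rep hp hp1 hq hlam hmu (W p q lam mu n) (Finsupp.single (0, 0, k, l) 1) =
      Finsupp.single (0, n, k, l) 1 := by
    obtain ⟨m, rfl | rfl⟩ := n.eq_nat_or_neg
    · rw [W_natCast, map_pow, rep_gen]
      induction m with
      | zero => simp
      | succ m ih => rw [pow_succ', Module.End.mul_apply, ih, op_x_of_nonneg _ (by omega)]; simp
    · rw [W_neg_natCast, map_pow, rep_gen]
      induction m with
      | zero => simp
      | succ m ih =>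
        rw [pow_succ', Module.End.mul_apply, ih, op_y_of_nonpos _ (by omega)]
        have : -(m : ℤ) - 1 = -((m + 1 : ℕ) : ℤ) := by push_cast; ring
        rw [this]; simp
  simp only [mon, map_mul, map_pow, rep_gen, Module.End.mul_apply, h1, h2, h3]
  clear h1 h2 h3
  induction a with
  | zero => simp
  | succ a ih => rw [pow_succ', Module.End.mul_apply, ih, rep_z]

theorem linearIndependent_mon (hp : p ≠ 0) (hp1 : p - 1 ≠ 0) (hq : q ≠ 0) (hlam : lam ≠ 0)
    (hmu : mu ≠ 0) : LinearIndependent K (mon p q lam mu) := by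
  let f : ExtWeyl K p q lam mu →ₗ[K] (Idx →₀ K) :=
    (LinearMap.applyₗ (Finsupp.single (0, 0, 0, 0) 1 : Idx →₀ K)).comp
      (rep hp hp1 hq hlam hmu).toLinearMap
  refine LinearIndependent.of_comp f ?_
  have h : f ∘ mon p q lam mu = fun i => Finsupp.single i 1 :=
    funext fun i => rep_mon hp hp1 hq hlam hmu i
  rw [h]
  exact Finsupp.linearIndependent_single_one K Idx


/-- Left multiplication, read off in coordinates by `rep`, agrees with multiplication in the
algebra. -/
theorem linearCombination_rep (c : ExtWeyl K p q lam mu) (v : Idx →₀ K) :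
    Finsupp.linearCombination K (mon p q lam mu) (rep hp hp1 hq hlam hmu c v) =
      c * Finsupp.linearCombination K (mon p q lam mu) v := by
  have hgen : ∀ (i : Fin 4) (w : Idx →₀ K),
      Finsupp.linearCombination K (mon p q lam mu) (op p q lam mu i w) =
        gen p q lam mu i * Finsupp.linearCombination K (mon p q lam mu) w := by
    intro i w
    have h : (Finsupp.linearCombination K (mon p q lam mu)).comp (op p q lam mu i) =
        (LinearMap.mulLeft K (gen p q lam mu i)).comp
          (Finsupp.linearCombination K (mon p q lam mu)) := by
      refine Finsupp.lhom_ext' fun j => LinearMap.ext_ring ?_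
      obtain ⟨a, n, k, l⟩ := j
      simp only [LinearMap.comp_apply, Finsupp.lsingle_apply, LinearMap.mulLeft_apply,
        Finsupp.linearCombination_single, one_smul]
      fin_cases i
      · rcases le_or_gt 0 n with hn | hn
        · simp [op_x_of_nonneg _ hn, x_mul_mon_of_nonneg _ hn]
        · simp [op_x_of_neg _ hn, x_mul_mon_of_neg hp1 _ hn]
      · rcases le_or_gt n 0 with hn | hn
        · simp [op_y_of_nonpos _ hn, y_mul_mon_of_nonpos hp _ hn]
        · simp [op_y_of_pos _ hn, y_mul_mon_of_pos hp hp1 _ hn]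
      · simp [op_s, s_mul_mon hlam]
      · simp only [Fin.reduceFinMk]
        rw [op_t, map_smul, Finsupp.linearCombination_single, one_smul, t_mul_mon hq hmu]
    exact LinearMap.congr_fun h w
  obtain ⟨f, rfl⟩ := RingQuot.mkAlgHom_surjective K (ExtWeylRel K p q lam mu) c
  induction f using FreeAlgebra.induction generalizing v with
  | grade0 r => simp [Algebra.algebraMap_eq_smul_one]
  | grade1 i =>
    change Finsupp.linearCombination K (mon p q lam mu)
      (rep hp hp1 hq hlam hmu (gen p q lam mu i) v) = _
    rw [rep_gen, hgen]
    rfl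
  | mul f g hf hg => rw [map_mul, map_mul, Module.End.mul_apply, hf, hg, mul_assoc]
  | add f g hf hg => rw [map_add, map_add, LinearMap.add_apply, map_add, hf, hg, add_mul]

/-- The elements `mon i` span the algebra. -/
theorem exists_linearCombination (hp : p ≠ 0) (hp1 : p - 1 ≠ 0) (hq : q ≠ 0) (hlam : lam ≠ 0)
    (hmu : mu ≠ 0) (c : ExtWeyl K p q lam mu) :
    ∃ v : Idx →₀ K, Finsupp.linearCombination K (mon p q lam mu) v = c :=
  ⟨rep hp hp1 hq hlam hmu c (Finsupp.single (0, 0, 0, 0) 1), by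
    rw [linearCombination_rep]
    simp [mon, W]⟩

end Representation

/-! ### The center -/

/-- If multiplying the basis elements in the support of a central element by `g` on the right and
on the left gives multiples of the same (distinct) basis elements, then the coefficients agree. -/
theorem coeff_eq_of_commute (hli : LinearIndependent K (mon p q lam mu)) {v : Idx →₀ K}
    (g : ExtWeyl K p q lam mu) {α β : Idx → K} {σ : Idx → Idx} (hσ : Function.Injective σ)
    (hr : ∀ i ∈ v.support, mon p q lam mu i * g = α i • mon p q lam mu (σ i))
    (hl : ∀ i ∈ v.support, g * mon p q lam mu i = β i • mon p q lam mu (σ i))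
    (hc : g * Finsupp.linearCombination K (mon p q lam mu) v =
      Finsupp.linearCombination K (mon p q lam mu) v * g) :
    ∀ i ∈ v.support, α i = β i := by
  rw [Finsupp.linearCombination_apply, Finsupp.sum, Finset.mul_sum, Finset.sum_mul,
    ← sub_eq_zero, ← Finset.sum_sub_distrib] at hc
  have h0 : ∑ i ∈ v.support, (v i * (β i - α i)) • mon p q lam mu (σ i) = 0 := by
    rw [← hc]
    refine Finset.sum_congr rfl fun i hi => ?_
    rw [mul_smul_comm, smul_mul_assoc, hr i hi, hl i hi]
    module
  intro i hi
  have h1 := linearIndependent_iff'.1 (hli.comp σ hσ) v.support _ h0 i hi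
  have h2 := (mul_eq_zero.1 h1).resolve_left (Finsupp.mem_support_iff.1 hi)
  exact (sub_eq_zero.1 h2).symm

/-- A central element commutes with `z`, which forces `n = 0` in its support since `p` is not a
root of unity; commuting with `s` and `t` then forces `l = k = 0` since `q` is not a root of unity.
What is left is a polynomial in `z`, and commuting with `x` makes it constant. -/
theorem center_eq_bot (hp : p ≠ 0) (hq : q ≠ 0) (hlam : lam ≠ 0) (hmu : mu ≠ 0)
    (hpru : ∀ n : ℕ, 0 < n → p ^ n ≠ 1) (hqru : ∀ n : ℕ, 0 < n → q ^ n ≠ 1) :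
    Subalgebra.center K (ExtWeyl K p q lam mu) = ⊥ := by
  have hp1 : p - 1 ≠ 0 := fun h => hpru 1 one_pos (by rw [pow_one]; exact sub_eq_zero.1 h)
  have hpn : ∀ n : ℕ, p ^ n = 1 → n = 0 := fun n h => by
    by_contra h0
    exact hpru n (Nat.pos_of_ne_zero h0) h
  have hqn : ∀ n : ℕ, q ^ n = 1 → n = 0 := fun n h => by
    by_contra h0
    exact hqru n (Nat.pos_of_ne_zero h0) h
  have hpz : ∀ n : ℤ, p ^ n = 1 → n = 0 := fun n h => by
    obtain ⟨m, rfl | rfl⟩ := n.eq_nat_or_neg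
    · rw [zpow_natCast] at h
      simp [hpn m h]
    · rw [zpow_neg, zpow_natCast, inv_eq_one] at h
      simp [hpn m h]
  have hli := linearIndependent_mon (p := p) (q := q) (lam := lam) (mu := mu) hp hp1 hq hlam hmu
  refine eq_bot_iff.2 fun c hc => ?_
  obtain ⟨v, rfl⟩ := exists_linearCombination hp hp1 hq hlam hmu c
  have hcomm := fun g => Subalgebra.mem_center_iff.1 hc g
  have hn : ∀ i ∈ v.support, i.2.1 = 0 := fun i hi => hpz _ <|
    coeff_eq_of_commute hli z (α := fun i => p ^ i.2.1) (β := fun _ => 1)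
      (σ := fun i => (i.1 + 1, i.2))
      (fun i j h => by simpa [Prod.ext_iff] using h)
      (fun i _ => mon_mul_z hp hlam hmu i.1 i.2.1 i.2.2.1 i.2.2.2)
      (fun i _ => by rw [one_smul]; exact z_mul_mon i.1 i.2.1 i.2.2.1 i.2.2.2) (hcomm _) i hi
  have hl : ∀ i ∈ v.support, i.2.2.2 = 0 := fun i hi => by
    have h := coeff_eq_of_commute hli s (α := fun i => (q ^ i.2.2.2)⁻¹) (β := fun i => lam ^ i.2.1)
      (σ := fun i => (i.1, i.2.1, i.2.2.1 + 1, i.2.2.2))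
      (fun i j h => by simpa [Prod.ext_iff] using h)
      (fun i _ => mon_mul_s hq i.1 i.2.1 i.2.2.1 i.2.2.2)
      (fun i _ => s_mul_mon hlam i.1 i.2.1 i.2.2.1 i.2.2.2) (hcomm _) i hi
    simp only [hn i hi, zpow_zero, inv_eq_one] at h
    exact hqn _ h
  have hk : ∀ i ∈ v.support, i.2.2.1 = 0 := fun i hi => by
    have h := coeff_eq_of_commute hli t (α := fun _ => 1)
      (β := fun i => mu ^ i.2.1 * (q ^ i.2.2.1)⁻¹)
      (σ := fun i => (i.1, i.2.1, i.2.2.1, i.2.2.2 + 1))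
      (fun i j h => by simpa [Prod.ext_iff] using h)
      (fun i _ => by rw [one_smul]; exact mon_mul_t i.1 i.2.1 i.2.2.1 i.2.2.2)
      (fun i _ => t_mul_mon hq hmu i.1 i.2.1 i.2.2.1 i.2.2.2) (hcomm _) i hi
    simp only [hn i hi, zpow_zero, one_mul] at h
    exact hqn _ (inv_eq_one.1 h.symm)
  have hform : ∀ i ∈ v.support, i = (i.1, 0, 0, 0) := fun i hi => by
    simp [Prod.ext_iff, hn i hi, hl i hi, hk i hi]
  have ha : ∀ i ∈ v.support, i.1 = 0 := fun i hi => by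
    have h := coeff_eq_of_commute hli x (α := fun _ => 1) (β := fun i => p ^ i.1)
      (σ := fun i => (i.1, i.2.1 + 1, i.2.2.1, i.2.2.2))
      (fun i j h => by simpa [Prod.ext_iff] using h)
      (fun i hi => by rw [hform i hi, one_smul]; exact mon_zero_mul_x i.1)
      (fun i hi => by rw [hform i hi]; exact x_mul_mon_of_nonneg i.1 le_rfl 0 0) (hcomm _) i hi
    exact hpn _ h.symm
  rw [Finsupp.linearCombination_apply, Finsupp.sum]
  refine sum_mem fun i hi => Subalgebra.smul_mem _ ?_ _
  rw [hform i hi, ha i hi]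
  simp [mon, W, one_mem]

theorem nontrivial_of_ne (hp : p ≠ 0) (hp1 : p - 1 ≠ 0) (hq : q ≠ 0) (hlam : lam ≠ 0)
    (hmu : mu ≠ 0) : Nontrivial (ExtWeyl K p q lam mu) :=
  ⟨mon p q lam mu 0, 0, (linearIndependent_mon hp hp1 hq hlam hmu).ne_zero 0⟩

end ExtWeyl

/-- If neither `p` nor `q` is a root of unity, then `A = A_p(λ, μ, K_q[s,t])`
is universally cancellative; consequently `A` is strongly cancellative and cancellative. -/
theorem extWeyl_cancellative
    (K : Type u) [Field K] (p q lam mu : K)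
    (hp : p ≠ 0) (hq : q ≠ 0) (hlam : lam ≠ 0) (hmu : mu ≠ 0)
    (hpru : ∀ n : ℕ, 0 < n → p ^ n ≠ 1) (hqru : ∀ n : ℕ, 0 < n → q ^ n ≠ 1) :
    IsUniversallyCancellativeAlgebra K (ExtWeyl K p q lam mu) ∧
    IsStronglyCancellativeAlgebra K (ExtWeyl K p q lam mu) ∧
    IsCancellativeAlgebra K (ExtWeyl K p q lam mu) := by
  have hp1 : p - 1 ≠ 0 := fun h => hpru 1 one_pos (by rw [pow_one]; exact sub_eq_zero.1 h)
  have := ExtWeyl.nontrivial_of_ne hp hp1 hq hlam hmu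
  have huniv := isUniversallyCancellative_of_center_eq_bot K (ExtWeyl K p q lam mu)
    (ExtWeyl.center_eq_bot hp hq hlam hmu hpru hqru)
  refine ⟨huniv, fun d _ B _ _ h => ?_, fun B _ _ ⟨φ⟩ => ?_⟩
  -- In both cases the augmentation of the polynomial ring is evaluation at the origin.
  · let ε : MvPolynomial (Fin d) K →ₐ[K] K := MvPolynomial.aeval fun _ => 0
    exact huniv (MvPolynomial (Fin d) K) inferInstance
      ⟨RingHom.ker ε, ⟨Ideal.quotientKerAlgEquivOfSurjective
        (f := ε) fun k => ⟨algebraMap K _ k, ε.commutes k⟩⟩⟩ B h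
  · let ε : Polynomial K →ₐ[K] K := Polynomial.aeval 0
    exact huniv (Polynomial K) inferInstance
      ⟨RingHom.ker ε, ⟨Ideal.quotientKerAlgEquivOfSurjective
        (f := ε) fun k => ⟨algebraMap K _ k, ε.commutes k⟩⟩⟩ B
      ⟨((polyEquivTensor K _).symm.trans φ).trans (polyEquivTensor K B)⟩
end
end
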